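/- arXiv:0909.3742 — 3 statements merged into one kernel-verified Lean document; each statement's English description precedes it below -/
import Mathlib

section
/- If m, f, g are non-negative integrable functions on ℝ satisfying m((r+s)/2) ≥ √(f(r)·g(s)) for all r, s ∈ ℝ, then ∫_ℝ m ≥ √(∫_ℝ f · ∫_ℝ g). -/
open MeasureTheory

lemma bm_aux {K L C : Set ℝ} (hK : IsCompact K) (hL : IsCompact L) (hKn : K.Nonempty)
    (hLn : L.Nonempty) (h : ∀ x ∈ K, ∀ y ∈ L, (x + y) / 2 ∈ C) :
    volume K + volume L ≤ 2 * volume C := by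
  obtain ⟨a, ha, ha'⟩ := hK.exists_isGreatest hKn
  obtain ⟨b, hb, hb'⟩ := hL.exists_isLeast hLn
  have h1 : volume ((fun z : ℝ => z * (1/2)) ⁻¹' C) = 2 * volume C := by
    rw [Real.volume_preimage_mul_right (by norm_num)]
    norm_num
  have hKm : volume ((fun z : ℝ => z + -b) ⁻¹' K) = volume K := measure_preimage_add_right _ _ _
  have hLm : volume ((fun z : ℝ => z + -a) ⁻¹' L) = volume L := measure_preimage_add_right _ _ _
  have hd : AEDisjoint volume ((fun z : ℝ => z + -b) ⁻¹' K) ((fun z : ℝ => z + -a) ⁻¹' L) := by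
    refine measure_mono_null (t := {a + b}) ?_ (by simp)
    rintro z ⟨hz1, hz2⟩
    have := ha' hz1
    have := hb' hz2
    simp only [Set.mem_singleton_iff]
    linarith
  rw [← h1, ← hKm, ← hLm, ← measure_union₀ _ hd]
  · apply measure_mono
    rintro z (hz | hz)
    · have := h _ hz _ hb
      simp only [Set.mem_preimage]
      convert this using 1
      ring
    · have := h _ ha _ hz
      simp only [Set.mem_preimage]
      convert this using 1
      ring
  · exact (hL.measurableSet.preimage (by fun_prop)).nullMeasurableSet

lemma approx_aux {A : Set ℝ} (hA : NullMeasurableSet A) (hn : A.Nonempty) {r : ENNReal}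
    (hr : r < volume A) : ∃ K ⊆ A, IsCompact K ∧ K.Nonempty ∧ r ≤ volume K := by
  obtain ⟨B, hBA, hB, hBe⟩ := hA.exists_measurable_subset_ae_eq
  rw [← measure_congr hBe] at hr
  obtain ⟨K, hKB, hK, hrK⟩ := hB.exists_lt_isCompact hr
  refine ⟨K, hKB.trans hBA, hK, ?_, hrK.le⟩
  by_contra hne
  rw [Set.not_nonempty_iff_eq_empty] at hne
  simp [hne] at hrK

lemma approx_aux' {A : Set ℝ} (hA : NullMeasurableSet A) (hn : A.Nonempty) {c d : ENNReal}
    (h : ∀ K ⊆ A, IsCompact K → K.Nonempty → volume K + c ≤ d) : volume A + c ≤ d := by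
  by_cases h0 : volume A = 0
  · obtain ⟨x, hx⟩ := hn
    have := h {x} (by simpa using hx) isCompact_singleton (by simp)
    simpa [h0] using this
  · by_cases hc : c = ⊤
    · obtain ⟨x, hx⟩ := hn
      have := h {x} (by simpa using hx) isCompact_singleton (by simp)
      rw [hc, add_top] at this
      exact le_top.trans this
    · have hle : volume A ≤ d - c := by
        refine le_of_forall_lt fun r hr => ?_
        obtain ⟨r', hr', hr''⟩ := exists_between hr
        obtain ⟨K, hK, hKc, hKn, hrK⟩ := approx_aux hA hn hr''
        exact (hr'.trans_le hrK).trans_le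
          (ENNReal.le_sub_of_add_le_right hc (h K hK hKc hKn))
      obtain ⟨x, hx⟩ := hn
      have hcd := h {x} (by simpa using hx) isCompact_singleton (by simp)
      have hcd : c ≤ d := le_add_self.trans hcd
      calc volume A + c ≤ d - c + c := by gcongr
        _ = d := tsub_add_cancel_of_le hcd

lemma bm {A B C : Set ℝ} (hA : NullMeasurableSet A) (hB : NullMeasurableSet B)
    (hAn : A.Nonempty) (hBn : B.Nonempty) (h : ∀ x ∈ A, ∀ y ∈ B, (x + y) / 2 ∈ C) :
    volume A + volume B ≤ 2 * volume C := by
  refine approx_aux' hA hAn fun K hK hKc hKn => ?_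
  rw [add_comm]
  refine approx_aux' hB hBn fun L hL hLc hLn => ?_
  rw [add_comm]
  exact bm_aux hKc hLc hKn hLn fun x hx y hy => h x (hK hx) y (hL hy)

lemma pl_norm {m f g : ℝ → ℝ} (hm0 : ∀ x, 0 ≤ m x) (hf0 : ∀ x, 0 ≤ f x) (hg0 : ∀ x, 0 ≤ g x)
    (hmi : Integrable m) (hfi : Integrable f) (hgi : Integrable g)
    (hf1 : ∀ x, f x ≤ 1) (hg1 : ∀ x, g x ≤ 1)
    (hf2 : ∀ t < 1, ∃ x, t < f x) (hg2 : ∀ t < 1, ∃ x, t < g x)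
    (h : ∀ r s : ℝ, Real.sqrt (f r * g s) ≤ m ((r + s) / 2)) :
    (∫ x, f x) + ∫ x, g x ≤ 2 * ∫ x, m x := by
  have key : (∫⁻ x, ENNReal.ofReal (f x)) + ∫⁻ x, ENNReal.ofReal (g x)
      ≤ 2 * ∫⁻ x, ENNReal.ofReal (m x) := by
    rw [lintegral_eq_lintegral_meas_lt _ (.of_forall hf0) hfi.aemeasurable,
      lintegral_eq_lintegral_meas_lt _ (.of_forall hg0) hgi.aemeasurable,
      lintegral_eq_lintegral_meas_lt _ (.of_forall hm0) hmi.aemeasurable,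
      ← lintegral_const_mul' _ _ (by simp)]
    refine (le_lintegral_add _ _).trans ?_
    refine setLIntegral_mono' measurableSet_Ioi fun t ht => ?_
    have ht : 0 < t := ht
    rcases lt_or_ge t 1 with h1 | h1
    · refine bm (nullMeasurableSet_lt aemeasurable_const hfi.aemeasurable)
        (nullMeasurableSet_lt aemeasurable_const hgi.aemeasurable) (hf2 t h1) (hg2 t h1) ?_
      intro x hx y hy
      have hx : t < f x := hx
      have hy : t < g y := hy
      refine lt_of_lt_of_le ?_ (h x y)
      apply Real.lt_sqrt_of_sq_lt
      nlinarith
    · have e1 : {a | t < f a} = ∅ := by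
        ext x; simpa using (hf1 x).trans h1
      have e2 : {a | t < g a} = ∅ := by
        ext x; simpa using (hg1 x).trans h1
      simp [e1, e2]
  rw [← ofReal_integral_eq_lintegral_ofReal hfi (.of_forall hf0),
    ← ofReal_integral_eq_lintegral_ofReal hgi (.of_forall hg0),
    ← ofReal_integral_eq_lintegral_ofReal hmi (.of_forall hm0),
    ← ENNReal.ofReal_add (integral_nonneg hf0) (integral_nonneg hg0)] at key
  have h2 : (2 : ENNReal) = ENNReal.ofReal 2 := by simp
  rw [h2, ← ENNReal.ofReal_mul (by norm_num)] at key
  exact (ENNReal.ofReal_le_ofReal_iff (mul_nonneg (by norm_num) (integral_nonneg hm0))).1 key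

lemma pl_bdd {m f g : ℝ → ℝ} (hm0 : ∀ x, 0 ≤ m x) (hf0 : ∀ x, 0 ≤ f x) (hg0 : ∀ x, 0 ≤ g x)
    (hmi : Integrable m) (hfi : Integrable f) (hgi : Integrable g)
    (hf1 : BddAbove (Set.range f)) (hg1 : BddAbove (Set.range g))
    (h : ∀ r s : ℝ, Real.sqrt (f r * g s) ≤ m ((r + s) / 2)) :
    Real.sqrt ((∫ x, f x) * ∫ x, g x) ≤ ∫ x, m x := by
  have hM : 0 ≤ ∫ x, m x := integral_nonneg hm0
  by_cases hfz : ∀ x, f x = 0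
  · simpa [hfz] using hM
  by_cases hgz : ∀ x, g x = 0
  · simpa [hgz] using hM
  push Not at hfz hgz
  obtain ⟨x0, hx0⟩ := hfz
  obtain ⟨y0, hy0⟩ := hgz
  set a := ⨆ x, f x with ha
  set b := ⨆ x, g x with hb
  have ha0 : 0 < a := ((hf0 x0).lt_of_ne' hx0).trans_le (le_ciSup hf1 x0)
  have hb0 : 0 < b := ((hg0 y0).lt_of_ne' hy0).trans_le (le_ciSup hg1 y0)
  have hc0 : 0 < Real.sqrt (a * b) := Real.sqrt_pos.2 (mul_pos ha0 hb0)
  have key := pl_norm (m := fun x => m x / Real.sqrt (a * b)) (f := fun x => f x / a)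
    (g := fun x => g x / b) (fun x => div_nonneg (hm0 x) hc0.le)
    (fun x => div_nonneg (hf0 x) ha0.le) (fun x => div_nonneg (hg0 x) hb0.le)
    (hmi.div_const _) (hfi.div_const _) (hgi.div_const _)
    (fun x => (div_le_one ha0).2 (le_ciSup hf1 x)) (fun x => (div_le_one hb0).2 (le_ciSup hg1 x))
    (fun t ht => by
      obtain ⟨x, hx⟩ := exists_lt_of_lt_ciSup (show t * a < ⨆ x, f x by rw [← ha]; nlinarith)
      exact ⟨x, (lt_div_iff₀ ha0).2 hx⟩)
    (fun t ht => by
      obtain ⟨x, hx⟩ := exists_lt_of_lt_ciSup (show t * b < ⨆ x, g x by rw [← hb]; nlinarith)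
      exact ⟨x, (lt_div_iff₀ hb0).2 hx⟩)
    (fun r s => by
      rw [div_mul_div_comm, Real.sqrt_div (mul_nonneg (hf0 r) (hg0 s))]
      exact div_le_div_of_nonneg_right (h r s) hc0.le)
  simp only [integral_div] at key
  have hF : 0 ≤ ∫ x, f x := integral_nonneg hf0
  have hG : 0 ≤ ∫ x, g x := integral_nonneg hg0
  set F := ∫ x, f x
  set G := ∫ x, g x
  set M := ∫ x, m x
  have hFa := div_nonneg hF ha0.le
  have hGb := div_nonneg hG hb0.le
  have h3 : Real.sqrt (F / a * (G / b)) ≤ M / Real.sqrt (a * b) := by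
    apply Real.sqrt_le_iff.2 ⟨div_nonneg hM hc0.le, ?_⟩
    nlinarith [sq_nonneg (F / a - G / b)]
  rw [div_mul_div_comm, Real.sqrt_div (mul_nonneg hF hG)] at h3
  exact (div_le_div_iff_of_pos_right hc0).1 h3

lemma trunc_tendsto {f : ℝ → ℝ} (hf0 : ∀ x, 0 ≤ f x) (hfi : Integrable f) :
    Filter.Tendsto (fun n : ℕ => ∫ x, min (f x) n) Filter.atTop (nhds (∫ x, f x)) := by
  refine tendsto_integral_of_dominated_convergence f (fun n => ?_) hfi (fun n => ?_) ?_
  · exact hfi.aestronglyMeasurable.inf aestronglyMeasurable_const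
  · refine .of_forall fun x => ?_
    rw [Real.norm_of_nonneg (le_min (hf0 x) n.cast_nonneg)]
    exact min_le_left _ _
  · refine .of_forall fun x => ?_
    refine tendsto_const_nhds.congr' ?_
    filter_upwards [Filter.eventually_ge_atTop ⌈f x⌉₊] with n hn
    exact (min_eq_left (Nat.ceil_le.1 hn)).symm

lemma trunc_int {f : ℝ → ℝ} (hf0 : ∀ x, 0 ≤ f x) (hfi : Integrable f) (n : ℕ) :
    Integrable (fun x => min (f x) n) := by
  refine hfi.mono' (hfi.aestronglyMeasurable.inf aestronglyMeasurable_const) ?_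
  refine .of_forall fun x => ?_
  rw [Real.norm_of_nonneg (le_min (hf0 x) n.cast_nonneg)]
  exact min_le_left _ _

/-- **Prékopa–Leindler inequality, one-dimensional multiplicative form.**
If `m, f, g` are non-negative integrable functions on `ℝ` satisfying
`m((r+s)/2) ≥ √(f(r)·g(s))` for all `r, s`, then `∫ m ≥ √(∫ f · ∫ g)`. -/
theorem prekopa_leindler_one_dim (m f g : ℝ → ℝ)
    (hm0 : ∀ x, 0 ≤ m x) (hf0 : ∀ x, 0 ≤ f x) (hg0 : ∀ x, 0 ≤ g x)
    (hmi : Integrable m) (hfi : Integrable f) (hgi : Integrable g)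
    (h : ∀ r s : ℝ, Real.sqrt (f r * g s) ≤ m ((r + s) / 2)) :
    Real.sqrt ((∫ x, f x) * ∫ x, g x) ≤ ∫ x, m x := by
  refine le_of_tendsto (((trunc_tendsto hf0 hfi).mul (trunc_tendsto hg0 hgi)).sqrt)
    (.of_forall fun n => ?_)
  refine pl_bdd hm0 (fun x => le_min (hf0 x) n.cast_nonneg)
    (fun x => le_min (hg0 x) n.cast_nonneg) hmi (trunc_int hf0 hfi n) (trunc_int hg0 hgi n)
    ⟨n, ?_⟩ ⟨n, ?_⟩ fun r s => (Real.sqrt_le_sqrt ?_).trans (h r s)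
  · rintro _ ⟨x, rfl⟩
    exact min_le_right _ _
  · rintro _ ⟨x, rfl⟩
    exact min_le_right _ _
  · exact mul_le_mul (min_le_left _ _) (min_le_left _ _) (le_min (hg0 s) n.cast_nonneg) (hf0 r)
end

section
/- Let γ* = ((2 − 2^{(n−1)/n})^{3/2} / (122·n⁷))². For any convex bodies K and C in ℝⁿ, |K+C|^{1/n} ≥ (|K|^{1/n} + |C|^{1/n})·[1 + (γ*/σ(K,C)^{1/n})·A(K,C)²]. -/
open MeasureTheory Pointwise

noncomputable section

/-- The homothetic distance `A(K,C)`: with `α = |K|^(−1/n)` and `β = |C|^(−1/n)`,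
`A(K,C) = inf{|αK Δ (x+βC)| : x ∈ ℝⁿ}`. -/
def homDist {n : ℕ} (K C : Set (EuclideanSpace ℝ (Fin n))) : ℝ :=
  sInf {r : ℝ | ∃ x : EuclideanSpace ℝ (Fin n),
    r = (volume (symmDiff (((volume K).toReal ^ (-(1:ℝ)/(n:ℝ))) • K)
          ({x} + ((volume C).toReal ^ (-(1:ℝ)/(n:ℝ))) • C))).toReal}

/-- `σ(K,C) = max{|C|/|K|, |K|/|C|}`. -/
def volRatio {n : ℕ} (K C : Set (EuclideanSpace ℝ (Fin n))) : ℝ :=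
  max ((volume C).toReal / (volume K).toReal) ((volume K).toReal / (volume C).toReal)

section Aux

open Filter Topology Set

abbrev Eu (n : ℕ) := EuclideanSpace ℝ (Fin n)

/-- Legendre-type conjugate relative to a set. -/
def cj {n : ℕ} (K : Set (Eu n)) (f : Eu n → ℝ) (y : Eu n) : ℝ :=
  ⨆ x : K, (inner ℝ (x : Eu n) y - f x)

section cjlemmas
variable {n : ℕ} {K : Set (Eu n)} {f g : Eu n → ℝ}

lemma cj_bdd (hK : IsCompact K) (hf : Continuous f) (y : Eu n) :
    BddAbove (Set.range fun x : K => (inner ℝ (x : Eu n) y - f x)) := by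
  have h : BddAbove ((fun x : Eu n => inner ℝ x y - f x) '' K) :=
    (hK.image (by fun_prop)).bddAbove
  refine h.mono ?_
  rintro _ ⟨x, rfl⟩
  exact ⟨x, x.2, rfl⟩

lemma le_cj (hK : IsCompact K) (hf : Continuous f) {x : Eu n} (hx : x ∈ K) (y : Eu n) :
    inner ℝ x y - f x ≤ cj K f y :=
  le_ciSup (cj_bdd hK hf y) (⟨x, hx⟩ : K)

lemma cj_le (hne : K.Nonempty) {y : Eu n} {a : ℝ}
    (h : ∀ x ∈ K, inner ℝ x y - f x ≤ a) : cj K f y ≤ a := by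
  haveI : Nonempty K := hne.to_subtype
  exact ciSup_le fun x => h x x.2

lemma cj_attain (hK : IsCompact K) (hne : K.Nonempty) (hf : Continuous f) (y : Eu n) :
    ∃ x ∈ K, cj K f y = inner ℝ x y - f x := by
  obtain ⟨x, hx, hmax⟩ := hK.exists_isMaxOn hne
    (f := fun x : Eu n => inner ℝ x y - f x) (by fun_prop)
  exact ⟨x, hx, le_antisymm (cj_le hne fun z hz => hmax hz) (le_cj hK hf hx y)⟩

lemma cj_lip (hK : IsCompact K) (hne : K.Nonempty) (hf : Continuous f) {R : NNReal}
    (hR : ∀ x ∈ K, ‖x‖ ≤ R) : LipschitzWith R (cj K f) := by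
  refine LipschitzWith.of_le_add_mul R fun y y' => ?_
  refine cj_le hne fun x hx => ?_
  have h1 := le_cj hK hf hx y'
  have h2 : inner ℝ x y = inner ℝ x y' + inner ℝ x (y - y') := by
    rw [← inner_add_right]; congr 1; abel
  have h3 : inner ℝ x (y - y') ≤ ‖x‖ * ‖y - y'‖ := real_inner_le_norm _ _
  have h4 : ‖x‖ * ‖y - y'‖ ≤ R * dist y y' := by
    rw [dist_eq_norm]; exact mul_le_mul_of_nonneg_right (hR x hx) (norm_nonneg _)
  linarith

lemma cj_mono (hK : IsCompact K) (hne : K.Nonempty) (hg : Continuous g) (y : Eu n) {a : ℝ}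
    (h : ∀ x ∈ K, g x ≤ f x + a) : cj K f y ≤ cj K g y + a := by
  refine cj_le hne fun x hx => ?_
  have := le_cj hK hg hx y
  have := h x hx
  linarith

lemma exists_bound (hK : IsCompact K) : ∃ R : NNReal, ∀ x ∈ K, ‖x‖ ≤ R := by
  obtain ⟨R, hR⟩ := hK.isBounded.exists_norm_le
  refine ⟨R.toNNReal, fun x hx => (hR x hx).trans (Real.le_coe_toNNReal R)⟩

lemma cj_cont (hK : IsCompact K) (hne : K.Nonempty) (hf : Continuous f) :
    Continuous (cj K f) := by
  obtain ⟨R, hR⟩ := exists_bound hK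
  exact (cj_lip hK hne hf hR).continuous

end cjlemmas

lemma integrable_of_cont {n : ℕ} {K : Set (Eu n)} (hK : IsCompact K) {μ : Measure (Eu n)}
    [IsProbabilityMeasure μ] (hμ : ∀ᵐ x ∂μ, x ∈ K) {f : Eu n → ℝ} (hf : Continuous f) :
    Integrable f μ := by
  obtain ⟨M, hM⟩ := (hK.image hf).isBounded.exists_norm_le
  refine Integrable.of_bound hf.aestronglyMeasurable M ?_
  filter_upwards [hμ] with x hx
  exact hM _ ⟨x, hx, rfl⟩

lemma int_le_of_le {n : ℕ} {K : Set (Eu n)} (hK : IsCompact K) {μ : Measure (Eu n)}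
    [IsProbabilityMeasure μ] (hμ : ∀ᵐ x ∂μ, x ∈ K) {f g : Eu n → ℝ} (hf : Continuous f)
    (hg : Continuous g) {a : ℝ} (h : ∀ x ∈ K, f x ≤ g x + a) :
    ∫ x, f x ∂μ ≤ ∫ x, g x ∂μ + a := by
  have h1 : ∫ x, f x ∂μ ≤ ∫ x, (g x + a) ∂μ := by
    refine integral_mono_ae (integrable_of_cont hK hμ hf)
      ((integrable_of_cont hK hμ hg).add (integrable_const a)) ?_
    filter_upwards [hμ] with x hx using h x hx
  rw [integral_add (integrable_of_cont hK hμ hg) (integrable_const a)] at h1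
  simpa using h1

theorem kant {n : ℕ} {K C : Set (Eu n)} (hK : IsCompact K) (hKne : K.Nonempty)
    (hC : IsCompact C) (hCne : C.Nonempty) (μ ν : Measure (Eu n)) [IsProbabilityMeasure μ]
    [IsProbabilityMeasure ν] (hμ : ∀ᵐ x ∂μ, x ∈ K) (hν : ∀ᵐ x ∂ν, x ∈ C) :
    ∃ φ ψ : Eu n → ℝ, φ = cj C ψ ∧ ψ = cj K φ ∧ Continuous φ ∧ Continuous ψ ∧
      ∀ φ' ψ' : Eu n → ℝ, Continuous φ' → Continuous ψ' →
        (∀ x ∈ K, ∀ y ∈ C, inner ℝ x y ≤ φ' x + ψ' y) →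
        ∫ x, φ x ∂μ + ∫ y, ψ y ∂ν ≤ ∫ x, φ' x ∂μ + ∫ y, ψ' y ∂ν := by
  obtain ⟨R, hR⟩ := exists_bound hC
  set S : Set C(Eu n, ℝ) := {f | LipschitzWith R f ∧ f 0 = 0} with hS
  have hScomp : IsCompact S := by
    apply ArzelaAscoli.isCompact_of_equicontinuous
    · have h1 : IsCompact (Set.univ.pi fun x : Eu n => Set.Icc (-(R * ‖x‖)) (R * ‖x‖)) :=
        isCompact_univ_pi fun x => isCompact_Icc
      refine h1.of_isClosed_subset ?_ ?_
      · have : (ContinuousMap.toFun '' S) =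
            (⋂ x : Eu n, ⋂ y : Eu n, {f : Eu n → ℝ | dist (f x) (f y) ≤ R * dist x y}) ∩
              {f : Eu n → ℝ | f 0 = 0} := by
          ext f
          constructor
          · rintro ⟨g, hg, rfl⟩
            refine ⟨?_, hg.2⟩
            simp only [mem_iInter]
            exact fun x y => hg.1.dist_le_mul x y
          · rintro ⟨h1, h2⟩
            simp only [mem_iInter, mem_setOf_eq] at h1
            have hl : LipschitzWith R f := LipschitzWith.of_dist_le_mul h1
            exact ⟨⟨f, hl.continuous⟩, ⟨hl, h2⟩, rfl⟩
        rw [this]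
        refine IsClosed.inter (isClosed_iInter fun x => isClosed_iInter fun y => ?_) ?_
        · exact isClosed_le (by fun_prop) (by fun_prop)
        · exact isClosed_eq (by fun_prop) (by fun_prop)
      · rintro _ ⟨g, hg, rfl⟩ x _
        have := hg.1.dist_le_mul x 0
        rw [hg.2] at this
        simp only [dist_zero_right] at this
        exact abs_le.1 this
    · intro x
      rw [Metric.equicontinuousAt_iff]
      intro ε hε
      refine ⟨ε / (R + 1), by positivity, fun y hy f => ?_⟩
      have h1 := f.2.1.dist_le_mul x y
      have h2 : dist x y < ε / (R + 1) := by rw [dist_comm]; exact hy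
      calc dist (f.1 x) (f.1 y) ≤ R * dist x y := h1
        _ ≤ (R + 1) * dist x y := by nlinarith [dist_nonneg (x := x) (y := y)]
        _ < ε := by rw [lt_div_iff₀ (by positivity)] at h2; linarith
  set J : (Eu n → ℝ) → ℝ := fun f => ∫ x, f x ∂μ + ∫ y, cj K f y ∂ν with hJ
  have hJle : ∀ (f g : Eu n → ℝ) (a : ℝ), Continuous f → Continuous g →
      (∀ x ∈ K, |f x - g x| ≤ a) → J f ≤ J g + 2 * a := by
    intro f g a hf hg h
    have h1 : ∫ x, f x ∂μ ≤ ∫ x, g x ∂μ + a :=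
      int_le_of_le hK hμ hf hg fun x hx => by have := abs_le.1 (h x hx); linarith
    have h2 : ∫ x, cj K f x ∂ν ≤ ∫ x, cj K g x ∂ν + a :=
      int_le_of_le hC hν (cj_cont hK hKne hf) (cj_cont hK hKne hg) fun y hy =>
        cj_mono hK hKne hg y fun x hx => by have := abs_le.1 (h x hx); linarith
    simp only [hJ]; linarith
  have hJcont : Continuous fun f : C(Eu n, ℝ) => J f := by
    rw [continuous_iff_continuousAt]
    intro g
    rw [ContinuousAt, Metric.tendsto_nhds]
    intro ε hε
    have h1 := (ContinuousMap.tendsto_iff_forall_isCompact_tendstoUniformlyOn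
      (F := id) (p := 𝓝 g) (f := g)).1 tendsto_id K hK
    rw [Metric.tendstoUniformlyOn_iff] at h1
    filter_upwards [h1 (ε / 4) (by positivity)] with f hf
    have h2 : ∀ x ∈ K, |f x - g x| ≤ ε / 4 := fun x hx => by
      have := (hf x hx).le
      rw [dist_comm] at this; exact this
    have h3 := hJle f g _ f.continuous g.continuous h2
    have h4 := hJle g f _ g.continuous f.continuous fun x hx => by
      rw [abs_sub_comm]; exact h2 x hx
    rw [Real.dist_eq, abs_lt]; constructor <;> linarith
  obtain ⟨f0, hf0S, hf0⟩ := hScomp.exists_isMinOn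
    ⟨0, by refine ⟨?_, rfl⟩; exact LipschitzWith.of_dist_le_mul fun x y => by simp; positivity⟩ hJcont.continuousOn
  have hf0c : Continuous f0 := f0.continuous
  -- minimality among all pairs
  have hmin : ∀ φ' ψ' : Eu n → ℝ, Continuous φ' → Continuous ψ' →
        (∀ x ∈ K, ∀ y ∈ C, inner ℝ x y ≤ φ' x + ψ' y) →
        J f0 ≤ ∫ x, φ' x ∂μ + ∫ y, ψ' y ∂ν := by
    intro φ' ψ' hφ' hψ' hadm
    set φ1 := cj C ψ' with hφ1
    have hφ1L : LipschitzWith R φ1 := cj_lip hC hCne hψ' hR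
    have hφ1c := hφ1L.continuous
    set c := φ1 0
    have hfc : Continuous fun x => φ1 x - c := by fun_prop
    let f1 : C(Eu n, ℝ) := ⟨fun x => φ1 x - c, hfc⟩
    have hf1 : f1 ∈ S := by
      refine ⟨LipschitzWith.of_dist_le_mul fun x y => ?_, sub_self _⟩
      have := hφ1L.dist_le_mul x y
      simpa [f1] using this
    have h1 : J f0 ≤ J f1 := hf0 hf1
    have h2 : J f1 ≤ ∫ x, φ' x ∂μ + ∫ y, ψ' y ∂ν := by
      have ha : ∫ x, (φ1 x - c) ∂μ ≤ ∫ x, φ' x ∂μ + -c :=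
        int_le_of_le hK hμ hfc hφ' fun x hx => by
          have : φ1 x ≤ φ' x := cj_le hCne fun y hy => by
            have := hadm x hx y hy
            rw [real_inner_comm] at this
            linarith
          linarith
      have hb : ∫ y, cj K f1 y ∂ν ≤ ∫ y, ψ' y ∂ν + c :=
        int_le_of_le hC hν (cj_cont hK hKne hfc) hψ' fun y hy => by
          refine cj_le hKne fun x hx => ?_
          have := le_cj hC hψ' hy x
          rw [real_inner_comm] at this
          show _ - (φ1 x - c) ≤ _
          linarith
      have : J f1 = ∫ x, (φ1 x - c) ∂μ + ∫ y, cj K f1 y ∂ν := rfl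
      linarith
    linarith
  set ψ0 := cj K f0 with hψ0
  have hψ0c : Continuous ψ0 := cj_cont hK hKne hf0c
  set φ := cj C ψ0 with hφ
  have hφc : Continuous φ := cj_cont hC hCne hψ0c
  set ψ := cj K φ with hψ
  have hψc : Continuous ψ := cj_cont hK hKne hφc
  have hφle : ∀ x ∈ K, φ x ≤ f0 x := fun x hx => cj_le hCne fun y hy => by
    have := le_cj hK hf0c hx y
    rw [real_inner_comm] at this
    simp only [hψ0]; linarith
  have hψeq : ∀ y ∈ C, ψ y = ψ0 y := fun y hy => by
    apply le_antisymm
    · refine cj_le hKne fun x hx => ?_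
      have := le_cj hC hψ0c hy x
      rw [real_inner_comm] at this
      linarith
    · have := cj_mono (f := f0) hK hKne hφc y (a := 0) fun x hx => by simpa using hφle x hx
      simpa using this
  refine ⟨φ, ψ, ?_, rfl, hφc, hψc, fun φ' ψ' h1 h2 h3 => ?_⟩
  · funext x
    have h1 := cj_mono (f := ψ0) (g := ψ) hC hCne hψc x (a := 0) fun y hy => by
      simpa using (hψeq y hy).le
    have h2 := cj_mono (f := ψ) (g := ψ0) hC hCne hψ0c x (a := 0) fun y hy => by
      simpa using (hψeq y hy).ge
    rw [add_zero] at h1 h2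
    exact le_antisymm (by first | exact h1 | exact h2) (by first | exact h1 | exact h2)
  · refine le_trans ?_ (hmin φ' ψ' h1 h2 h3)
    have ha := int_le_of_le hK hμ hφc hf0c (a := 0) fun x hx => by simpa using hφle x hx
    have hb := int_le_of_le hC hν hψc hψ0c (a := 0) fun x hx => by simpa using (hψeq x hx).le
    simp only [hJ]; linarith

lemma grad_of_subgrad {n : ℕ} {f : Eu n → ℝ} {x y : Eu n}
    (h : ∀ z, f y + inner ℝ x (z - y) ≤ f z) (hd : DifferentiableAt ℝ f y) :
    gradient f y = x := by
  have h1 : HasFDerivAt (fun z => f z - inner ℝ x z) (fderiv ℝ f y - innerSL ℝ x) y :=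
    hd.hasFDerivAt.sub (innerSL ℝ x).hasFDerivAt
  have h2 : IsLocalMin (fun z => f z - inner ℝ x z) y := by
    refine Filter.Eventually.of_forall fun z => ?_
    have := h z
    rw [inner_sub_right] at this
    simp only; linarith
  have h3 := h2.hasFDerivAt_eq_zero h1
  refine ext_inner_right ℝ fun v => ?_
  rw [inner_gradient_left]
  have := congrArg (fun L => L v) h3
  simp only [ContinuousLinearMap.sub_apply, innerSL_apply_apply, ContinuousLinearMap.zero_apply] at this
  linarith

lemma cj_subgrad {n : ℕ} {K : Set (Eu n)} {f : Eu n → ℝ} (hK : IsCompact K)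
    (hf : Continuous f) {x y : Eu n} (hx : x ∈ K) (h : cj K f y = inner ℝ x y - f x) (z : Eu n) :
    cj K f y + inner ℝ x (z - y) ≤ cj K f z := by
  have := le_cj hK hf hx z
  rw [inner_sub_right]; linarith

lemma cj_grad {n : ℕ} {K : Set (Eu n)} {f : Eu n → ℝ} (hK : IsCompact K)
    (hne : K.Nonempty) (hf : Continuous f) {y : Eu n} (hd : DifferentiableAt ℝ (cj K f) y) :
    gradient (cj K f) y ∈ K ∧
      cj K f y = inner ℝ (gradient (cj K f) y) y - f (gradient (cj K f) y) := by
  obtain ⟨x, hx, h⟩ := cj_attain hK hne hf y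
  have := grad_of_subgrad (cj_subgrad hK hf hx h) hd
  rw [this]; exact ⟨hx, h⟩

lemma measurable_gradient {n : ℕ} (f : Eu n → ℝ) : Measurable (gradient f) := by
  have h1 : Measurable (fderiv ℝ f) := measurable_fderiv ℝ f
  exact (InnerProductSpace.toDual ℝ (Eu n)).symm.continuous.measurable.comp h1

lemma cj_ae_diff {n : ℕ} {K : Set (Eu n)} {f : Eu n → ℝ} (hK : IsCompact K)
    (hne : K.Nonempty) (hf : Continuous f) : ∀ᵐ y : Eu n, DifferentiableAt ℝ (cj K f) y := by
  obtain ⟨R, hR⟩ := exists_bound hK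
  exact (cj_lip hK hne hf hR).ae_differentiableAt

lemma push_lim {n : ℕ} {K : Set (Eu n)} {φ η : Eu n → ℝ} (hK : IsCompact K)
    (hne : K.Nonempty) (hφ : Continuous φ) (hη : Continuous η) {B : ℝ} (hB : ∀ x, |η x| ≤ B)
    {y : Eu n} (hd : DifferentiableAt ℝ (cj K φ) y) :
    Tendsto (fun k : ℕ => ((k:ℝ) + 1) * (cj K (fun x => φ x + (1 / ((k:ℝ) + 1)) * η x) y - cj K φ y))
      atTop (𝓝 (- η (gradient (cj K φ) y))) := by
  obtain ⟨hXK, hX⟩ := cj_grad hK hne hφ hd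
  set X := gradient (cj K φ) y with hXdef
  have hc : ∀ k : ℕ, Continuous (fun x => φ x + (1 / ((k:ℝ) + 1)) * η x) := fun k => by fun_prop
  choose x hxK hx using fun k : ℕ => cj_attain hK hne (hc k) y
  have hup : ∀ k : ℕ, ((k:ℝ) + 1) * (cj K (fun x => φ x + (1 / ((k:ℝ) + 1)) * η x) y - cj K φ y)
      ≤ - η (x k) := by
    intro k
    have h1 := le_cj hK hφ (hxK k) y
    have h2 : cj K (fun x => φ x + (1 / ((k:ℝ) + 1)) * η x) y - cj K φ y
        ≤ - ((1 / ((k:ℝ) + 1)) * η (x k)) := by rw [hx k]; linarith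
    calc _ ≤ ((k:ℝ) + 1) * - ((1 / ((k:ℝ) + 1)) * η (x k)) := by gcongr
      _ = _ := by field_simp
  have hlo : ∀ k : ℕ, - η X ≤
      ((k:ℝ) + 1) * (cj K (fun x => φ x + (1 / ((k:ℝ) + 1)) * η x) y - cj K φ y) := by
    intro k
    have h1 := le_cj hK (hc k) hXK y
    have h2 : - ((1 / ((k:ℝ) + 1)) * η X) ≤
        cj K (fun x => φ x + (1 / ((k:ℝ) + 1)) * η x) y - cj K φ y := by
      rw [hX]; linarith
    calc _ = ((k:ℝ) + 1) * - ((1 / ((k:ℝ) + 1)) * η X) := by field_simp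
      _ ≤ _ := by gcongr
  have hxlim : Tendsto x atTop (𝓝 X) := by
    refine hK.tendsto_nhds_of_unique_mapClusterPt (Eventually.of_forall hxK) ?_
    intro z hz hcl
    have h1 : MapClusterPt (inner ℝ z y - φ z) atTop ((fun x : Eu n => inner ℝ x y - φ x) ∘ x) :=
      hcl.tendsto_comp (by
        have : Continuous (fun x : Eu n => inner ℝ x y - φ x) := by fun_prop
        exact this.tendsto z)
    have h2 : Tendsto ((fun x : Eu n => inner ℝ x y - φ x) ∘ x) atTop (𝓝 (cj K φ y)) := by
      rw [tendsto_iff_dist_tendsto_zero]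
      have h0 : Tendsto (fun k : ℕ => 2 * B * (1 / ((k:ℝ) + 1))) atTop (𝓝 0) := by
        simpa using tendsto_one_div_add_atTop_nhds_zero_nat.const_mul (2 * B)
      refine squeeze_zero (fun k => dist_nonneg) (fun k => ?_) h0
      have h3 := le_cj hK (hc k) hXK y
      rw [hx k] at h3
      have h4 := le_cj hK hφ (hxK k) y
      have e1 := abs_le.1 (hB X)
      have e2 := abs_le.1 (hB (x k))
      have hp : 0 < 1 / ((k:ℝ) + 1) := by positivity
      simp only [Function.comp, Real.dist_eq]
      rw [abs_le]
      constructor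
      · rw [hX]; nlinarith
      · have : 0 ≤ 2 * B * (1 / ((k:ℝ) + 1)) := by
          have : 0 ≤ B := (abs_nonneg _).trans (hB X)
          positivity
        linarith
    have h3 : inner ℝ z y - φ z = cj K φ y := by
      by_contra hne'
      have h4 := h1.clusterPt
      have : (𝓝 (inner ℝ z y - φ z) ⊓ 𝓝 (cj K φ y)).NeBot := h4.neBot.mono (inf_le_inf_left _ h2)
      exact hne' (eq_of_nhds_neBot this)
    exact (grad_of_subgrad (cj_subgrad hK hφ hz h3.symm) hd).symm
  have hlim : Tendsto (fun k => - η (x k)) atTop (𝓝 (- η X)) :=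
    ((hη.tendsto X).comp hxlim).neg
  exact tendsto_of_tendsto_of_tendsto_of_le_of_le tendsto_const_nhds hlim hlo hup

lemma push_ineq {n : ℕ} {K C : Set (Eu n)} (hK : IsCompact K) (hKne : K.Nonempty)
    (hC : IsCompact C) (μ ν : Measure (Eu n)) [IsProbabilityMeasure μ]
    [IsProbabilityMeasure ν] (hμ : ∀ᵐ x ∂μ, x ∈ K) (hν : ∀ᵐ x ∂ν, x ∈ C) (hac : ν ≪ volume)
    {φ : Eu n → ℝ} (hφ : Continuous φ)
    (hmin : ∀ φ' ψ' : Eu n → ℝ, Continuous φ' → Continuous ψ' →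
        (∀ x ∈ K, ∀ y ∈ C, inner ℝ x y ≤ φ' x + ψ' y) →
        ∫ x, φ x ∂μ + ∫ y, cj K φ y ∂ν ≤ ∫ x, φ' x ∂μ + ∫ y, ψ' y ∂ν)
    {η : Eu n → ℝ} (hη : Continuous η) {B : ℝ} (hB : ∀ x, |η x| ≤ B) :
    ∫ y, η (gradient (cj K φ) y) ∂ν ≤ ∫ x, η x ∂μ := by
  have hc : ∀ k : ℕ, Continuous (fun x => φ x + (1 / ((k:ℝ) + 1)) * η x) := fun k => by fun_prop
  have hψc := cj_cont hK hKne hφ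
  have hlim : Tendsto (fun k : ℕ => ∫ y, ((k:ℝ) + 1) *
      (cj K (fun x => φ x + (1 / ((k:ℝ) + 1)) * η x) y - cj K φ y) ∂ν) atTop
      (𝓝 (∫ y, - η (gradient (cj K φ) y) ∂ν)) := by
    refine tendsto_integral_of_dominated_convergence (fun _ => B) ?_ (integrable_const _) ?_ ?_
    · intro k
      have := cj_cont hK hKne (hc k)
      exact Continuous.aestronglyMeasurable (by fun_prop)
    · intro k
      refine Eventually.of_forall fun y => ?_
      have hp : 0 < 1 / ((k:ℝ) + 1) := by positivity
      have h1 := cj_mono (f := fun x => φ x + (1 / ((k:ℝ) + 1)) * η x) (g := φ) hK hKne hφ y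
        (a := (1 / ((k:ℝ) + 1)) * B) fun x hx => by
          have := abs_le.1 (hB x); nlinarith
      have h2 := cj_mono (g := fun x => φ x + (1 / ((k:ℝ) + 1)) * η x) (f := φ) hK hKne (hc k) y
        (a := (1 / ((k:ℝ) + 1)) * B) fun x hx => by
          have := abs_le.1 (hB x); nlinarith
      rw [Real.norm_eq_abs, abs_mul, abs_of_pos (by positivity : 0 < (k:ℝ) + 1)]
      have h3 : |cj K (fun x => φ x + (1 / ((k:ℝ) + 1)) * η x) y - cj K φ y| ≤
          (1 / ((k:ℝ) + 1)) * B := by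
        rw [abs_le]; constructor <;> linarith
      calc _ ≤ ((k:ℝ) + 1) * ((1 / ((k:ℝ) + 1)) * B) := by gcongr
        _ = B := by field_simp
    · filter_upwards [hac.ae_le (cj_ae_diff hK hKne hφ)] with y hy
      exact push_lim hK hKne hφ hη hB hy
  have hge : ∀ k : ℕ, - ∫ x, η x ∂μ ≤ ∫ y, ((k:ℝ) + 1) *
      (cj K (fun x => φ x + (1 / ((k:ℝ) + 1)) * η x) y - cj K φ y) ∂ν := by
    intro k
    have hkc := cj_cont hK hKne (hc k)
    have h1 := hmin (fun x => φ x + (1 / ((k:ℝ) + 1)) * η x) _ (hc k) hkc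
      fun x hx y hy => by have := le_cj hK (hc k) hx y; linarith
    rw [integral_add (integrable_of_cont hK hμ hφ)
      ((integrable_of_cont hK hμ hη).const_mul _), integral_const_mul] at h1
    rw [integral_const_mul, integral_sub (integrable_of_cont hC hν hkc)
      (integrable_of_cont hC hν hψc)]
    have h2 : - ((1 / ((k:ℝ) + 1)) * ∫ x, η x ∂μ) ≤
      ∫ y, cj K (fun x => φ x + (1 / ((k:ℝ) + 1)) * η x) y ∂ν - ∫ y, cj K φ y ∂ν := by linarith
    calc _ = ((k:ℝ) + 1) * - ((1 / ((k:ℝ) + 1)) * ∫ x, η x ∂μ) := by field_simp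
      _ ≤ _ := by gcongr
  have := ge_of_tendsto' hlim hge
  rw [integral_neg] at this
  linarith

lemma push_eq {n : ℕ} {K C : Set (Eu n)} (hK : IsCompact K) (hKne : K.Nonempty)
    (hC : IsCompact C) (μ ν : Measure (Eu n)) [IsProbabilityMeasure μ]
    [IsProbabilityMeasure ν] (hμ : ∀ᵐ x ∂μ, x ∈ K) (hν : ∀ᵐ x ∂ν, x ∈ C) (hac : ν ≪ volume)
    {φ : Eu n → ℝ} (hφ : Continuous φ)
    (hmin : ∀ φ' ψ' : Eu n → ℝ, Continuous φ' → Continuous ψ' →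
        (∀ x ∈ K, ∀ y ∈ C, inner ℝ x y ≤ φ' x + ψ' y) →
        ∫ x, φ x ∂μ + ∫ y, cj K φ y ∂ν ≤ ∫ x, φ' x ∂μ + ∫ y, ψ' y ∂ν) :
    ν.map (gradient (cj K φ)) = μ := by
  have hm := measurable_gradient (cj K φ)
  have : IsProbabilityMeasure (ν.map (gradient (cj K φ))) :=
    Measure.isProbabilityMeasure_map hm.aemeasurable
  refine ext_of_forall_integral_eq_of_IsFiniteMeasure fun f => ?_
  rw [integral_map hm.aemeasurable f.continuous.aestronglyMeasurable]
  have hb : ∀ x, |f x| ≤ ‖f‖ := fun x => f.norm_coe_le_norm x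
  apply le_antisymm
  · exact push_ineq hK hKne hC μ ν hμ hν hac hφ hmin f.continuous hb
  · have := push_ineq hK hKne hC μ ν hμ hν hac hφ hmin (η := fun x => - f x)
      (by have := f.continuous; fun_prop) (B := ‖f‖) (fun x => by rw [abs_neg]; exact hb x)
    rw [integral_neg, integral_neg] at this
    linarith

/-- subgradient -/
def IsSub {n : ℕ} (ψ : Eu n → ℝ) (p q : Eu n) : Prop := ∀ z, ψ q + inner ℝ p (z - q) ≤ ψ z

lemma IsSub.mono {n : ℕ} {ψ : Eu n → ℝ} {p q p' q' : Eu n} (h : IsSub ψ p q)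
    (h' : IsSub ψ p' q') : 0 ≤ inner ℝ (p - p') (q - q') := by
  have h1 := h q'
  have h2 := h' q
  simp only [inner_sub_left, inner_sub_right] at *
  linarith

lemma cj_convex {n : ℕ} {K : Set (Eu n)} {φ : Eu n → ℝ} (hK : IsCompact K)
    (hne : K.Nonempty) (hφ : Continuous φ) (q y : Eu n) {t : ℝ} (h0 : 0 ≤ t) (h1 : t ≤ 1) :
    cj K φ (q + t • (y - q)) ≤ (1 - t) * cj K φ q + t * cj K φ y := by
  refine cj_le hne fun x hx => ?_
  have e1 := le_cj hK hφ hx q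
  have e2 := le_cj hK hφ hx y
  have e3 : inner ℝ x (q + t • (y - q)) - φ x =
      (1 - t) * (inner ℝ x q - φ x) + t * (inner ℝ x y - φ x) := by
    rw [inner_add_right, inner_smul_right, inner_sub_right]; ring
  rw [e3]
  exact add_le_add (mul_le_mul_of_nonneg_left e1 (by linarith)) (mul_le_mul_of_nonneg_left e2 h0)

lemma prox_exists {n : ℕ} {K : Set (Eu n)} {φ : Eu n → ℝ} (hK : IsCompact K)
    (hne : K.Nonempty) (hφ : Continuous φ) (z : Eu n) :
    ∃ q : Eu n, ∀ y, cj K φ q + ‖z - q‖ ^ 2 / 2 ≤ cj K φ y + ‖z - y‖ ^ 2 / 2 := by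
  have hc := cj_cont hK hne hφ
  refine Continuous.exists_forall_le (f := fun y => cj K φ y + ‖z - y‖ ^ 2 / 2) (by fun_prop) ?_
  obtain ⟨x0, hx0⟩ := hne
  have h1 : Tendsto (fun y : Eu n => ‖y‖ - (φ x0 + (‖x0‖ + 1) ^ 2 / 2 + ‖x0‖ * ‖z‖ + ‖z‖)) (cocompact _) atTop :=
    tendsto_atTop_add_const_right _ _ (tendsto_norm_cocompact_atTop)
  refine tendsto_atTop_mono (fun y => ?_) h1
  have h2 := le_cj hK hφ hx0 y
  have h3 : -(‖x0‖ * ‖y‖) ≤ inner ℝ x0 y := by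
    have := abs_real_inner_le_norm x0 y
    rw [abs_le] at this; exact this.1
  have h4 : (‖y‖ - ‖z‖) ^ 2 ≤ ‖z - y‖ ^ 2 := by
    rw [norm_sub_rev]; exact sq_le_sq' (by have := abs_norm_sub_norm_le y z; rw [abs_le] at this; linarith)
      (by have := abs_norm_sub_norm_le y z; rw [abs_le] at this; linarith)
  nlinarith [sq_nonneg (‖y‖ - ‖z‖ - (‖x0‖ + 1))]

lemma prox_sub {n : ℕ} {K : Set (Eu n)} {φ : Eu n → ℝ} (hK : IsCompact K)
    (hne : K.Nonempty) (hφ : Continuous φ) {z q : Eu n}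
    (h : ∀ y, cj K φ q + ‖z - q‖ ^ 2 / 2 ≤ cj K φ y + ‖z - y‖ ^ 2 / 2) :
    IsSub (cj K φ) (z - q) q := by
  intro y
  have key : ∀ t : ℝ, 0 < t → t ≤ 1 →
      cj K φ q + inner ℝ (z - q) (y - q) - t * (‖y - q‖ ^ 2 / 2) ≤ cj K φ y := by
    intro t ht0 ht1
    have h1 := h (q + t • (y - q))
    have h2 := cj_convex hK hne hφ q y ht0.le ht1
    have h3 : ‖z - (q + t • (y - q))‖ ^ 2 = ‖z - q‖ ^ 2 - 2 * (t * inner ℝ (z - q) (y - q))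
        + t ^ 2 * ‖y - q‖ ^ 2 := by
      rw [← sub_sub, norm_sub_sq_real, inner_smul_right, norm_smul, mul_pow, Real.norm_eq_abs,
        sq_abs]
    rw [h3] at h1
    have h4 : t * (cj K φ q + inner ℝ (z - q) (y - q) - t * (‖y - q‖ ^ 2 / 2)) ≤ t * cj K φ y := by
      nlinarith
    exact le_of_mul_le_mul_left h4 ht0
  have hlim : Tendsto (fun t : ℝ => cj K φ q + inner ℝ (z - q) (y - q) - t * (‖y - q‖ ^ 2 / 2))
      (𝓝[>] 0) (𝓝 (cj K φ q + inner ℝ (z - q) (y - q))) := by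
    have : Continuous (fun t : ℝ => cj K φ q + inner ℝ (z - q) (y - q) - t * (‖y - q‖ ^ 2 / 2)) := by
      fun_prop
    have := (this.tendsto 0).mono_left (nhdsWithin_le_nhds (s := Ioi 0))
    simpa using this
  refine le_of_tendsto hlim ?_
  filter_upwards [Ioc_mem_nhdsGT (zero_lt_one)] with t ht using key t ht.1 ht.2

theorem prox {n : ℕ} {K : Set (Eu n)} {φ : Eu n → ℝ} (hK : IsCompact K)
    (hne : K.Nonempty) (hφ : Continuous φ) :
    ∃ P : Eu n → Eu n, LipschitzWith 1 P ∧ LipschitzWith 1 (fun z => z - P z) ∧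
      (Convex ℝ K → ∀ z, P z ∈ K) ∧
      (∀ x q, IsSub (cj K φ) x q → P (x + q) = x) ∧
      ∀ z, DifferentiableAt ℝ P z →
        (∀ v w, inner ℝ (fderiv ℝ P z v) w = inner ℝ v (fderiv ℝ P z w)) ∧
        ∀ v, ‖fderiv ℝ P z v‖ ^ 2 ≤ inner ℝ (fderiv ℝ P z v) v := by
  choose Q hQ using prox_exists hK hne hφ
  have hsub : ∀ z, IsSub (cj K φ) (z - Q z) (Q z) := fun z => prox_sub hK hne hφ (hQ z)
  set P : Eu n → Eu n := fun z => z - Q z with hP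
  have hPQ : ∀ z, Q z = z - P z := fun z => by simp [hP]
  have hsub : ∀ z, IsSub (cj K φ) (P z) (Q z) := hsub
  have hmono : ∀ z z', ‖P z - P z'‖ ^ 2 ≤ inner ℝ (P z - P z') (z - z') := by
    intro z z'
    have h1 := (hsub z).mono (hsub z')
    have h2 : Q z - Q z' = (z - z') - (P z - P z') := by rw [hPQ, hPQ]; abel
    rw [h2, inner_sub_right, real_inner_self_eq_norm_sq] at h1
    linarith
  have hsq : ∀ z z', ‖P z - P z'‖ ^ 2 + ‖Q z - Q z'‖ ^ 2 ≤ ‖z - z'‖ ^ 2 := by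
    intro z z'
    have h1 := (hsub z).mono (hsub z')
    have h2 : z - z' = (P z - P z') + (Q z - Q z') := by rw [hPQ, hPQ]; abel
    rw [h2, norm_add_sq_real]; linarith
  refine ⟨P, ?_, ?_, ?_, ?_, ?_⟩
  · refine LipschitzWith.of_dist_le_mul fun z z' => ?_
    rw [dist_eq_norm, dist_eq_norm, NNReal.coe_one, one_mul]
    have := hsq z z'
    exact (sq_le_sq₀ (norm_nonneg _) (norm_nonneg _)).1 (by nlinarith [sq_nonneg ‖Q z - Q z'‖])
  · refine LipschitzWith.of_dist_le_mul fun z z' => ?_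
    simp only [← hPQ]
    rw [dist_eq_norm, dist_eq_norm, NNReal.coe_one, one_mul]
    have := hsq z z'
    exact (sq_le_sq₀ (norm_nonneg _) (norm_nonneg _)).1 (by nlinarith [sq_nonneg ‖P z - P z'‖])
  · intro hconv z
    by_contra hnot
    obtain ⟨f, u, h1, h2⟩ := geometric_hahn_banach_closed_point hconv hK.isClosed hnot
    set w := (InnerProductSpace.toDual ℝ (Eu n)).symm f with hw
    have hf : ∀ x, f x = inner ℝ w x := fun x => by
      rw [hw, InnerProductSpace.toDual_symm_apply]
    have h3 := hsub z (Q z + w)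
    obtain ⟨x, hx, hxe⟩ := cj_attain hK hne hφ (Q z + w)
    have h4 := le_cj hK hφ hx (Q z)
    have h5 := h1 x hx
    rw [hf, real_inner_comm] at h5 h2
    rw [hxe, inner_add_right, add_sub_cancel_left] at h3
    linarith
  · intro x q hx
    have h1 := (hsub (x + q)).mono hx
    have h2 : Q (x + q) - q = - (P (x + q) - x) := by rw [hPQ]; abel
    rw [h2, inner_neg_right, real_inner_self_eq_norm_sq] at h1
    have : ‖P (x + q) - x‖ = 0 := by nlinarith [norm_nonneg (P (x + q) - x)]
    exact sub_eq_zero.1 (norm_eq_zero.1 this)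
  · intro z hz
    constructor
    · set E : Eu n → ℝ := fun z => cj K φ (Q z) + ‖P z‖ ^ 2 / 2 with hE
      have hEup : ∀ z z', E z' ≤ E z + inner ℝ (P z) (z' - z) + ‖z' - z‖ ^ 2 / 2 := by
        intro z z'
        have h1 := hQ z' (Q z)
        have h2 : ‖z' - Q z‖ ^ 2 = ‖P z‖ ^ 2 + 2 * inner ℝ (P z) (z' - z) + ‖z' - z‖ ^ 2 := by
          rw [← norm_add_sq_real]; congr 2; rw [hPQ]; abel
        rw [h2] at h1
        simp only [hE]
        have h3 : ‖z' - Q z'‖ = ‖P z'‖ := rfl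
        rw [h3] at h1
        linarith
      have hEd : ∀ z, HasFDerivAt E (innerSL ℝ (P z)) z := by
        intro z
        have hb : ∀ z', ‖E z' - E z - innerSL ℝ (P z) (z' - z)‖ ≤ 1 * ‖‖z' - z‖ ^ 2‖ := by
          intro z'
          rw [innerSL_apply_apply, Real.norm_eq_abs, Real.norm_eq_abs, abs_of_nonneg (sq_nonneg ‖z' - z‖), abs_le]
          have h1 := hEup z z'
          have h2 := hEup z' z
          have h3 := hmono z' z
          have h4 : inner ℝ (P z') (z - z') = - inner ℝ (P z') (z' - z) := by
            rw [← inner_neg_right, neg_sub]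
          rw [inner_sub_left] at h3
          rw [h4, norm_sub_rev] at h2
          have := sq_nonneg ‖P z' - P z‖
          have := sq_nonneg ‖z' - z‖
          constructor <;> linarith
        refine HasFDerivAt.of_isLittleO ?_
        refine (Asymptotics.IsBigO.of_bound 1 (Eventually.of_forall hb)).trans_isLittleO ?_
        exact Asymptotics.isLittleO_pow_sub_sub z (by norm_num)
      have h2 : HasFDerivAt (fun z => innerSL ℝ (P z)) ((innerSL ℝ).comp (fderiv ℝ P z)) z :=
        (innerSL ℝ (E := Eu n)).hasFDerivAt.comp z hz.hasFDerivAt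
      intro v w
      have h3 := second_derivative_symmetric hEd h2 v w
      simp only [ContinuousLinearMap.comp_apply, innerSL_apply_apply] at h3
      rw [h3, real_inner_comm]
    · intro v
      have h1 := (hz.hasFDerivAt.hasLineDerivAt v).tendsto_slope_zero
      have h2 : Tendsto (fun t : ℝ => ‖t⁻¹ • (P (z + t • v) - P z)‖ ^ 2) (𝓝[≠] 0)
        (𝓝 (‖fderiv ℝ P z v‖ ^ 2)) := (h1.norm).pow 2
      have h3 : Tendsto (fun t : ℝ => inner ℝ (t⁻¹ • (P (z + t • v) - P z)) v) (𝓝[≠] 0)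
        (𝓝 (inner ℝ (fderiv ℝ P z v) v)) := h1.inner tendsto_const_nhds
      refine le_of_tendsto_of_tendsto h2 h3 ?_
      filter_upwards [self_mem_nhdsWithin] with t ht
      have ht : t ≠ 0 := ht
      have h4 := hmono (z + t • v) z
      rw [add_sub_cancel_left, inner_smul_right] at h4
      rw [norm_smul, inner_smul_left, mul_pow, Real.norm_eq_abs, sq_abs]
      have : (t⁻¹) ^ 2 * ‖P (z + t • v) - P z‖ ^ 2 ≤
        (t⁻¹) ^ 2 * (t * inner ℝ (P (z + t • v) - P z) v) := by gcongr
      refine this.trans_eq ?_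
      simp only [RCLike.conj_to_real]
      field_simp

lemma lip_null {n : ℕ} {f : Eu n → Eu n} (hf : LipschitzWith 1 f) {s : Set (Eu n)}
    (hs : volume s = 0) : volume (f '' s) = 0 := by
  have h1 : (Measure.hausdorffMeasure (n:ℝ) : Measure (Eu n)) ≪ volume :=
    Measure.absolutelyContinuous_isAddHaarMeasure _ _
  have h2 : (volume : Measure (Eu n)) ≪ Measure.hausdorffMeasure (n:ℝ) :=
    Measure.absolutelyContinuous_isAddHaarMeasure _ _
  apply h2
  have h3 := hf.hausdorffMeasure_image_le (d := (n:ℝ)) (by positivity) s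
  rw [h1 hs] at h3
  simpa using h3

theorem transport {n : ℕ} {K C : Set (Eu n)} (hK : IsCompact K) (hK0 : volume K ≠ 0)
    (hC : IsCompact C) (hC0 : volume C ≠ 0) :
    ∃ P : Eu n → Eu n, LipschitzWith 1 P ∧ (Convex ℝ K → ∀ z, P z ∈ K) ∧
      (∀ z, DifferentiableAt ℝ P z →
        (∀ v w, inner ℝ (fderiv ℝ P z v) w = inner ℝ v (fderiv ℝ P z w)) ∧
        ∀ v, ‖fderiv ℝ P z v‖ ^ 2 ≤ inner ℝ (fderiv ℝ P z v) v) ∧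
      ∃ Z ⊆ K + C, MeasurableSet Z ∧ (∀ z ∈ Z, DifferentiableAt ℝ P z) ∧
        ∫⁻ z in Z, ENNReal.ofReal |(fderiv ℝ P z).det| = volume K ∧
        ∀ᵐ z ∂(volume.restrict Z), ENNReal.ofReal |(fderiv ℝ P z).det| * volume C =
          ENNReal.ofReal |(ContinuousLinearMap.id ℝ (Eu n) - fderiv ℝ P z).det| * volume K := by
  have hKne : K.Nonempty := nonempty_of_measure_ne_zero hK0
  have hCne : C.Nonempty := nonempty_of_measure_ne_zero hC0
  have hKt : volume K ≠ ⊤ := hK.measure_lt_top.ne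
  have hCt : volume C ≠ ⊤ := hC.measure_lt_top.ne
  set μ := ProbabilityTheory.cond volume K with hμd
  set ν := ProbabilityTheory.cond volume C with hνd
  have iμ : IsProbabilityMeasure μ := ProbabilityTheory.cond_isProbabilityMeasure_of_finite hK0 hKt
  have iν : IsProbabilityMeasure ν := ProbabilityTheory.cond_isProbabilityMeasure_of_finite hC0 hCt
  have hμ : ∀ᵐ x ∂μ, x ∈ K := ProbabilityTheory.ae_cond_mem hK.measurableSet
  have hν : ∀ᵐ x ∂ν, x ∈ C := ProbabilityTheory.ae_cond_mem hC.measurableSet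
  have aμ : μ ≪ volume := ProbabilityTheory.cond_absolutelyContinuous
  have aν : ν ≪ volume := ProbabilityTheory.cond_absolutelyContinuous
  obtain ⟨φ, ψ, hφe, hψe, hφ, hψ, hmin⟩ := kant hK hKne hC hCne μ ν hμ hν
  have hT : μ.map (gradient φ) = ν := by
    rw [hφe]
    refine push_eq hC hCne hK ν μ hν hμ aμ hψ ?_
    intro ψ' φ' h1 h2 h3
    rw [← hφe]
    have := hmin φ' ψ' h2 h1 fun x hx y hy => by
      have := h3 y hy x hx
      rw [real_inner_comm]; linarith
    linarith
  obtain ⟨P, hP1, hQ1, hPK, hPx, hPd⟩ := prox hK hKne hφ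
  rw [← hψe] at hPx
  set T := gradient φ with hTd
  have hTm : Measurable T := measurable_gradient φ
  set K0 : Set (Eu n) := K ∩ ({x | DifferentiableAt ℝ φ x} ∩ T ⁻¹' {y | DifferentiableAt ℝ ψ y})
    with hK0d
  have hK0m : MeasurableSet K0 := hK.measurableSet.inter
    ((measurableSet_of_differentiableAt ℝ φ).inter (hTm (measurableSet_of_differentiableAt ℝ ψ)))
  have hK0n : volume (K \ K0) = 0 := by
    have h1 : ∀ᵐ x ∂μ, DifferentiableAt ℝ φ x := by
      apply aμ.ae_le
      rw [hφe]; exact cj_ae_diff hC hCne hψ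
    have h2 : ∀ᵐ x ∂μ, DifferentiableAt ℝ ψ (T x) := by
      have : ∀ᵐ y ∂(μ.map T), DifferentiableAt ℝ ψ y := by
        rw [hT]
        apply aν.ae_le
        rw [hψe]; exact cj_ae_diff hK hKne hφ
      exact ae_of_ae_map hTm.aemeasurable this
    have h3 : μ (K \ K0) = 0 := by
      rw [← compl_mem_ae_iff]
      filter_upwards [h1, h2] with x hx1 hx2
      intro hx
      exact hx.2 ⟨hx.1, hx1, hx2⟩
    rw [hμd, ProbabilityTheory.cond_apply hK.measurableSet, mul_eq_zero] at h3
    rcases h3 with h3 | h3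
    · exact absurd (ENNReal.inv_eq_zero.1 h3) hKt
    · rwa [inter_eq_self_of_subset_right diff_subset] at h3
  have hK0v : volume K0 = volume K := by
    refine measure_eq_measure_of_null_diff inter_subset_left hK0n
  -- facts on K0
  have hTC : ∀ x ∈ K0, T x ∈ C := by
    intro x hx
    have h := cj_grad hC hCne hψ (y := x) (by rw [← hφe]; exact hx.2.1)
    rw [← hφe] at h; exact h.1
  have hTsub : ∀ x ∈ K0, IsSub ψ x (T x) := by
    intro x hx
    have h := cj_grad hC hCne hψ (y := x) (by rw [← hφe]; exact hx.2.1)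
    rw [← hφe] at h
    have h2 : ψ (T x) = inner ℝ x (T x) - φ x := by
      rw [real_inner_comm]; linarith [h.2]
    rw [hψe] at h2 ⊢
    exact cj_subgrad hK hφ hx.1 h2
  have hPT : ∀ x ∈ K0, P (x + T x) = x := fun x hx => hPx _ _ (hTsub x hx)
  have hTinj : InjOn T K0 := by
    intro x hx x' hx' h
    have h1 := grad_of_subgrad (hTsub x hx) hx.2.2
    have h2 := grad_of_subgrad (hTsub x' hx') hx'.2.2
    rw [← h1, ← h2, h]
  have hSinj : InjOn (fun x => x + T x) K0 := by
    intro x hx x' hx' h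
    rw [← hPT x hx, ← hPT x' hx']
    exact congrArg P h
  set Z0 := (fun x => x + T x) '' K0 with hZ0
  have hZ0m : MeasurableSet Z0 := hK0m.image_of_measurable_injOn (measurable_id.add hTm) hSinj
  set Z := Z0 ∩ {z | DifferentiableAt ℝ P z} with hZ
  have hZm : MeasurableSet Z := hZ0m.inter (measurableSet_of_differentiableAt ℝ P)
  have hZx : ∀ z ∈ Z, P z ∈ K0 ∧ z - P z = T (P z) := by
    rintro z ⟨⟨x, hx, rfl⟩, -⟩
    simp only [hPT x hx]
    exact ⟨hx, by abel⟩
  have hPinj : InjOn P Z := by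
    intro z hz z' hz' h
    have h1 := (hZx z hz).2
    have h2 := (hZx z' hz').2
    rw [← h, ← h1] at h2
    exact (sub_left_inj.1 h2).symm
  have hQinj : InjOn (fun z => z - P z) Z := by
    intro z hz z' hz' h
    simp only [(hZx z hz).2, (hZx z' hz').2] at h
    exact hPinj hz hz' (hTinj (hZx z hz).1 (hZx z' hz').1 h)
  have hBv : ∀ B ⊆ K0, MeasurableSet B → volume B * volume C = volume (T '' B) * volume K := by
    intro B hB hBm
    have hTBm : MeasurableSet (T '' B) := hBm.image_of_measurable_injOn hTm (hTinj.mono hB)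
    have h1 : ν (T '' B) = μ (T ⁻¹' (T '' B)) := by
      rw [← hT, Measure.map_apply hTm hTBm]
    rw [hμd, hνd, ProbabilityTheory.cond_apply hK.measurableSet,
      ProbabilityTheory.cond_apply hC.measurableSet, inter_eq_self_of_subset_right] at h1
    · have h2 : volume (K ∩ T ⁻¹' (T '' B)) = volume B := by
        symm
        refine measure_eq_measure_of_null_diff ?_ ?_
        · exact fun x hx => ⟨(hB hx).1, x, hx, rfl⟩
        · refine measure_mono_null ?_ hK0n
          rintro x ⟨⟨hx, x', hx', he⟩, hxB⟩
          refine ⟨hx, fun hx0 => hxB ?_⟩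
          rw [← hTinj (hB hx') hx0 he]; exact hx'
      rw [h2] at h1
      calc volume B * volume C = ((volume K)⁻¹ * volume B) * volume K * volume C := by
            rw [mul_comm (volume K)⁻¹, mul_assoc (volume B), ENNReal.inv_mul_cancel hK0 hKt, mul_one]
        _ = ((volume C)⁻¹ * volume (T '' B)) * volume K * volume C := by rw [h1]
        _ = ((volume C)⁻¹ * volume C) * (volume (T '' B) * volume K) := by ring
        _ = _ := by rw [ENNReal.inv_mul_cancel hC0 hCt, one_mul]
    · rintro _ ⟨x, hx, rfl⟩
      exact hTC x (hB hx)
  have hdP : ∀ z ∈ Z, HasFDerivAt P (fderiv ℝ P z) z := fun z hz => hz.2.hasFDerivAt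
  have hdQ : ∀ z ∈ Z, HasFDerivAt (fun z => z - P z)
      (ContinuousLinearMap.id ℝ (Eu n) - fderiv ℝ P z) z := fun z hz =>
    (hasFDerivAt_id z).sub (hdP z hz)
  have hmf : Measurable (fun z => ENNReal.ofReal |(fderiv ℝ P z).det|) := by
    have := ContinuousLinearMap.continuous_det.measurable.comp (measurable_fderiv ℝ P)
    exact ENNReal.measurable_ofReal.comp (measurable_abs.comp this)
  have hmg : Measurable (fun z => ENNReal.ofReal
      |(ContinuousLinearMap.id ℝ (Eu n) - fderiv ℝ P z).det|) := by
    have := ContinuousLinearMap.continuous_det.measurable.comp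
      (measurable_const.sub (measurable_fderiv ℝ P) : Measurable
        (fun z => ContinuousLinearMap.id ℝ (Eu n) - fderiv ℝ P z))
    exact ENNReal.measurable_ofReal.comp (measurable_abs.comp this)
  refine ⟨P, hP1, hPK, hPd, Z, ?_, hZm, fun z hz => hz.2, ?_, ?_⟩
  · rintro _ ⟨⟨x, hx, rfl⟩, -⟩
    exact add_mem_add hx.1 (hTC x hx)
  · rw [lintegral_abs_det_fderiv_eq_addHaar_image volume hZm
      (fun z hz => (hdP z hz).hasFDerivWithinAt) hPinj]
    have hN : volume (P '' {z | ¬ DifferentiableAt ℝ P z}) = 0 :=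
      lip_null hP1 (ae_iff.1 hP1.ae_differentiableAt)
    rw [← hK0v]
    refine measure_eq_measure_of_null_diff ?_ (measure_mono_null ?_ hN)
    · rintro _ ⟨z, hz, rfl⟩; exact (hZx z hz).1
    · rintro x ⟨hx, hxn⟩
      refine ⟨x + T x, ?_, hPT x hx⟩
      intro hd
      exact hxn ⟨x + T x, ⟨⟨x, hx, rfl⟩, hd⟩, hPT x hx⟩
  · refine ae_eq_of_forall_setLIntegral_eq_of_sigmaFinite (hmf.mul_const _) (hmg.mul_const _) ?_
    intro s hs _
    rw [Measure.restrict_restrict hs]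
    have hsub : s ∩ Z ⊆ Z := inter_subset_right
    have hsm : MeasurableSet (s ∩ Z) := hs.inter hZm
    rw [lintegral_mul_const _ hmf, lintegral_mul_const _ hmg,
      lintegral_abs_det_fderiv_eq_addHaar_image volume hsm
        (fun z hz => (hdP z (hsub hz)).hasFDerivWithinAt) (hPinj.mono hsub),
      lintegral_abs_det_fderiv_eq_addHaar_image volume hsm
        (fun z hz => (hdQ z (hsub hz)).hasFDerivWithinAt) (hQinj.mono hsub)]
    have h1 : (fun z => z - P z) '' (s ∩ Z) = T '' (P '' (s ∩ Z)) := by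
      rw [image_image]
      exact image_congr fun z hz => (hZx z hz.2).2
    rw [h1]
    refine hBv _ ?_ (hsm.image_of_measurable_injOn hP1.continuous.measurable (hPinj.mono hsub))
    rintro _ ⟨z, hz, rfl⟩; exact (hZx z hz.2).1

lemma det_of_eig {n : ℕ} (b : Module.Basis (Fin n) ℝ (Eu n)) (f : Eu n →ₗ[ℝ] Eu n) (l : Fin n → ℝ)
    (h : ∀ i, f (b i) = l i • b i) : LinearMap.det f = ∏ i, l i := by
  rw [← LinearMap.det_toMatrix b, ← Matrix.det_diagonal]
  congr 1
  ext i j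
  rw [LinearMap.toMatrix_apply, h, Matrix.diagonal_apply]
  simp only [map_smul, Module.Basis.repr_self, Finsupp.smul_apply, Finsupp.single_apply, smul_eq_mul]
  by_cases hij : j = i
  · subst hij; simp
  · simp [hij, Ne.symm hij]

lemma spec {n : ℕ} (hn : 0 < n) (A : Eu n →L[ℝ] Eu n)
    (hs : ∀ v w, inner ℝ (A v) w = inner ℝ v (A w))
    (hm : ∀ v, ‖A v‖ ^ 2 ≤ inner ℝ (A v) v) :
    ∃ l : Fin n → ℝ, (∀ i, 0 ≤ l i ∧ l i ≤ 1) ∧ A.det = ∏ i, l i ∧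
      (ContinuousLinearMap.id ℝ (Eu n) - A).det = ∏ i, (1 - l i) ∧
      ∃ j, ‖(2:ℝ) • A - ContinuousLinearMap.id ℝ (Eu n)‖ ≤ |2 * l j - 1| := by
  have hsym : (A : Eu n →ₗ[ℝ] Eu n).IsSymmetric := hs
  have hfin : Module.finrank ℝ (Eu n) = n := by simp
  set b := hsym.eigenvectorBasis hfin with hb
  set l := hsym.eigenvalues hfin with hl
  have hAb : ∀ i, A (b i) = l i • b i := fun i => hsym.apply_eigenvectorBasis hfin i
  have hbn : ∀ i, ‖b i‖ = 1 := fun i => b.orthonormal.1 i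
  have hl01 : ∀ i, 0 ≤ l i ∧ l i ≤ 1 := by
    intro i
    have h := hm (b i)
    rw [hAb, norm_smul, hbn, inner_smul_left, real_inner_self_eq_norm_sq, hbn] at h
    simp at h
    constructor <;> nlinarith [sq_nonneg (l i)]
  refine ⟨l, hl01, ?_, ?_, ?_⟩
  · exact det_of_eig b.toBasis _ l fun i => by simpa using hAb i
  · refine det_of_eig b.toBasis _ (fun i => 1 - l i) fun i => ?_
    simp [hAb, sub_smul]
  · have : Nonempty (Fin n) := ⟨⟨0, hn⟩⟩
    obtain ⟨j, hj⟩ := Finite.exists_max (fun i => |2 * l i - 1|)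
    refine ⟨j, ?_⟩
    refine ContinuousLinearMap.opNorm_le_bound _ (abs_nonneg _) fun v => ?_
    rw [← sq_le_sq₀ (norm_nonneg _) (by positivity), mul_pow,
      ← b.sum_sq_norm_inner_right, ← b.sum_sq_norm_inner_right v, Finset.mul_sum]
    refine Finset.sum_le_sum fun i _ => ?_
    have h1 : inner ℝ (b i) (((2:ℝ) • A - ContinuousLinearMap.id ℝ (Eu n)) v) =
        (2 * l i - 1) * inner ℝ (b i) v := by
      simp only [sub_apply, smul_apply, ContinuousLinearMap.id_apply, inner_sub_right, inner_smul_right]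
      rw [← hs, hAb, inner_smul_left]
      simp; ring
    rw [h1, norm_mul, mul_pow, Real.norm_eq_abs]
    have := hj i
    gcongr

lemma amgm {n : ℕ} (hn : 0 < n) (l : Fin n → ℝ) (hl : ∀ i, 0 ≤ l i ∧ l i ≤ 1) :
    (∏ i, l i) ^ ((1:ℝ)/n) + (∏ i, (1 - l i)) ^ ((1:ℝ)/n) ≤ 1 := by
  have hn' : (n:ℝ) ≠ 0 := by positivity
  have h0 : ∑ i : Fin n, (1:ℝ)/n = 1 := by simp [hn']
  have h1 := Real.geom_mean_le_arith_mean_weighted Finset.univ (fun _ : Fin n => (1:ℝ)/n) l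
    (fun _ _ => by positivity) h0 (fun i _ => (hl i).1)
  have h2 := Real.geom_mean_le_arith_mean_weighted Finset.univ (fun _ : Fin n => (1:ℝ)/n)
    (fun i => 1 - l i)
    (fun _ _ => by positivity) h0 (fun i _ => by linarith [(hl i).2])
  rw [Real.finsetProd_rpow _ _ (fun i _ => (hl i).1)] at h1
  rw [Real.finsetProd_rpow _ _ (fun i _ => by linarith [(hl i).2])] at h2
  have h3 : ∑ i : Fin n, (1:ℝ)/n * l i + ∑ i : Fin n, (1:ℝ)/n * (1 - l i) = 1 := by
    rw [← Finset.sum_add_distrib]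
    exact (Finset.sum_congr rfl fun i _ => by ring).trans h0
  linarith

theorem bm_s10 {n : ℕ} (hn : 0 < n) {K C : Set (Eu n)} (hK : IsCompact K) (hK0 : volume K ≠ 0)
    (hC : IsCompact C) (hC0 : volume C ≠ 0) :
    (volume.real K ^ ((1:ℝ)/n) + volume.real C ^ ((1:ℝ)/n)) ^ n ≤ volume.real (K + C) := by
  obtain ⟨P, -, -, hPd, Z, hZs, hZm, hZd, hZi, hZe⟩ := transport hK hK0 hC hC0
  have hKt : volume K ≠ ⊤ := hK.measure_lt_top.ne
  have hCt : volume C ≠ ⊤ := hC.measure_lt_top.ne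
  have hWt : volume (K + C) ≠ ⊤ := (hK.add hC).measure_lt_top.ne
  have hn' : (n:ℝ) ≠ 0 := by positivity
  set a := volume.real K with ha
  set c := volume.real C with hc
  have ha0 : 0 < a := ENNReal.toReal_pos hK0 hKt
  have hc0 : 0 < c := ENNReal.toReal_pos hC0 hCt
  set k := a ^ ((1:ℝ)/n) with hk
  set m := c ^ ((1:ℝ)/n) with hm
  have hk0 : 0 < k := Real.rpow_pos_of_pos ha0 _
  have hm0 : 0 < m := Real.rpow_pos_of_pos hc0 _
  have hkn : k ^ n = a := by
    rw [hk, one_div]; exact Real.rpow_inv_natCast_pow ha0.le hn.ne'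
  have hmn : m ^ n = c := by
    rw [hm, one_div]; exact Real.rpow_inv_natCast_pow hc0.le hn.ne'
  have hle : ∀ᵐ z ∂(volume.restrict Z), ENNReal.ofReal |(fderiv ℝ P z).det| ≤
      ENNReal.ofReal (a / (k + m) ^ n) := by
    filter_upwards [hZe, ae_restrict_mem hZm] with z hz hzZ
    obtain ⟨hs, hmz⟩ := hPd z (hZd z hzZ)
    obtain ⟨l, hl, hd1, hd2, -⟩ := spec hn _ hs hmz
    apply ENNReal.ofReal_le_ofReal
    have hp1 : 0 ≤ ∏ i, l i := Finset.prod_nonneg fun i _ => (hl i).1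
    have hp2 : 0 ≤ ∏ i, (1 - l i) := Finset.prod_nonneg fun i _ => by linarith [(hl i).2]
    rw [hd1, hd2, abs_of_nonneg hp1, abs_of_nonneg hp2] at hz
    rw [hd1, abs_of_nonneg hp1]
    have hz' : (∏ i, l i) * c = (∏ i, (1 - l i)) * a := by
      have := congrArg ENNReal.toReal hz
      rwa [ENNReal.toReal_mul, ENNReal.toReal_mul, ENNReal.toReal_ofReal hp1,
        ENNReal.toReal_ofReal hp2] at this
    have h1 := amgm hn l hl
    set p := ∏ i, l i
    set q := ∏ i, (1 - l i)
    have h2 : p ^ ((1:ℝ)/n) * m = q ^ ((1:ℝ)/n) * k := by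
      rw [hm, hk, ← Real.mul_rpow hp1 hc0.le, ← Real.mul_rpow hp2 ha0.le, hz']
    have h3 : p ^ ((1:ℝ)/n) * (k + m) ≤ k := by
      calc p ^ ((1:ℝ)/n) * (k + m) = (p ^ ((1:ℝ)/n) + q ^ ((1:ℝ)/n)) * k := by
            rw [mul_add, h2]; ring
        _ ≤ 1 * k := by gcongr
        _ = k := one_mul k
    have h4 : p ^ ((1:ℝ)/n) ≤ k / (k + m) := by rwa [le_div_iff₀ (by positivity)]
    calc p = (p ^ ((1:ℝ)/n)) ^ n := by
          rw [one_div]; exact (Real.rpow_inv_natCast_pow hp1 hn.ne').symm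
      _ ≤ (k / (k + m)) ^ n := by gcongr
      _ = a / (k + m) ^ n := by rw [div_pow, hkn]
  have h1 := lintegral_mono_ae hle
  rw [hZi, lintegral_const, Measure.restrict_apply_univ] at h1
  have h2 : ENNReal.ofReal a ≤ ENNReal.ofReal (a / (k + m) ^ n) * ENNReal.ofReal (volume.real (K + C)) := by
    rw [ha, ofReal_measureReal hKt, ofReal_measureReal hWt]
    exact h1.trans (by gcongr)
  rw [← ENNReal.ofReal_mul (by positivity), ENNReal.ofReal_le_ofReal_iff (by positivity)] at h2
  rw [div_mul_eq_mul_div, le_div_iff₀ (by positivity)] at h2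
  exact le_of_mul_le_mul_left h2 ha0

theorem deficit {n : ℕ} (hn : 0 < n) {K C : Set (Eu n)} (hK : IsCompact K) (hK0 : volume K ≠ 0)
    (hC : IsCompact C) (hKC : volume K = volume C) (hKconv : Convex ℝ K) :
    ∃ S : Eu n → Eu n, LipschitzWith 3 S ∧ (∀ z, z + S z ∈ (2:ℝ) • K) ∧
      (∫ z in K + C, ‖fderiv ℝ S z‖) ^ 2 ≤
        2 * volume.real (K + C) * (volume.real (K + C) - 2 ^ n * volume.real K) := by
  have hC0 : volume C ≠ 0 := hKC ▸ hK0
  obtain ⟨P, hP1, hPK, hPd, Z, hZs, hZm, hZd, hZi, hZe⟩ := transport hK hK0 hC hC0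
  have hKt : volume K ≠ ⊤ := hK.measure_lt_top.ne
  have hWt : volume (K + C) ≠ ⊤ := (hK.add hC).measure_lt_top.ne
  have hWm : MeasurableSet (K + C) := (hK.add hC).measurableSet
  set W := K + C with hW
  have hW0 : 0 < volume.real W := by
    have h1 := bm_s10 hn hK hK0 hC hC0
    have ha0 : 0 < volume.real K := ENNReal.toReal_pos hK0 hKt
    have : 0 < volume.real K ^ ((1:ℝ)/n) := Real.rpow_pos_of_pos ha0 _
    have h2 : 0 ≤ volume.real C ^ ((1:ℝ)/n) := by positivity
    exact lt_of_lt_of_le (by positivity) h1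
  set S : Eu n → Eu n := fun z => (2:ℝ) • P z - z with hS
  have hSL : LipschitzWith 3 S := by
    refine LipschitzWith.of_dist_le_mul fun z z' => ?_
    have h1 := hP1.dist_le_mul z z'
    rw [dist_eq_norm, dist_eq_norm] at *
    have h2 : S z - S z' = (2:ℝ) • (P z - P z') - (z - z') := by
      simp only [hS, smul_sub]; abel
    rw [h2]
    refine (norm_sub_le _ _).trans ?_
    rw [norm_smul]; norm_num at h1 ⊢; linarith
  have hDS : ∀ z, DifferentiableAt ℝ P z →
      fderiv ℝ S z = (2:ℝ) • fderiv ℝ P z - ContinuousLinearMap.id ℝ (Eu n) := fun z hz =>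
    ((hz.hasFDerivAt.const_smul (2:ℝ)).sub (hasFDerivAt_id z)).fderiv
  have hDSle : ∀ z, DifferentiableAt ℝ P z → ‖fderiv ℝ S z‖ ≤ 1 := by
    intro z hz
    obtain ⟨hs, hmz⟩ := hPd z hz
    obtain ⟨l, hl, -, -, j, hj⟩ := spec hn _ hs hmz
    rw [hDS z hz]
    refine hj.trans ?_
    rw [abs_le]; constructor <;> linarith [(hl j).1, (hl j).2]
  have hSm : Measurable (fun z => ‖fderiv ℝ S z‖) := (measurable_fderiv ℝ S).norm
  have hSae : ∀ᵐ z : Eu n, ‖fderiv ℝ S z‖ ≤ 1 := by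
    filter_upwards [hP1.ae_differentiableAt] with z hz using hDSle z hz
  have iZ : IsFiniteMeasure (volume.restrict Z) :=
    ⟨by rw [Measure.restrict_apply_univ]; exact (measure_mono hZs).trans_lt hWt.lt_top⟩
  have iW : IsFiniteMeasure (volume.restrict W) :=
    ⟨by rw [Measure.restrict_apply_univ]; exact hWt.lt_top⟩
  have hi1 : IntegrableOn (fun z => ‖fderiv ℝ S z‖) W :=
    Integrable.of_bound hSm.aestronglyMeasurable 1 (by
      filter_upwards [ae_restrict_of_ae hSae] with z hz
      rwa [norm_norm])
  have hi2 : IntegrableOn (fun z => ‖fderiv ℝ S z‖ ^ 2) W :=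
    Integrable.of_bound (hSm.pow_const 2).aestronglyMeasurable 1 (by
      filter_upwards [ae_restrict_of_ae hSae] with z hz
      rw [norm_pow, norm_norm]
      exact pow_le_one₀ (norm_nonneg _) hz)
  -- on Z
  have hdm : Measurable (fun z => |(fderiv ℝ P z).det|) :=
    measurable_abs.comp (ContinuousLinearMap.continuous_det.measurable.comp (measurable_fderiv ℝ P))
  have hptw : ∀ᵐ z ∂(volume.restrict Z), 2 ^ n * |(fderiv ℝ P z).det| ≤
      1 - ‖fderiv ℝ S z‖ ^ 2 / 2 := by
    filter_upwards [hZe, ae_restrict_mem hZm] with z hz hzZ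
    obtain ⟨hs, hmz⟩ := hPd z (hZd z hzZ)
    obtain ⟨l, hl, hd1, hd2, j, hj⟩ := spec hn _ hs hmz
    rw [← hKC, ENNReal.mul_left_inj hK0 hKt] at hz
    have hp1 : 0 ≤ ∏ i, l i := Finset.prod_nonneg fun i _ => (hl i).1
    have hp2 : 0 ≤ ∏ i, (1 - l i) := Finset.prod_nonneg fun i _ => by linarith [(hl i).2]
    rw [hd1, hd2, abs_of_nonneg hp1, abs_of_nonneg hp2,
      ENNReal.ofReal_eq_ofReal_iff hp1 hp2] at hz
    rw [hd1, abs_of_nonneg hp1, hDS z (hZd z hzZ)]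
    set s := ‖(2:ℝ) • fderiv ℝ P z - ContinuousLinearMap.id ℝ (Eu n)‖
    have hs0 : 0 ≤ s := norm_nonneg _
    have h1 : (2 ^ n * ∏ i, l i) ^ 2 = ∏ i, (1 - (2 * l i - 1) ^ 2) := by
      have : (2 ^ n * ∏ i, l i) ^ 2 = (∏ i : Fin n, (4:ℝ)) * ((∏ i, l i) * (∏ i, (1 - l i))) := by
        rw [← hz, Finset.prod_const, Finset.card_univ, Fintype.card_fin, mul_pow, ← pow_mul,
          mul_comm n 2, pow_mul]; norm_num; ring
      rw [this, ← Finset.prod_mul_distrib, ← Finset.prod_mul_distrib]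
      exact Finset.prod_congr rfl fun i _ => by ring
    have h01 : ∀ i, 0 ≤ 1 - (2 * l i - 1) ^ 2 ∧ 1 - (2 * l i - 1) ^ 2 ≤ 1 := fun i =>
      ⟨by nlinarith [(hl i).1, (hl i).2], by nlinarith [sq_nonneg (2 * l i - 1)]⟩
    have h2 : ∏ i, (1 - (2 * l i - 1) ^ 2) ≤ 1 - (2 * l j - 1) ^ 2 := by
      rw [← Finset.mul_prod_erase _ _ (Finset.mem_univ j)]
      exact mul_le_of_le_one_right (h01 j).1
        (Finset.prod_le_one (fun i _ => (h01 i).1) (fun i _ => (h01 i).2))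
    have h3 : s ^ 2 ≤ (2 * l j - 1) ^ 2 := by rw [← sq_abs (2 * l j - 1)]; gcongr
    have h4 : s ≤ 1 := hj.trans (by rw [abs_le]; constructor <;> linarith [(hl j).1, (hl j).2])
    have h5 : (2 ^ n * ∏ i, l i) ^ 2 ≤ (1 - s ^ 2 / 2) ^ 2 := by nlinarith [sq_nonneg (s ^ 2)]
    exact (sq_le_sq₀ (by positivity) (by nlinarith)).1 h5
  have hdi : Integrable (fun z => |(fderiv ℝ P z).det|) (volume.restrict Z) :=
    Integrable.of_bound hdm.aestronglyMeasurable 1 (by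
      filter_upwards [hptw] with z hz
      rw [Real.norm_eq_abs, abs_abs]
      have h1 : (1:ℝ) ≤ 2 ^ n := one_le_pow₀ (by norm_num)
      nlinarith [abs_nonneg (fderiv ℝ P z).det, sq_nonneg ‖fderiv ℝ S z‖])
  have hV : ∫ z in Z, |(fderiv ℝ P z).det| = volume.real K := by
    rw [integral_eq_lintegral_of_nonneg_ae (Eventually.of_forall fun z => abs_nonneg _)
      hdm.aestronglyMeasurable, hZi]; rfl
  have hi2Z : Integrable (fun z => ‖fderiv ℝ S z‖ ^ 2) (volume.restrict Z) := hi2.mono_set hZs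
  have hmain := integral_mono_ae (hdi.const_mul (2 ^ n))
    ((integrable_const (1:ℝ)).sub (hi2Z.div_const 2)) hptw
  rw [integral_const_mul, hV] at hmain
  simp only [Pi.sub_apply] at hmain
  rw [integral_sub (integrable_const (1:ℝ)) (hi2Z.div_const 2), integral_div] at hmain
  simp only [integral_const, smul_eq_mul, mul_one, measureReal_restrict_apply_univ] at hmain
  have hZW : volume.real Z ≤ volume.real W := measureReal_mono hZs hWt
  have hWZ : ∫ z in W \ Z, ‖fderiv ℝ S z‖ ^ 2 ≤ volume.real W - volume.real Z := by
    have h1 : ∫ z in W \ Z, ‖fderiv ℝ S z‖ ^ 2 ≤ ∫ z in W \ Z, (1:ℝ) := by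
      refine integral_mono_ae (hi2.mono_set sdiff_subset) ?_ ?_
      · exact integrableOn_const (measure_ne_top_of_subset sdiff_subset hWt)
      · filter_upwards [ae_restrict_of_ae hSae] with z hz
        exact pow_le_one₀ (norm_nonneg _) hz
    rw [setIntegral_const, smul_eq_mul, mul_one, measureReal_sdiff hZs hZm] at h1
    exact h1
  have hsum : ∫ z in W, ‖fderiv ℝ S z‖ ^ 2 =
      (∫ z in Z, ‖fderiv ℝ S z‖ ^ 2) + ∫ z in W \ Z, ‖fderiv ℝ S z‖ ^ 2 := by
    rw [← integral_inter_add_sdiff hZm hi2, inter_eq_self_of_subset_right hZs]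
  have hI : ∫ z in W, ‖fderiv ℝ S z‖ ^ 2 ≤ 2 * (volume.real W - 2 ^ n * volume.real K) := by
    linarith
  refine ⟨S, hSL, ?_, ?_⟩
  · intro z
    refine ⟨P z, hPK hKconv z, ?_⟩
    simp [hS]
  · set J := ∫ z in W, ‖fderiv ℝ S z‖ with hJ
    set w := volume.real W with hw
    have hcs : 0 ≤ ∫ z in W, (‖fderiv ℝ S z‖ - J / w) ^ 2 :=
      integral_nonneg fun z => sq_nonneg _
    have he : ∀ z, (‖fderiv ℝ S z‖ - J / w) ^ 2 =
        ‖fderiv ℝ S z‖ ^ 2 - (2 * (J / w)) * ‖fderiv ℝ S z‖ + (J / w) ^ 2 := fun z => by ring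
    simp only [he] at hcs
    have hi3 : Integrable (fun z => 2 * (J / w) * ‖fderiv ℝ S z‖) (volume.restrict W) :=
      hi1.const_mul _
    have hi4 : Integrable (fun z => ‖fderiv ℝ S z‖ ^ 2 - 2 * (J / w) * ‖fderiv ℝ S z‖)
      (volume.restrict W) := hi2.sub hi3
    rw [integral_add hi4 (integrable_const _),
      integral_sub hi2 hi3, integral_const_mul, ← hJ] at hcs
    simp only [integral_const, smul_eq_mul, measureReal_restrict_apply_univ, ← hw] at hcs
    have h5 : 2 * (J / w) * J = 2 * (J ^ 2 / w) := by ring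
    have h6 : w * (J / w) ^ 2 = J ^ 2 / w := by field_simp
    rw [h5, h6] at hcs
    have h7 : J ^ 2 / w ≤ 2 * (w - 2 ^ n * volume.real K) := by linarith
    rw [div_le_iff₀ hW0] at h7
    linarith

lemma vol_smul {n : ℕ} {r : ℝ} (hr : 0 ≤ r) (s : Set (Eu n)) :
    volume.real (r • s) = r ^ n * volume.real s := by
  rw [measureReal_def, Measure.addHaar_smul, ENNReal.toReal_mul, ENNReal.toReal_ofReal (abs_nonneg _)]
  rw [abs_of_nonneg (by positivity)]
  simp [measureReal_def]

lemma vol_ne {n : ℕ} {s : Set (Eu n)} (hs : 0 < volume.real s) : volume s ≠ 0 := by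
  intro h; rw [measureReal_def, h] at hs; simp at hs

/-- BM in root form. -/
lemma bm_root {n : ℕ} (hn : 0 < n) {K C : Set (Eu n)} (hK : IsCompact K) (hK0 : 0 < volume.real K)
    (hC : IsCompact C) (hC0 : 0 < volume.real C) {a b : ℝ} (ha : 0 < a) (hb : 0 < b) :
    (a * volume.real K ^ ((1:ℝ)/n) + b * volume.real C ^ ((1:ℝ)/n)) ^ n
      ≤ volume.real (a • K + b • C) := by
  have e : ∀ (r : ℝ) (s : Set (Eu n)), 0 < r →
      volume.real (r • s) ^ ((1:ℝ)/n) = r * volume.real s ^ ((1:ℝ)/n) := by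
    intro r s hr
    rw [vol_smul hr.le, Real.mul_rpow (by positivity) (by positivity), one_div,
      Real.pow_rpow_inv_natCast hr.le hn.ne']
  have h := bm_s10 hn (hK.smul a) (vol_ne (by rw [vol_smul ha.le]; positivity)) (hC.smul b)
    (vol_ne (by rw [vol_smul hb.le]; positivity))
  rwa [e _ _ ha, e _ _ hb] at h

lemma level {n : ℕ} (hn : 0 < n) {W F : Set (Eu n)} (hW : IsCompact W) (hF : IsCompact F)
    (hFW : volume.real F ≤ volume.real W / 2) {ε : ℝ} (h0 : 0 < ε) (h1 : ε < 1) :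
    (1 + ε * Real.log 2) * volume.real F ≤ volume.real ((1 - ε) • F + ε • W) := by
  rcases (measureReal_nonneg (μ := volume) (s := F)).eq_or_lt with hF0 | hF0
  · rw [← hF0, mul_zero]; exact measureReal_nonneg
  have hW0 : 0 < volume.real W := by linarith
  have hb := bm_root hn hF hF0 hW hW0 (by linarith : 0 < 1 - ε) h0
  refine le_trans ?_ hb
  set x := volume.real F
  have hx : x ^ ((1:ℝ)/n) ^ (1:ℕ) = x ^ ((1:ℝ)/n) := by simp
  have h2 : x ^ ((1:ℝ)/n) * (1 + Real.log 2 / n) ≤ volume.real W ^ ((1:ℝ)/n) := by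
    calc x ^ ((1:ℝ)/n) * (1 + Real.log 2 / n) ≤ x ^ ((1:ℝ)/n) * 2 ^ ((1:ℝ)/n) := by
          gcongr
          rw [Real.rpow_def_of_pos (by norm_num : (0:ℝ) < 2)]
          have := Real.add_one_le_exp (Real.log 2 * (1 / n))
          calc 1 + Real.log 2 / n = Real.log 2 * (1 / n) + 1 := by ring
            _ ≤ _ := this
      _ = (x * 2) ^ ((1:ℝ)/n) := by rw [Real.mul_rpow hF0.le (by norm_num)]
      _ ≤ _ := by gcongr; linarith
  have h3 : x ^ ((1:ℝ)/n) * (1 + ε * (Real.log 2 / n)) ≤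
      (1 - ε) * x ^ ((1:ℝ)/n) + ε * volume.real W ^ ((1:ℝ)/n) := by nlinarith
  have hl : 0 < Real.log 2 := Real.log_pos (by norm_num)
  have hn' : (n:ℝ) ≠ 0 := by positivity
  calc (1 + ε * Real.log 2) * x = (1 + n * (ε * (Real.log 2 / n))) * x := by field_simp
    _ ≤ (1 + ε * (Real.log 2 / n)) ^ n * x := by
        gcongr
        exact one_add_mul_le_pow (by have : 0 ≤ ε * (Real.log 2 / n) := by positivity
                                     linarith) n
    _ = (x ^ ((1:ℝ)/n) * (1 + ε * (Real.log 2 / n))) ^ n := by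
        rw [mul_pow, one_div, Real.rpow_inv_natCast_pow hF0.le hn.ne']; ring
    _ ≤ _ := by gcongr

/-- local sup -/
def gs {n : ℕ} (f : Eu n → ℝ) (r : ℝ) (z : Eu n) : ℝ := ⨆ u : Metric.closedBall (0 : Eu n) r, f (z + u)

section gs
variable {n : ℕ} {f : Eu n → ℝ} {L : NNReal} 

lemma gs_bdd (hf : LipschitzWith L f) (r : ℝ) (z : Eu n) :
    BddAbove (range fun u : Metric.closedBall (0 : Eu n) r => f (z + u)) := by
  refine ⟨f z + L * r, ?_⟩
  rintro _ ⟨u, rfl⟩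
  have h1 := (abs_le.1 (hf.dist_le_mul (z + u) z)).2
  have h2 : ‖(u : Eu n)‖ ≤ r := mem_closedBall_zero_iff.1 u.2
  rw [dist_eq_norm, add_sub_cancel_left] at h1
  have : (L:ℝ) * ‖(u : Eu n)‖ ≤ L * r := by gcongr
  simp only; linarith

lemma le_gs (hf : LipschitzWith L f) {r : ℝ} {z u : Eu n} (hu : ‖u‖ ≤ r) : f (z + u) ≤ gs f r z :=
  le_ciSup (gs_bdd hf r z) (⟨u, by simpa using hu⟩ : Metric.closedBall (0 : Eu n) r)

lemma gs_le {r : ℝ} (hr : 0 ≤ r) {z : Eu n} {a : ℝ} (h : ∀ u : Eu n, ‖u‖ ≤ r → f (z + u) ≤ a) :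
    gs f r z ≤ a := by
  have : Nonempty (Metric.closedBall (0 : Eu n) r) := ⟨⟨0, by simpa using hr⟩⟩
  exact ciSup_le fun u => h u (mem_closedBall_zero_iff.1 u.2)

lemma gs_lip (hf : LipschitzWith L f) {r : ℝ} (hr : 0 ≤ r) : LipschitzWith L (gs f r) := by
  refine LipschitzWith.of_le_add_mul L fun z z' => ?_
  refine gs_le hr fun u hu => ?_
  have h1 := le_gs hf (z := z') hu
  have h2 := (abs_le.1 (hf.dist_le_mul (z + u) (z' + u))).2
  rw [dist_add_right] at h2
  linarith

lemma gs_ge (hf : LipschitzWith L f) {r : ℝ} (hr : 0 ≤ r) (z : Eu n) : f z ≤ gs f r z := by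
  have := le_gs hf (z := z) (u := 0) (r := r) (by simpa using hr)
  simpa using this

lemma gs_sub_le (hf : LipschitzWith L f) {r : ℝ} (hr : 0 ≤ r) (z : Eu n) : gs f r z - f z ≤ L * r := by
  have : gs f r z ≤ f z + L * r := gs_le hr fun u hu => by
    have h1 := (abs_le.1 (hf.dist_le_mul (z + u) z)).2
    rw [dist_eq_norm, add_sub_cancel_left] at h1
    have : (L:ℝ) * ‖(u : Eu n)‖ ≤ L * r := by gcongr
    linarith
  linarith
end gs

lemma integrableOn_cont {n : ℕ} {W : Set (Eu n)} (hW : IsCompact W) {f : Eu n → ℝ}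
    (hf : Continuous f) : IntegrableOn f W := hf.continuousOn.integrableOn_compact hW

/-- layer-cake step -/
lemma layer {n : ℕ} (hn : 0 < n) {W : Set (Eu n)} (hW : IsCompact W) (hWc : Convex ℝ W)
    {d : ℝ} (hd0 : 0 < d) (hd : ∀ x ∈ W, ∀ y ∈ W, ‖x - y‖ ≤ d)
    {f : Eu n → ℝ} {L : NNReal} (hf : LipschitzWith L f) {m : ℝ}
    (hm : ∀ s > m, volume.real (W ∩ {x | s ≤ f x}) ≤ volume.real W / 2)
    {ε : ℝ} (h0 : 0 < ε) (h1 : ε < 1) :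
    ε * Real.log 2 * ∫ z in W, max (f z - m) 0 ≤ ∫ z in W, (gs f (ε * d) z - f z) := by
  set g := gs f (ε * d) with hg
  have hr : 0 ≤ ε * d := by positivity
  have hgc : Continuous g := (gs_lip hf hr).continuous
  have hfc : Continuous f := hf.continuous
  have hWm := hW.measurableSet
  have hWt : volume W ≠ ⊤ := hW.measure_lt_top.ne
  have hfi : IntegrableOn (fun z => max (f z - m) 0) W := integrableOn_cont hW (by fun_prop)
  have hgi : IntegrableOn (fun z => max (g z - m) 0) W := integrableOn_cont hW (by fun_prop)
  have hl2 : 0 < Real.log 2 := Real.log_pos (by norm_num)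
  have pf : 0 ≤ᵐ[volume.restrict W] fun z => max (f z - m) 0 :=
    Eventually.of_forall fun z => le_max_right (f z - m) 0
  have pg : 0 ≤ᵐ[volume.restrict W] fun z => max (g z - m) 0 :=
    Eventually.of_forall fun z => le_max_right (g z - m) 0
  have key : ENNReal.ofReal (1 + ε * Real.log 2) * ∫⁻ z in W, ENNReal.ofReal (max (f z - m) 0) ≤
      ∫⁻ z in W, ENNReal.ofReal (max (g z - m) 0) := by
    rw [lintegral_eq_lintegral_meas_le _ pf
        hfi.aemeasurable,
      lintegral_eq_lintegral_meas_le _ pg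
        hgi.aemeasurable, ← lintegral_const_mul' _ _ ENNReal.ofReal_ne_top]
    refine setLIntegral_mono' measurableSet_Ioi fun t ht => ?_
    have ht : 0 < t := ht
    have e : ∀ (h : Eu n → ℝ), Continuous h →
        (volume.restrict W) {a | t ≤ max (h a - m) 0} = volume (W ∩ {x | m + t ≤ h x}) := by
      intro h hh
      have hs : {a | t ≤ max (h a - m) 0} = {x | m + t ≤ h x} := by
        ext a
        simp only [mem_ofPred_eq, le_max_iff]
        constructor
        · rintro (h | h) <;> linarith
        · intro h; left; linarith
      rw [hs, Measure.restrict_apply' hWm, inter_comm]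
    rw [e f hfc, e g hgc]
    have hFc : IsCompact (W ∩ {x | m + t ≤ f x}) :=
      hW.inter_right (isClosed_le continuous_const hfc)
    have h2 := level hn hW hFc (hm (m + t) (by linarith)) h0 h1
    have h3 : (1 - ε) • (W ∩ {x | m + t ≤ f x}) + ε • W ⊆ W ∩ {x | m + t ≤ g x} := by
      rintro _ ⟨_, ⟨x, ⟨hx, hxf⟩, rfl⟩, _, ⟨w, hw, rfl⟩, rfl⟩
      refine ⟨hWc hx hw (by linarith) h0.le (by ring), ?_⟩
      simp only [mem_ofPred_eq] at hxf ⊢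
      refine hxf.trans ?_
      have h4 := le_gs hf (z := (1 - ε) • x + ε • w) (u := ε • (x - w)) (r := ε * d) (by
        rw [norm_smul, Real.norm_eq_abs, abs_of_pos h0]
        gcongr; exact hd x hx w hw)
      have h5 : (1 - ε) • x + ε • w + ε • (x - w) = x := by
        rw [sub_smul, smul_sub, one_smul]; abel
      rwa [h5] at h4
    have ht1 : volume (W ∩ {x | m + t ≤ g x}) ≠ ⊤ := measure_ne_top_of_subset inter_subset_left hWt
    have ht2 : volume (W ∩ {x | m + t ≤ f x}) ≠ ⊤ := measure_ne_top_of_subset inter_subset_left hWt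
    rw [← ofReal_measureReal ht1, ← ofReal_measureReal ht2, ← ENNReal.ofReal_mul (by positivity)]
    exact ENNReal.ofReal_le_ofReal (h2.trans (measureReal_mono h3 ht1))
  have key2 : (1 + ε * Real.log 2) * ∫ z in W, max (f z - m) 0 ≤ ∫ z in W, max (g z - m) 0 := by
    have a1 := ofReal_integral_eq_lintegral_ofReal hfi pf
    have a2 := ofReal_integral_eq_lintegral_ofReal hgi pg
    rw [← a1, ← a2, ← ENNReal.ofReal_mul (by positivity),
      ENNReal.ofReal_le_ofReal_iff (integral_nonneg fun z => le_max_right (g z - m) 0)] at key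
    exact key
  have key3 : ∫ z in W, (max (g z - m) 0 - max (f z - m) 0) ≤ ∫ z in W, (g z - f z) := by
    refine integral_mono (hgi.sub hfi) (integrableOn_cont hW (by fun_prop)) fun z => ?_
    have := gs_ge hf hr z
    have h5 : g z = gs f (ε * d) z := rfl
    simp only
    rcases le_total (f z - m) 0 with h | h
    · rw [max_eq_right h]
      rcases le_total (g z - m) 0 with h' | h'
      · rw [max_eq_right h']; linarith
      · rw [max_eq_left h']; linarith
    · rw [max_eq_left h, max_eq_left (by linarith)]; linarith
  rw [integral_sub hgi hfi] at key3
  linarith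

lemma limit_gs {n : ℕ} {W : Set (Eu n)} (hW : IsCompact W)
    {d : ℝ} (hd0 : 0 < d) {f : Eu n → ℝ} {L : NNReal} (hf : LipschitzWith L f) {c : ℝ}
    (hc : ∀ ε : ℝ, 0 < ε → ε < 1 → ε * c ≤ ∫ z in W, (gs f (ε * d) z - f z)) :
    c ≤ d * ∫ z in W, ‖fderiv ℝ f z‖ := by
  set e : ℕ → ℝ := fun k => 1 / ((k:ℝ) + 2) with he
  have he0 : ∀ k, 0 < e k := fun k => by simp only [he]; positivity
  have he1 : ∀ k, e k < 1 := fun k => by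
    simp only [he]; rw [div_lt_one (by positivity)]; have : (0:ℝ) ≤ k := by positivity
    linarith
  have hel : Tendsto e atTop (𝓝 0) := by
    have := (tendsto_add_atTop_iff_nat 1).2 (tendsto_one_div_add_atTop_nhds_zero_nat (𝕜 := ℝ))
    refine this.congr fun k => ?_
    simp only [he]; push_cast; congr 1; ring
  have iW : IsFiniteMeasure (volume.restrict W) :=
    ⟨by rw [Measure.restrict_apply_univ]; exact hW.measure_lt_top⟩
  have hfm : Measurable (fun z => ‖fderiv ℝ f z‖) := (measurable_fderiv ℝ f).norm
  have hfL : ∀ z, ‖fderiv ℝ f z‖ ≤ L := fun z => norm_fderiv_le_of_lipschitz ℝ hf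
  set F : ℕ → Eu n → ℝ := fun k z => max ((gs f (e k * d) z - f z) / e k) (d * ‖fderiv ℝ f z‖) with hF
  have hgm : ∀ k, Measurable (fun z => (gs f (e k * d) z - f z) / e k) := fun k =>
    (((gs_lip hf (by have := he0 k; positivity)).continuous.sub hf.continuous).div_const _).measurable
  have hFm : ∀ k, Measurable (F k) := fun k => (hgm k).max (hfm.const_mul d)
  have hup : ∀ k z, (gs f (e k * d) z - f z) / e k ≤ L * d := fun k z => by
    have h1 := gs_sub_le hf (r := e k * d) (by have := he0 k; positivity) z
    rw [div_le_iff₀ (he0 k)]; linarith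
  have hFb : ∀ k z, ‖F k z‖ ≤ L * d := by
    intro k z
    have h1 : 0 ≤ F k z := le_max_of_le_right (by positivity)
    rw [Real.norm_eq_abs, abs_of_nonneg h1]
    refine max_le (hup k z) ?_
    rw [mul_comm]; gcongr; exact hfL z
  have hFi : ∀ k, Integrable (F k) (volume.restrict W) := fun k =>
    Integrable.of_bound (hFm k).aestronglyMeasurable (L * d) (Eventually.of_forall (hFb k))
  have hlim : Tendsto (fun k => ∫ z in W, F k z) atTop (𝓝 (∫ z in W, d * ‖fderiv ℝ f z‖)) := by
    refine tendsto_integral_of_dominated_convergence (fun _ => L * d)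
      (fun k => (hFm k).aestronglyMeasurable) (integrable_const _)
      (fun k => Eventually.of_forall (hFb k)) ?_
    filter_upwards [ae_restrict_of_ae hf.ae_differentiableAt] with z hz
    have hlo : ∀ k, d * ‖fderiv ℝ f z‖ ≤ F k z := fun k => le_max_right _ _
    rw [Metric.tendsto_atTop]
    intro η hη
    have hd := hz.hasFDerivAt.isLittleO
    have hd2 := hasFDerivAt_iff_isLittleO_nhds_zero.1 hz.hasFDerivAt
    have hd3 := hd2.def (c := η / (2 * d)) (by positivity)
    rw [Metric.eventually_nhds_iff] at hd3
    obtain ⟨δ, hδ, hd3⟩ := hd3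
    have hk := (hel.mul_const d).eventually (gt_mem_nhds (by simpa using hδ : 0 * d < δ))
    obtain ⟨N, hN⟩ := eventually_atTop.1 hk
    refine ⟨N, fun k hkN => ?_⟩
    rw [Real.dist_eq, abs_of_nonneg (sub_nonneg.2 (hlo k))]
    have hg : gs f (e k * d) z ≤ f z + e k * (d * ‖fderiv ℝ f z‖ + η / 2) := by
      refine gs_le (by have := he0 k; positivity) fun u hu => ?_
      have h1 := hd3 (y := u) (by rw [dist_zero_right]; exact hu.trans_lt (hN k hkN))
      rw [Real.norm_eq_abs] at h1
      have h2 := (abs_le.1 h1).2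
      have h3 : fderiv ℝ f z u ≤ ‖fderiv ℝ f z‖ * ‖u‖ :=
        (le_abs_self _).trans ((fderiv ℝ f z).le_opNorm u)
      have h4 : (‖fderiv ℝ f z‖ + η / (2 * d)) * ‖u‖ ≤ (‖fderiv ℝ f z‖ + η / (2 * d)) * (e k * d) := by
        gcongr
      have h5 : (‖fderiv ℝ f z‖ + η / (2 * d)) * (e k * d) = e k * (d * ‖fderiv ℝ f z‖ + η / 2) := by
        field_simp
      linarith
    have h6 : F k z ≤ d * ‖fderiv ℝ f z‖ + η / 2 := by
      refine max_le ?_ (by linarith)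
      rw [div_le_iff₀ (he0 k)]; linarith
    linarith
  have hge : ∀ k, c ≤ ∫ z in W, F k z := by
    intro k
    have h1 := hc (e k) (he0 k) (he1 k)
    have h2 : c ≤ ∫ z in W, (gs f (e k * d) z - f z) / e k := by
      rw [integral_div, le_div_iff₀ (he0 k)]; linarith
    refine h2.trans (integral_mono ?_ (hFi k) fun z => le_max_left _ _)
    exact integrableOn_cont hW ((((gs_lip hf (by have := he0 k; positivity)).continuous.sub
      hf.continuous)).div_const _)
  have := ge_of_tendsto' hlim hge
  rwa [integral_const_mul] at this

lemma half_poincare {n : ℕ} (hn : 0 < n) {W : Set (Eu n)} (hW : IsCompact W) (hWc : Convex ℝ W)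
    {d : ℝ} (hd0 : 0 < d) (hd : ∀ x ∈ W, ∀ y ∈ W, ‖x - y‖ ≤ d)
    {f : Eu n → ℝ} {L : NNReal} (hf : LipschitzWith L f) {m : ℝ}
    (hm : ∀ s > m, volume.real (W ∩ {x | s ≤ f x}) ≤ volume.real W / 2) :
    Real.log 2 * ∫ z in W, max (f z - m) 0 ≤ d * ∫ z in W, ‖fderiv ℝ f z‖ := by
  refine limit_gs hW hd0 hf fun ε h0 h1 => ?_
  rw [← mul_assoc]
  exact layer hn hW hWc hd0 hd hf hm h0 h1

theorem poincare {n : ℕ} (hn : 0 < n) {W : Set (Eu n)} (hW : IsCompact W) (hWc : Convex ℝ W)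
    (hW0 : 0 < volume.real W)
    {d : ℝ} (hd0 : 0 < d) (hd : ∀ x ∈ W, ∀ y ∈ W, ‖x - y‖ ≤ d)
    {f : Eu n → ℝ} {L : NNReal} (hf : LipschitzWith L f) :
    ∃ m : ℝ, ∫ z in W, |f z - m| ≤ 3 * d * ∫ z in W, ‖fderiv ℝ f z‖ := by
  set V := volume.real W
  have hWt : volume W ≠ ⊤ := hW.measure_lt_top.ne
  obtain ⟨B, hB⟩ := hW.exists_bound_of_continuousOn hf.continuous.continuousOn
  set A : Set ℝ := {s | volume.real (W ∩ {x | s < f x}) ≤ V / 2} with hA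
  have hAne : A.Nonempty := by
    refine ⟨B, ?_⟩
    have : W ∩ {x | B < f x} = ∅ := by
      ext x
      simp only [mem_inter_iff, mem_ofPred_eq, mem_empty_iff_false, iff_false, not_and, not_lt]
      intro hx; exact (le_abs_self _).trans (hB x hx)
    rw [hA, mem_ofPred_eq, this]; simp; positivity
  have hAb : BddBelow A := by
    refine ⟨-B - 1, fun s hs => ?_⟩
    by_contra hlt
    push Not at hlt
    have : W ∩ {x | s < f x} = W := by
      refine inter_eq_left.2 fun x hx => ?_
      have := (abs_le.1 (hB x hx)).1
      rw [mem_ofPred_eq]; linarith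
    rw [hA, mem_ofPred_eq, this] at hs
    change V ≤ V / 2 at hs
    linarith
  set m := sInf A with hm
  have h1 : ∀ s > m, volume.real (W ∩ {x | s ≤ f x}) ≤ V / 2 := by
    intro s hs
    obtain ⟨s', hs', hlt⟩ := exists_lt_of_csInf_lt hAne hs
    refine le_trans (measureReal_mono ?_ (measure_ne_top_of_subset inter_subset_left hWt)) hs'
    exact inter_subset_inter_right _ fun x (hx : s ≤ f x) => lt_of_lt_of_le hlt hx
  have h2 : ∀ s > -m, volume.real (W ∩ {x | s ≤ (fun z => - f z) x}) ≤ V / 2 := by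
    intro s hs
    have hnot : -s ∉ A := fun h => by
      have := csInf_le hAb h
      linarith
    rw [hA, mem_ofPred_eq, not_le] at hnot
    have e : W ∩ {x | s ≤ (fun z => - f z) x} = W \ (W ∩ {x | -s < f x}) := by
      ext x
      simp only [mem_inter_iff, mem_ofPred_eq, Set.mem_sdiff, not_and, not_lt]
      constructor
      · rintro ⟨a, b⟩; exact ⟨a, fun _ => by linarith⟩
      · rintro ⟨a, b⟩; exact ⟨a, by linarith [b a]⟩
    have hmeas : MeasurableSet (W ∩ {x | -s < f x}) :=
      hW.measurableSet.inter (isOpen_lt continuous_const hf.continuous).measurableSet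
    rw [e, measureReal_sdiff inter_subset_left hmeas hWt]
    change V - _ ≤ _
    linarith
  have p1 := half_poincare hn hW hWc hd0 hd hf h1
  have p2 := half_poincare hn hW hWc hd0 hd hf.neg h2
  have e3 : ∀ z, ‖fderiv ℝ (-f) z‖ = ‖fderiv ℝ f z‖ := fun z => by
    rw [fderiv_neg, norm_neg]
  have e4 : (∫ z in W, |f z - m|) = (∫ z in W, max (f z - m) 0) + ∫ z in W, max ((-f) z - -m) 0 := by
    have c := hf.continuous
    rw [← integral_add (integrableOn_cont hW (by fun_prop)) (integrableOn_cont hW (by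
      have : Continuous (-f) := c.neg
      fun_prop))]
    refine integral_congr_ae (Eventually.of_forall fun z => ?_)
    simp only [Pi.neg_apply]
    rcases le_total (f z - m) 0 with h | h
    · rw [abs_of_nonpos h, max_eq_right h, max_eq_left (by linarith)]; ring
    · rw [abs_of_nonneg h, max_eq_left h, max_eq_right (by linarith)]; ring
  refine ⟨m, ?_⟩
  simp only [e3] at p2
  set I := ∫ z in W, ‖fderiv ℝ f z‖
  have hI : 0 ≤ d * I := mul_nonneg hd0.le (integral_nonneg fun z => norm_nonneg _)
  have h5 : Real.log 2 * ∫ z in W, |f z - m| ≤ 2 * (d * I) := by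
    rw [e4, mul_add]; linarith
  have h6 := Real.log_two_gt_d9
  have h7 : 0 ≤ ∫ z in W, |f z - m| := integral_nonneg fun z => abs_nonneg _
  by_contra hcon
  push Not at hcon
  nlinarith

lemma norm_le_sum_abs {n : ℕ} (x : Eu n) : ‖x‖ ≤ ∑ i, |x i| := by
  rw [EuclideanSpace.norm_eq]
  refine Real.sqrt_le_iff.2 ⟨Finset.sum_nonneg fun i _ => abs_nonneg _, ?_⟩
  simp only [Real.norm_eq_abs]
  exact Finset.sum_sq_le_sq_sum_of_nonneg fun i _ => abs_nonneg _

lemma abs_coord_le {n : ℕ} (x : Eu n) (i : Fin n) : |x i| ≤ ‖x‖ := by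
  have := PiLp.norm_apply_le x i
  simpa using this

theorem poincare_vec {n : ℕ} (hn : 0 < n) {W : Set (Eu n)} (hW : IsCompact W) (hWc : Convex ℝ W)
    (hW0 : 0 < volume.real W)
    {d : ℝ} (hd0 : 0 < d) (hd : ∀ x ∈ W, ∀ y ∈ W, ‖x - y‖ ≤ d)
    {S : Eu n → Eu n} {L : NNReal} (hS : LipschitzWith L S) :
    ∃ c : Eu n, ∫ z in W, ‖S z - c‖ ≤ 3 * n * d * ∫ z in W, ‖fderiv ℝ S z‖ := by
  have hLi : ∀ i, LipschitzWith L (fun z => S z i) := fun i =>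
    LipschitzWith.of_dist_le_mul fun x y => by
      refine le_trans ?_ (hS.dist_le_mul x y)
      rw [Real.dist_eq, dist_eq_norm]
      exact abs_coord_le (S x - S y) i
  choose m hm using fun i => poincare hn hW hWc hW0 hd0 hd (hLi i)
  have iW : IsFiniteMeasure (volume.restrict W) :=
    ⟨by rw [Measure.restrict_apply_univ]; exact hW.measure_lt_top⟩
  have hfi : ∀ {F : Type} [NormedAddCommGroup F] [NormedSpace ℝ F] [CompleteSpace F]
      {g : Eu n → F}, LipschitzWith L g →
      Integrable (fun z => ‖fderiv ℝ g z‖) (volume.restrict W) := by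
    intro F _ _ _ g hg
    letI : MeasurableSpace F := borel F
    haveI : BorelSpace F := ⟨rfl⟩
    refine Integrable.of_bound (measurable_fderiv ℝ g).norm.aestronglyMeasurable L
      (Eventually.of_forall fun z => ?_)
    rw [norm_norm]; exact norm_fderiv_le_of_lipschitz ℝ hg
  refine ⟨WithLp.toLp 2 m, ?_⟩
  have hSc := hS.continuous
  have hci : ∀ i, Continuous fun z => S z i := fun i => (hLi i).continuous
  calc ∫ z in W, ‖S z - WithLp.toLp 2 m‖ ≤ ∫ z in W, ∑ i, |S z i - m i| := by
        refine integral_mono (integrableOn_cont hW (by fun_prop)) (integrableOn_cont hW (by fun_prop))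
          fun z => ?_
        exact norm_le_sum_abs _
    _ = ∑ i, ∫ z in W, |S z i - m i| :=
        integral_finsetSum _ fun i _ => (integrableOn_cont hW (by fun_prop))
    _ ≤ ∑ i : Fin n, 3 * d * ∫ z in W, ‖fderiv ℝ S z‖ := by
        refine Finset.sum_le_sum fun i _ => (hm i).trans ?_
        refine mul_le_mul_of_nonneg_left ?_ (by positivity)
        refine integral_mono_ae (hfi (hLi i)) (hfi hS) ?_
        filter_upwards [ae_restrict_of_ae hS.ae_differentiableAt] with z hz
        have h1 : HasFDerivAt (fun z => S z i)
            ((EuclideanSpace.proj (𝕜 := ℝ) i).comp (fderiv ℝ S z)) z :=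
          (EuclideanSpace.proj (𝕜 := ℝ) i).hasFDerivAt.comp z hz.hasFDerivAt
        rw [h1.fderiv]
        refine ContinuousLinearMap.opNorm_le_bound _ (norm_nonneg _) fun v => ?_
        exact (abs_coord_le _ i).trans ((fderiv ℝ S z).le_opNorm v)
    _ = _ := by simp; ring

lemma aff {n : ℕ} {W : Set (Eu n)} (hW : IsCompact W) {g : Eu n → ℝ} (hg : Continuous g)
    (hg0 : ∀ w ∈ W, 0 ≤ g w) {l : ℝ} (hl : 0 < l) (a : Eu n) (ha : ∀ w ∈ W, l • w + a ∈ W) :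
    l ^ n * ∫ w in W, g (l • w + a) ≤ ∫ w in W, g w := by
  have h1 := integral_image_eq_integral_abs_det_fderiv_smul (volume : Measure (Eu n))
    (s := W) (f := fun w => l • w + a) (f' := fun _ => l • ContinuousLinearMap.id ℝ (Eu n))
    hW.measurableSet (fun x _ => (((hasFDerivAt_id x).const_smul l).add_const a).hasFDerivWithinAt)
    (by
      intro x _ y _ hxy
      have : l • x = l • y := by simpa using hxy
      exact smul_right_injective _ hl.ne' this) g
  have hdet : (l • ContinuousLinearMap.id ℝ (Eu n)).det = l ^ n := by
    have : ((l • ContinuousLinearMap.id ℝ (Eu n) : Eu n →L[ℝ] Eu n) : Eu n →ₗ[ℝ] Eu n)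
      = l • LinearMap.id := rfl
    rw [ContinuousLinearMap.det, this, LinearMap.det_smul]; simp
  simp only [hdet, abs_of_pos (pow_pos hl n), smul_eq_mul] at h1
  rw [integral_const_mul] at h1
  rw [← h1]
  refine setIntegral_mono_set (integrableOn_cont hW hg) ?_ ?_
  · exact (ae_restrict_iff' hW.measurableSet).2 (Eventually.of_forall hg0)
  · refine Eventually.of_forall ?_
    rintro _ ⟨w, hw, rfl⟩
    exact ha w hw

lemma abs_moment {n : ℕ} (hn : 0 < n) {W : Set (Eu n)} (hW : IsCompact W) (hWc : Convex ℝ W)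
    (u : Eu n) {ω : ℝ} {x y : Eu n} (hx : x ∈ W) (hy : y ∈ W) (hxy : ω ≤ inner ℝ u (x - y)) :
    ω / (8 * n) * volume.real W ≤ ∫ w in W, |inner ℝ u w| := by
  have hn1 : (1:ℝ) ≤ n := by exact_mod_cast hn
  set t : ℝ := 1 / (2 * n) with ht
  have ht0 : 0 < t := by positivity
  have ht1 : t ≤ 1 / 2 := by
    rw [ht, div_le_div_iff₀ (by positivity) (by norm_num)]; linarith
  have hb : 1 / 2 ≤ (1 - t) ^ n := by
    have := one_add_mul_le_pow (a := -t) (by linarith) n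
    have h2 : (n:ℝ) * t = 1 / 2 := by rw [ht]; field_simp
    rw [sub_eq_add_neg]; linarith
  have hc : Continuous fun w : Eu n => |inner ℝ u w| := by fun_prop
  have ax := aff hW hc (fun w _ => abs_nonneg _) (by linarith : 0 < 1 - t) (t • x)
    (fun w hw => hWc hw hx (by linarith) ht0.le (by ring))
  have ay := aff hW hc (fun w _ => abs_nonneg _) (by linarith : 0 < 1 - t) (t • y)
    (fun w hw => hWc hw hy (by linarith) ht0.le (by ring))
  have hsum : t * ω * volume.real W ≤ (∫ w in W, |inner ℝ u ((1 - t) • w + t • x)|) +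
      ∫ w in W, |inner ℝ u ((1 - t) • w + t • y)| := by
    rw [← integral_add (integrableOn_cont hW (by fun_prop)) (integrableOn_cont hW (by fun_prop))]
    have : t * ω * volume.real W = ∫ w in W, t * ω := by
      rw [setIntegral_const, smul_eq_mul, mul_comm]
    rw [this]
    refine integral_mono (integrableOn_cont hW (by fun_prop)) (integrableOn_cont hW (by fun_prop))
      fun w => ?_
    simp only
    have h1 : t * inner ℝ u (x - y) = inner ℝ u ((1 - t) • w + t • x) -
        inner ℝ u ((1 - t) • w + t • y) := by
      simp only [inner_sub_right, inner_add_right, inner_smul_right]; ring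
    have h2 : t * ω ≤ t * inner ℝ u (x - y) := by gcongr
    have h3 := le_abs_self (inner ℝ u ((1 - t) • w + t • x))
    have h4 := neg_abs_le (inner ℝ u ((1 - t) • w + t • y))
    linarith
  set I := ∫ w in W, |inner ℝ u w|
  set Ix := ∫ w in W, |inner ℝ u ((1 - t) • w + t • x)|
  set Iy := ∫ w in W, |inner ℝ u ((1 - t) • w + t • y)|
  have pI : 0 ≤ Ix + Iy := add_nonneg (integral_nonneg fun _ => abs_nonneg _)
    (integral_nonneg fun _ => abs_nonneg _)
  have h5 : 1 / 2 * (Ix + Iy) ≤ 2 * I := by nlinarith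
  have h6 : ω / (8 * n) * volume.real W = 1 / 4 * (t * ω * volume.real W) := by
    rw [ht]; field_simp; ring
  linarith

lemma inner_ball {n : ℕ} (hn : 0 < n) {W : Set (Eu n)} (hW : IsCompact W) (hWc : Convex ℝ W)
    (hW0 : 0 < volume.real W) (hbary : ∀ u : Eu n, ∫ w in W, inner ℝ u w = (0:ℝ)) {ω : ℝ}
    (hω : ∀ u : Eu n, ‖u‖ = 1 → ∃ x ∈ W, ∃ y ∈ W, ω ≤ inner ℝ u (x - y))
    {K : Set (Eu n)} (hK : IsClosed K) (hKc : Convex ℝ K) {T : Eu n → Eu n} (hT : Continuous T)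
    (hTK : ∀ z, z + T z ∈ K) (hTi : ∫ z in W, ‖T z‖ ≤ ω / (32 * n) * volume.real W) :
    Metric.ball 0 (ω / (32 * n)) ⊆ K := by
  intro x hx
  by_contra hxK
  obtain ⟨f, s, h1, h2⟩ := geometric_hahn_banach_closed_point hKc hK hxK
  set v := (InnerProductSpace.toDual ℝ (Eu n)).symm f with hv
  have hvf : ∀ y, f y = inner ℝ v y := fun y => by
    rw [hv, InnerProductSpace.toDual_symm_apply]
  have hv0 : v ≠ 0 := by
    intro h0
    have a1 := h1 _ (hTK 0)
    rw [hvf, h0, inner_zero_left] at a1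
    rw [hvf, h0, inner_zero_left] at h2
    linarith
  have hvn : 0 < ‖v‖ := norm_pos_iff.2 hv0
  set u := ‖v‖⁻¹ • v with hu
  have hun : ‖u‖ = 1 := by rw [hu, norm_smul, norm_inv, norm_norm, inv_mul_cancel₀ hvn.ne']
  have huv : ∀ y, inner ℝ u y = ‖v‖⁻¹ * inner ℝ v y := fun y => by
    rw [hu, real_inner_smul_left]
  set β := (inner ℝ u x : ℝ) with hβ
  have hβ1 : β < ω / (32 * n) := by
    have := real_inner_le_norm u x
    rw [hun, one_mul] at this
    exact this.trans_lt (by simpa using hx)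
  have hKβ : ∀ k ∈ K, inner ℝ u k ≤ β := by
    intro k hk
    have a1 := h1 k hk
    rw [hvf] at a1 h2
    rw [hβ, huv, huv]
    gcongr; linarith
  obtain ⟨p, hp, q, hq, hpq⟩ := hω u hun
  have hm := abs_moment hn hW hWc u hp hq hpq
  have hpt : ∀ z, (|inner ℝ u z| + inner ℝ u z) / 2 - max β 0 ≤ ‖T z‖ := by
    intro z
    have a1 := hKβ _ (hTK z)
    rw [inner_add_right] at a1
    have a2 := real_inner_le_norm u (-T z)
    rw [hun, one_mul, norm_neg, inner_neg_right] at a2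
    have a3 := norm_nonneg (T z)
    have a4 := le_max_left β 0
    have a5 := le_max_right β 0
    rcases le_total (inner ℝ u z) (0:ℝ) with h | h
    · rw [abs_of_nonpos h]; linarith
    · rw [abs_of_nonneg h]; linarith
  have hint : ∫ z in W, ((|inner ℝ u z| + inner ℝ u z) / 2 - max β 0) ≤ ∫ z in W, ‖T z‖ :=
    integral_mono (integrableOn_cont hW (by fun_prop)) (integrableOn_cont hW (by fun_prop)) hpt
  rw [integral_sub (integrableOn_cont hW (by fun_prop)) (integrableOn_cont hW (by fun_prop)),
    integral_div, integral_add (integrableOn_cont hW (by fun_prop))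
      (integrableOn_cont hW (by fun_prop)), hbary, setIntegral_const, smul_eq_mul] at hint
  have hωpos : 0 < ω / (32 * n) := by
    have : ‖x‖ < ω / (32 * n) := by simpa using hx
    exact (norm_nonneg x).trans_lt this
  have hmax : max β 0 < ω / (32 * n) := max_lt hβ1 hωpos
  have e1 : ω / (8 * n) = 4 * (ω / (32 * n)) := by field_simp; ring
  rw [e1] at hm
  nlinarith

lemma trace_step {n : ℕ} {W : Set (Eu n)} (hW : IsCompact W) (hWc : Convex ℝ W)
    (h0W : (0 : Eu n) ∈ W) {K : Set (Eu n)} (hKc : Convex ℝ K) {r : ℝ} (hr : 0 < r)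
    (hball : Metric.ball 0 r ⊆ K) {T : Eu n → Eu n} (hTc : Continuous T) (hTK : ∀ z, z + T z ∈ K)
    {ε : ℝ} (h0 : 0 < ε) (h1 : ε < 1) :
    r * volume.real (W ∩ {x | 1 < (1 - ε) * gauge K x}) ≤
      n * (∫ z in W, ‖T z‖) + ∫ z in W, ‖T z - T ((1 - ε) • z)‖ / ε := by
  have hKn : K ∈ 𝓝 (0 : Eu n) := Filter.mem_of_superset (Metric.ball_mem_nhds 0 hr) hball
  have hpc : Continuous (gauge K) := continuous_gauge hKc hKn
  have habs : Absorbent ℝ K := absorbent_nhds_zero hKn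
  set l := 1 - ε with hl
  have hl0 : 0 < l := by linarith
  set e : Eu n → ℝ := fun z => max (gauge K z - 1) 0 with he
  have hec : Continuous e := by fun_prop
  have hq : ∀ z, 0 ≤ ‖T z‖ - r * e z := by
    intro z
    have a1 : gauge K z ≤ gauge K (z + T z) + gauge K (-T z) := by
      have := gauge_add_le hKc habs (z + T z) (-T z)
      simpa using this
    have a2 := gauge_le_one_of_mem (hTK z)
    have a3 := mul_gauge_le_norm (x := -T z) hball
    rw [norm_neg] at a3
    have a4 : r * e z = max (r * (gauge K z - 1)) 0 := by
      rw [he]; simp only; rw [mul_max_of_nonneg _ _ hr.le, mul_zero]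
    rw [a4, sub_nonneg]
    refine max_le ?_ (norm_nonneg _)
    refine le_trans ?_ a3
    gcongr; linarith
  have hA := aff hW (g := fun z => ‖T z‖ - r * e z) (by fun_prop) (fun z _ => hq z) hl0 0
    (fun w hw => by
      rw [add_zero]
      have := hWc hw h0W hl0.le h0.le (by rw [hl]; ring)
      simpa using this)
  simp only [add_zero] at hA
  have hTl : Continuous fun z => T (l • z) := hTc.comp (by fun_prop)
  have hel : Continuous fun z => e (l • z) := hec.comp (by fun_prop)
  have i1 : IntegrableOn (fun z => ‖T z‖) W := integrableOn_cont hW (by fun_prop)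
  have i2 : IntegrableOn (fun z => ‖T (l • z)‖) W := integrableOn_cont hW (by fun_prop)
  have i3 : IntegrableOn (fun z => r * e z) W := integrableOn_cont hW (by fun_prop)
  have i4 : IntegrableOn (fun z => r * e (l • z)) W := integrableOn_cont hW (by fun_prop)
  rw [integral_sub i1 i3, integral_sub i2 i4, integral_const_mul, integral_const_mul] at hA
  set I1 := ∫ z in W, ‖T z‖
  set I2 := ∫ z in W, ‖T (l • z)‖
  set I3 := ∫ z in W, e z
  set I4 := ∫ z in W, e (l • z)
  have pI4 : 0 ≤ I4 := integral_nonneg fun z => le_max_right _ _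
  have pI1 : 0 ≤ I1 := integral_nonneg fun z => norm_nonneg _
  have hln : l ^ n ≤ 1 := pow_le_one₀ hl0.le (by linarith)
  have hln0 : 0 < l ^ n := by positivity
  have hbern : 1 - n * ε ≤ l ^ n := by
    have := one_add_mul_le_pow (a := -ε) (by linarith) n
    rw [hl, sub_eq_add_neg 1 ε]; linarith
  -- difference of e
  set D := W ∩ {x | 1 < l * gauge K x} with hD
  have hDm : MeasurableSet D := hW.measurableSet.inter
    (isOpen_lt continuous_const (by fun_prop)).measurableSet
  have hDI : ε * volume.real D ≤ I3 - I4 := by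
    have e1 : I3 - I4 = ∫ z in W, (e z - e (l • z)) :=
      (integral_sub (integrableOn_cont hW hec) (integrableOn_cont hW hel)).symm
    have e2 : ε * volume.real D = ∫ z in W, D.indicator (fun _ => ε) z := by
      rw [setIntegral_indicator hDm, inter_eq_right.2 inter_subset_left, setIntegral_const,
        smul_eq_mul, mul_comm]
    rw [e1, e2]
    refine integral_mono ?_ ((integrableOn_cont hW hec).sub (integrableOn_cont hW hel)) fun z => ?_
    · exact (integrableOn_cont hW (continuous_const (y := ε))).indicator hDm
    · have g0 : 0 ≤ gauge K z := gauge_nonneg z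
      have g1 : gauge K (l • z) = l * gauge K z := by
        rw [gauge_smul_of_nonneg hl0.le, smul_eq_mul]
      have g2 : l * gauge K z ≤ gauge K z := by nlinarith
      simp only [he, g1]
      by_cases hz : z ∈ D
      · rw [indicator_of_mem hz]
        have hz2 : 1 < l * gauge K z := hz.2
        rw [max_eq_left (by linarith), max_eq_left (by linarith)]
        have : (1 - l) * gauge K z = ε * gauge K z := by rw [hl]; ring
        nlinarith
      · rw [indicator_of_notMem hz, sub_nonneg]
        exact max_le_max (by linarith) le_rfl
  have hdiff : I1 - I2 ≤ ∫ z in W, ‖T z - T (l • z)‖ := by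
    rw [← integral_sub i1 i2]
    refine integral_mono (i1.sub i2) (integrableOn_cont hW (by fun_prop)) fun z => ?_
    exact norm_sub_norm_le _ _
  set I5 := ∫ z in W, ‖T z - T (l • z)‖
  have pI5 : 0 ≤ I5 := integral_nonneg fun z => norm_nonneg _
  have hfin : ε * (r * volume.real D) ≤ ε * (n * I1) + I5 := by
    have b1 : r * (ε * volume.real D) ≤ r * (I3 - I4) := by gcongr
    have b2 : l ^ n * (r * I4) ≤ r * I4 := by
      have : 0 ≤ r * I4 := by positivity
      nlinarith
    have b3 : l ^ n * (I1 - I2) ≤ I5 := by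
      have : l ^ n * (I1 - I2) ≤ l ^ n * I5 := by gcongr
      nlinarith
    have b4 : (1 - l ^ n) * I1 ≤ n * ε * I1 := by
      gcongr; linarith
    nlinarith
  rw [integral_div]
  have : n * I1 + I5 / ε = (ε * (n * I1) + I5) / ε := by field_simp
  rw [this, le_div_iff₀ h0]; linarith

theorem trace {n : ℕ} {W : Set (Eu n)} (hW : IsCompact W) (hWc : Convex ℝ W)
    (h0W : (0 : Eu n) ∈ W) {d : ℝ} (hd0 : 0 ≤ d) (hd : ∀ x ∈ W, ‖x‖ ≤ d)
    {K : Set (Eu n)} (hKcl : IsClosed K) (hKc : Convex ℝ K) {r : ℝ} (hr : 0 < r)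
    (hball : Metric.ball 0 r ⊆ K) {T : Eu n → Eu n} {L : NNReal} (hT : LipschitzWith L T)
    (hTK : ∀ z, z + T z ∈ K) :
    r * volume.real (W \ K) ≤ n * (∫ z in W, ‖T z‖) + d * ∫ z in W, ‖fderiv ℝ T z‖ := by
  have hKn : K ∈ 𝓝 (0 : Eu n) := Filter.mem_of_superset (Metric.ball_mem_nhds 0 hr) hball
  have hpc : Continuous (gauge K) := continuous_gauge hKc hKn
  have hTc := hT.continuous
  have hWt : volume W ≠ ⊤ := hW.measure_lt_top.ne
  set e : ℕ → ℝ := fun k => 1 / ((k:ℝ) + 2) with he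
  have he0 : ∀ k, 0 < e k := fun k => by simp only [he]; positivity
  have he1 : ∀ k, e k < 1 := fun k => by
    simp only [he]; rw [div_lt_one (by positivity)]; have : (0:ℝ) ≤ k := by positivity
    linarith
  have hea : Antitone e := fun a b hab => by
    simp only [he]; gcongr
  have hel : Tendsto e atTop (𝓝 0) := by
    have := (tendsto_add_atTop_iff_nat 1).2 (tendsto_one_div_add_atTop_nhds_zero_nat (𝕜 := ℝ))
    refine this.congr fun k => ?_
    simp only [he]; push_cast; congr 1; ring
  have iW : IsFiniteMeasure (volume.restrict W) :=
    ⟨by rw [Measure.restrict_apply_univ]; exact hW.measure_lt_top⟩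
  set D : ℕ → Set (Eu n) := fun k => W ∩ {x | 1 < (1 - e k) * gauge K x} with hD
  have hDmono : Monotone D := by
    intro a b hab x hx
    refine ⟨hx.1, ?_⟩
    have h1 : 1 < (1 - e a) * gauge K x := hx.2
    have h2 := hea hab
    have h3 : 0 ≤ gauge K x := gauge_nonneg x
    rw [mem_ofPred_eq]; nlinarith
  have hDU : ⋃ k, D k = W \ K := by
    ext x
    simp only [mem_iUnion, Set.mem_sdiff]
    constructor
    · rintro ⟨k, hx, hx2⟩
      refine ⟨hx, fun hxK => ?_⟩
      have h1 := gauge_le_one_of_mem hxK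
      have h2 : 1 < (1 - e k) * gauge K x := hx2
      have h3 := he0 k
      have h4 : 0 ≤ gauge K x := gauge_nonneg x
      nlinarith
    · rintro ⟨hx, hxK⟩
      have h1 : 1 < gauge K x := by
        by_contra hcon
        push Not at hcon
        rw [gauge_le_one_iff_mem_closure hKc hKn, hKcl.closure_eq] at hcon
        exact hxK hcon
      have h2 : Tendsto (fun k => (1 - e k) * gauge K x) atTop (𝓝 ((1 - 0) * gauge K x)) :=
        (hel.const_sub 1).mul_const _
      have h3 := h2.eventually (lt_mem_nhds (by simpa using h1 : 1 < (1 - 0) * gauge K x))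
      obtain ⟨k, hk⟩ := h3.exists
      exact ⟨k, hx, hk⟩
  have hlim1 : Tendsto (fun k => volume.real (D k)) atTop (𝓝 (volume.real (W \ K))) := by
    have h1 := tendsto_measure_iUnion_atTop (μ := (volume : Measure (Eu n))) hDmono
    rw [hDU] at h1
    exact (ENNReal.tendsto_toReal (measure_ne_top_of_subset sdiff_subset hWt)).comp h1
  have hfb : ∀ k, ∀ z ∈ W, ‖T z - T ((1 - e k) • z)‖ / e k ≤ L * d := by
    intro k z hz
    rw [div_le_iff₀ (he0 k)]
    have h1 := hT.dist_le_mul z ((1 - e k) • z)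
    rw [dist_eq_norm, dist_eq_norm] at h1
    have h2 : z - (1 - e k) • z = e k • z := by rw [sub_smul, one_smul]; abel
    rw [h2, norm_smul, Real.norm_eq_abs, abs_of_pos (he0 k)] at h1
    refine h1.trans ?_
    have h3 := hd z hz
    calc (L:ℝ) * (e k * ‖z‖) ≤ L * (e k * d) := by have := he0 k; gcongr
      _ = _ := by ring
  have hlim2 : Tendsto (fun k => ∫ z in W, ‖T z - T ((1 - e k) • z)‖ / e k) atTop
      (𝓝 (∫ z in W, ‖fderiv ℝ T z z‖)) := by
    refine tendsto_integral_of_dominated_convergence (fun _ => L * d) (fun k => ?_)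
      (integrable_const _) (fun k => ?_) ?_
    · have : Continuous fun z => ‖T z - T ((1 - e k) • z)‖ / e k :=
        ((hTc.sub (hTc.comp (continuous_const_smul _))).norm.div_const _)
      exact this.aestronglyMeasurable
    · refine (ae_restrict_iff' hW.measurableSet).2 (Eventually.of_forall fun z hz => ?_)
      rw [Real.norm_eq_abs, abs_of_nonneg (by have := he0 k; positivity)]
      exact hfb k z hz
    · filter_upwards [ae_restrict_of_ae hT.ae_differentiableAt] with z hz
      have h1 : HasDerivAt (fun s : ℝ => z - s • z) (-((1:ℝ) • z)) 0 :=
        ((hasDerivAt_id (0:ℝ)).smul_const z).const_sub z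
      have hz' : HasFDerivAt T (fderiv ℝ T z) (z - (0:ℝ) • z) := by
        simpa using hz.hasFDerivAt
      have h2 := hz'.comp_hasDerivAt (0:ℝ) h1
      have h3 := (hasDerivAt_iff_tendsto_slope_zero.1 h2)
      have h4 : Tendsto e atTop (𝓝[≠] 0) :=
        tendsto_nhdsWithin_iff.2 ⟨hel, Eventually.of_forall fun k => (he0 k).ne'⟩
      have h5 := (h3.comp h4).norm
      have e1 : ‖fderiv ℝ T z (-((1:ℝ) • z))‖ = ‖fderiv ℝ T z z‖ := by simp
      rw [e1] at h5
      refine h5.congr fun k => ?_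
      simp only [Function.comp_apply, zero_add, zero_smul, sub_zero]
      rw [norm_smul, norm_inv, Real.norm_eq_abs, abs_of_pos (he0 k), norm_sub_rev, sub_smul, one_smul,
        div_eq_inv_mul]
  have hle := le_of_tendsto_of_tendsto' (hlim1.const_mul r) (hlim2.const_add (n * ∫ z in W, ‖T z‖))
    (fun k => trace_step hW hWc h0W hKc hr hball hTc hTK (he0 k) (he1 k))
  refine hle.trans ?_
  gcongr
  rw [← integral_const_mul]
  have hfm : Measurable (fun z => ‖fderiv ℝ T z‖) := (measurable_fderiv ℝ T).norm
  have hfi : Integrable (fun z => d * ‖fderiv ℝ T z‖) (volume.restrict W) := by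
    refine Integrable.const_mul ?_ d
    refine Integrable.of_bound hfm.aestronglyMeasurable L (Eventually.of_forall fun z => ?_)
    rw [norm_norm]; exact norm_fderiv_le_of_lipschitz ℝ hT
  refine integral_mono_of_nonneg (Eventually.of_forall fun z => norm_nonneg _) hfi ?_
  refine (ae_restrict_iff' hW.measurableSet).2 (Eventually.of_forall fun z hz => ?_)
  refine ((fderiv ℝ T z).le_opNorm z).trans ?_
  rw [mul_comm]; exact mul_le_mul_of_nonneg_right (hd z hz) (norm_nonneg _)

lemma vol_sum_pos {n : ℕ} (hn : 0 < n) {K C : Set (Eu n)} (hK : IsCompact K) (hK0 : 0 < volume.real K)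
    (hC : IsCompact C) (hC0 : 0 < volume.real C) : 0 < volume.real (K + C) := by
  have := bm_s10 hn hK (vol_ne hK0) hC (vol_ne hC0)
  refine lt_of_lt_of_le ?_ this
  positivity

lemma one_side0 {n : ℕ} (hn : 2 ≤ n) {K C : Set (Eu n)} (hK : IsCompact K) (hKc : Convex ℝ K)
    (hK0 : 0 < volume.real K) (hC : IsCompact C) (hCc : Convex ℝ C)
    (hKC : volume K = volume C) (hbary : ∫ w in K + C, w = 0)
    (hd : ∀ x ∈ K + C, ∀ y ∈ K + C, ‖x - y‖ ≤ √n)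
    (hω : ∀ u : Eu n, ‖u‖ = 1 → ∃ x ∈ K + C, ∃ y ∈ K + C, 1 / √n ≤ inner ℝ u (x - y))
    {δ : ℝ} (hδ0 : 0 ≤ δ)
    (hδ2 : 2 * volume.real (K + C) * (volume.real (K + C) - 2 ^ n * volume.real K) ≤ δ ^ 2)
    (hδ : 96 * n ^ 3 * δ ≤ volume.real (K + C)) :
    ∃ c : Eu n, volume.real ((K + C) \ ({c} + (2:ℝ) • K)) ≤ 104 * n ^ 4 * δ := by
  have hn0 : 0 < n := by lia
  have hC0 : 0 < volume.real C := by rw [measureReal_def, ← hKC]; exact hK0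
  have hW : IsCompact (K + C) := hK.add hC
  have hWc : Convex ℝ (K + C) := hKc.add hCc
  have hW0 : 0 < volume.real (K + C) := vol_sum_pos hn0 hK hK0 hC hC0
  obtain ⟨S, hS, hSK, hJ⟩ := deficit hn0 hK (vol_ne hK0) hC hKC hKc
  generalize K + C = W at *
  set J := ∫ z in W, ‖fderiv ℝ S z‖ with hJdef
  have hJ0 : 0 ≤ J := integral_nonneg fun z => norm_nonneg _
  have hJδ : J ≤ δ := abs_le_of_sq_le_sq' (hJ.trans hδ2) hδ0 |>.2
  have hnr : (2:ℝ) ≤ n := by exact_mod_cast hn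
  have hsn : 0 < √(n:ℝ) := Real.sqrt_pos.2 (by linarith)
  have hss : √(n:ℝ) * √(n:ℝ) = n := Real.mul_self_sqrt (by linarith)
  obtain ⟨c, hc⟩ := poincare_vec hn0 hW hWc hW0 hsn hd hS
  have hint : IntegrableOn (fun w : Eu n => w) W := continuous_id.continuousOn.integrableOn_compact hW
  have hbary2 : ∀ u : Eu n, ∫ w in W, inner ℝ u w = (0:ℝ) := by
    intro u
    rw [integral_inner hint, hbary, inner_zero_right]
  have h0W : (0 : Eu n) ∈ W := by
    have h1 := hWc.set_average_mem (μ := volume) (t := W) (f := fun w : Eu n => w) hW.isClosed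
      (vol_ne hW0) hW.measure_lt_top.ne
      ((ae_restrict_iff' hW.measurableSet).2 (Eventually.of_forall fun z hz => hz)) hint
    rwa [setAverage_eq, hbary, smul_zero] at h1
  set T : Eu n → Eu n := fun z => S z - c with hT
  have hTL : LipschitzWith 3 T := by
    refine LipschitzWith.of_dist_le_mul fun x y => ?_
    simp only [hT, dist_sub_right]
    exact hS.dist_le_mul x y
  set K' : Set (Eu n) := {-c} + (2:ℝ) • K with hK'
  have hTK : ∀ z, z + T z ∈ K' := fun z => by
    refine ⟨-c, rfl, z + S z, hSK z, ?_⟩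
    simp only [hT]; abel
  have hK'cp : IsCompact K' := isCompact_singleton.add (hK.smul 2)
  have hK'c : Convex ℝ K' := (convex_singleton _).add (hKc.smul 2)
  have hfd : ∀ z, fderiv ℝ T z = fderiv ℝ S z := fun z => fderiv_sub_const c
  have hTi : ∫ z in W, ‖T z‖ ≤ 3 * n * √n * δ := hc.trans (by gcongr)
  have hr : (1 / √(n:ℝ)) / (32 * n) = 1 / (32 * n * √n) := by field_simp
  have hball := inner_ball hn0 hW hWc hW0 hbary2 hω hK'cp.isClosed hK'c hTL.continuous hTK (by
    refine hTi.trans ?_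
    rw [hr, one_div, ← div_eq_inv_mul, le_div_iff₀ (by positivity)]
    calc 3 * n * √(n:ℝ) * δ * (32 * n * √n) = 96 * n ^ 2 * (√(n:ℝ) * √n) * δ := by ring
      _ = 96 * n ^ 3 * δ := by rw [hss]; ring
      _ ≤ _ := hδ)
  have htr := trace hW hWc h0W hsn.le (fun x hx => by simpa using hd x hx 0 h0W) hK'cp.isClosed hK'c
    (by positivity) hball hTL hTK
  simp only [hfd] at htr
  refine ⟨-c, ?_⟩
  rw [hr, one_div, ← div_eq_inv_mul, div_le_iff₀ (by positivity)] at htr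
  refine htr.trans ?_
  calc (n * (∫ z in W, ‖T z‖) + √(n:ℝ) * J) * (32 * n * √n)
      ≤ (n * (3 * n * √n * δ) + √(n:ℝ) * δ) * (32 * n * √n) := by gcongr
    _ = (√(n:ℝ) * √n) * (96 * n ^ 3 + 32 * n) * δ := by ring
    _ = (96 * n ^ 4 + 32 * n ^ 2) * δ := by rw [hss]; ring
    _ ≤ 104 * n ^ 4 * δ := by
        gcongr
        have : (4:ℝ) ≤ n ^ 2 := by nlinarith
        nlinarith [sq_nonneg (n:ℝ)]

lemma mem_tr {n : ℕ} {a x : Eu n} {s : Set (Eu n)} : x ∈ {a} + s ↔ x - a ∈ s := by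
  rw [Set.singleton_add]
  constructor
  · rintro ⟨y, hy, rfl⟩; simpa using hy
  · intro h; exact ⟨x - a, h, by simp⟩

lemma vol_tr {n : ℕ} (a : Eu n) (s : Set (Eu n)) : volume.real ({a} + s) = volume.real s := by
  rw [Set.singleton_add, image_add_left, measureReal_def, measure_preimage_add, measureReal_def]

lemma vol_tr' {n : ℕ} (a : Eu n) (s : Set (Eu n)) : volume ({a} + s) = volume s := by
  rw [Set.singleton_add, image_add_left, measure_preimage_add]

lemma one_side {n : ℕ} (hn : 2 ≤ n) {K C : Set (Eu n)} (hK : IsCompact K) (hKc : Convex ℝ K)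
    (hK0 : 0 < volume.real K) (hC : IsCompact C) (hCc : Convex ℝ C)
    (hKC : volume K = volume C)
    (hd : ∀ x ∈ K + C, ∀ y ∈ K + C, ‖x - y‖ ≤ √n)
    (hω : ∀ u : Eu n, ‖u‖ = 1 → ∃ x ∈ K + C, ∃ y ∈ K + C, 1 / √n ≤ inner ℝ u (x - y))
    {δ : ℝ} (hδ0 : 0 ≤ δ)
    (hδ2 : 2 * volume.real (K + C) * (volume.real (K + C) - 2 ^ n * volume.real K) ≤ δ ^ 2)
    (hδ : 96 * n ^ 3 * δ ≤ volume.real (K + C)) :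
    ∃ c : Eu n, volume.real ((K + C) \ ({c} + (2:ℝ) • K)) ≤ 104 * n ^ 4 * δ := by
  have hn0 : 0 < n := by lia
  have hC0 : 0 < volume.real C := by rw [measureReal_def, ← hKC]; exact hK0
  have hW : IsCompact (K + C) := hK.add hC
  have hW0 : 0 < volume.real (K + C) := vol_sum_pos hn0 hK hK0 hC hC0
  set b : Eu n := (volume.real (K + C))⁻¹ • ∫ w in K + C, w with hb
  have hint : IntegrableOn (fun w : Eu n => w) (K + C) :=
    continuous_id.continuousOn.integrableOn_compact hW
  have e1 : {-b} + K + C = {-b} + (K + C) := add_assoc _ _ _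
  have hv1 : volume.real ({-b} + K + C) = volume.real (K + C) := by rw [e1, vol_tr]
  have hbary : ∫ w in {-b} + K + C, w = 0 := by
    rw [e1, Set.singleton_add]
    have hmp := (measurePreserving_add_left (volume : Measure (Eu n)) (-b)).setIntegral_image_emb
      (measurableEmbedding_addLeft (-b)) (fun w => w) (K + C)
    have hci : IntegrableOn (fun _ : Eu n => -b) (K + C) :=
      continuous_const.continuousOn.integrableOn_compact hW
    rw [hmp, integral_add hci hint, setIntegral_const, hb,
      smul_neg, smul_smul, mul_inv_cancel₀ hW0.ne', one_smul]
    simp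
  obtain ⟨c, hc⟩ := one_side0 hn (K := {-b} + K) (isCompact_singleton.add hK)
    ((convex_singleton _).add hKc) (by rw [vol_tr]; exact hK0) hC hCc (by rw [vol_tr']; exact hKC)
    hbary (by
      rw [e1]
      intro x hx y hy
      have := hd _ (mem_tr.1 hx) _ (mem_tr.1 hy)
      simpa using this) (by
      rw [e1]
      intro u hu
      obtain ⟨x, hx, y, hy, h⟩ := hω u hu
      exact ⟨x - b, mem_tr.2 (by simpa using hx), y - b, mem_tr.2 (by simpa using hy), by
        simpa using h⟩) hδ0 (by rw [hv1, vol_tr]; exact hδ2) (by rw [hv1]; exact hδ)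
  refine ⟨c - (2:ℝ) • b + b, ?_⟩
  rw [← vol_tr (-b)]
  refine le_of_eq_of_le ?_ hc
  congr 1
  ext x
  rw [e1]
  have : ∀ y : Eu n, y ∈ (2:ℝ) • ({-b} + K) ↔ y + (2:ℝ) • b ∈ (2:ℝ) • K := by
    intro y
    rw [mem_smul_set_iff_inv_smul_mem₀ two_ne_zero, mem_smul_set_iff_inv_smul_mem₀ two_ne_zero, mem_tr,
      smul_add, smul_smul]
    norm_num
  rw [mem_tr, Set.mem_sdiff, Set.mem_sdiff, mem_tr, mem_tr, mem_tr, this]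
  have e2 : x - -b - (c - (2:ℝ) • b + b) = x - c + (2:ℝ) • b := by abel
  rw [e2]

/-- Auerbach position -/
lemma auerbach {n : ℕ} {W : Set (Eu n)} (hW : IsCompact W) (hWi : (interior W).Nonempty) :
    ∃ g : Eu n ≃ₗ[ℝ] Eu n, (∀ x ∈ W, ∀ y ∈ W, ‖g x - g y‖ ≤ √n) ∧
      ∀ i, ∃ x ∈ W, ∃ y ∈ W, g x - g y = EuclideanSpace.single i 1 := by
  set e := (EuclideanSpace.basisFun (Fin n) ℝ).toBasis with he
  set D := W - W with hD
  have hDc : IsCompact D := by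
    rw [hD, sub_eq_add_neg]; exact hW.add hW.neg
  have hP : IsCompact (Set.pi univ fun _ : Fin n => D) := isCompact_univ_pi fun _ => hDc
  have hcont : Continuous fun v : Fin n → Eu n => |e.det v| := by
    have : Continuous fun v : Fin n → Eu n => e.det v := by
      have : (fun v : Fin n → Eu n => e.det v) = fun v => (Matrix.of fun i j => v j i).det := by
        funext v
        rw [Module.Basis.det_apply]
        congr 1
      rw [this]
      refine Continuous.matrix_det ?_
      refine continuous_matrix fun i j => ?_
      simp only [Matrix.of_apply]
      fun_prop
    exact this.abs
  obtain ⟨x0, hx0⟩ := hWi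
  obtain ⟨r, hr, hball⟩ := Metric.mem_nhds_iff.1 (mem_interior_iff_mem_nhds.1 hx0)
  have hx0W : x0 ∈ W := interior_subset hx0
  have hre : ∀ i, (r / 2) • e i ∈ D := by
    intro i
    refine ⟨x0 + (r / 2) • e i, hball ?_, x0, hx0W, by simp⟩
    rw [Metric.mem_ball, dist_eq_norm, add_sub_cancel_left, norm_smul, he]
    simp only [OrthonormalBasis.coe_toBasis, OrthonormalBasis.norm_eq_one, Real.norm_eq_abs, mul_one]
    rw [abs_of_pos (by positivity)]; linarith
  have hdet0 : 0 < |e.det fun i => (r / 2) • e i| := by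
    rw [AlternatingMap.map_smul_univ, Module.Basis.det_self]
    simp; exact fun h => absurd h hr.ne'
  obtain ⟨v, hv, hmax⟩ := hP.exists_isMaxOn ⟨_, fun i _ => hre i⟩ hcont.continuousOn
  have hvpos : 0 < |e.det v| := hdet0.trans_le (hmax (a := fun i => (r / 2) • e i) fun i _ => hre i)
  obtain ⟨hli, hsp⟩ := (Module.Basis.is_basis_iff_det e).2 (isUnit_iff_ne_zero.2 (abs_pos.1 hvpos))
  set b := Module.Basis.mk hli hsp.ge with hb
  set g := b.equiv e (Equiv.refl _) with hg
  have hgc : ∀ y i, (g y) i = b.coord i y := by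
    intro y i
    have : e.repr (g y) i = b.repr y i := by
      rw [hg]; simp [Module.Basis.equiv]
    rw [Module.Basis.coord_apply, ← this, he]; simp
  refine ⟨g, ?_, ?_⟩
  · intro x hx y hy
    rw [← map_sub]
    have hxy : x - y ∈ D := ⟨x, hx, y, hy, rfl⟩
    have hco : ∀ i, |b.coord i (x - y)| ≤ 1 := by
      intro i
      have h1 := congrArg (fun φ => φ (x - y)) (e.det_smul_mk_coord_eq_det_update hli hsp.ge i)
      simp only [LinearMap.smul_apply, smul_eq_mul, MultilinearMap.toLinearMap_apply] at h1
      have h2 := hmax (a := Function.update v i (x - y)) (by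
        intro j _
        by_cases hj : j = i
        · subst hj; simpa using hxy
        · simpa [Function.update_of_ne hj] using hv j trivial)
      have h3 : |e.det v| * |b.coord i (x - y)| ≤ |e.det v| := by
        rw [← abs_mul]
        refine le_trans (le_of_eq ?_) h2
        exact congrArg abs h1
      nlinarith
    rw [EuclideanSpace.norm_eq]
    refine Real.sqrt_le_sqrt ?_
    calc ∑ i, ‖(g (x - y)) i‖ ^ 2 ≤ ∑ i : Fin n, (1:ℝ) := by
          refine Finset.sum_le_sum fun i _ => ?_
          rw [hgc, Real.norm_eq_abs]
          exact pow_le_one₀ (abs_nonneg _) (hco i)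
      _ = n := by simp
  · intro i
    obtain ⟨x, hx, y, hy, hxy⟩ := hv i trivial
    refine ⟨x, hx, y, hy, ?_⟩
    rw [← map_sub]
    have : x - y = b i := by rw [hb, Module.Basis.mk_apply]; exact hxy
    rw [this, hg, Module.Basis.equiv_apply, he]; simp

lemma exists_coord {n : ℕ} (hn : 0 < n) {u : Eu n} (hu : ‖u‖ = 1) : ∃ i, 1 / √(n:ℝ) ≤ |u i| := by
  by_contra hcon
  push Not at hcon
  have h1 : ∑ i, (u i) ^ 2 = 1 := by
    have := EuclideanSpace.norm_sq_eq u
    rw [hu] at this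
    simpa using this.symm
  have hn' : (0:ℝ) < n := by exact_mod_cast hn
  have : Nonempty (Fin n) := ⟨⟨0, hn⟩⟩
  have h2 : ∑ i, (u i) ^ 2 < ∑ i : Fin n, 1 / (n:ℝ) := by
    refine Finset.sum_lt_sum_of_nonempty Finset.univ_nonempty fun i _ => ?_
    have h3 : (1 / √(n:ℝ)) ^ 2 = 1 / n := by rw [div_pow, Real.sq_sqrt hn'.le, one_pow]
    rw [← h3, ← sq_abs]
    exact pow_lt_pow_left₀ (hcon i) (abs_nonneg _) two_ne_zero
  rw [h1] at h2
  simp at h2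
  rw [mul_inv_cancel₀ hn'.ne'] at h2
  exact lt_irrefl _ h2

lemma sd_le_two {n : ℕ} {A B : Set (Eu n)} (hA : IsCompact A) (hB : IsCompact B) :
    volume.real (symmDiff A B) = volume.real A + volume.real B - 2 * volume.real (A ∩ B) := by
  have hAt : volume A ≠ ⊤ := hA.measure_lt_top.ne
  have hBt : volume B ≠ ⊤ := hB.measure_lt_top.ne
  have h1 : volume.real (symmDiff A B) = volume.real (A \ B) + volume.real (B \ A) := by
    change volume.real (A \ B ∪ B \ A) = _
    exact measureReal_union disjoint_sdiff_sdiff (hB.measurableSet.diff hA.measurableSet)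
      (measure_ne_top_of_subset sdiff_subset hAt) (measure_ne_top_of_subset sdiff_subset hBt)
  have h2 := measureReal_inter_add_sdiff (μ := volume) (s := A) hB.measurableSet hAt
  have h3 := measureReal_inter_add_sdiff (μ := volume) (s := B) hA.measurableSet hBt
  rw [inter_comm] at h3
  linarith

lemma bm_two {n : ℕ} (hn : 0 < n) {K C : Set (Eu n)} (hK : IsCompact K) (hK0 : 0 < volume.real K)
    (hC : IsCompact C) (hKC : volume K = volume C) :
    2 ^ n * volume.real K ≤ volume.real (K + C) := by
  have h := bm_s10 hn hK (vol_ne hK0) hC (by rw [← hKC]; exact vol_ne hK0)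
  have e : volume.real C = volume.real K := by rw [measureReal_def, ← hKC]; rfl
  rw [e, ← two_mul, mul_pow, one_div, Real.rpow_inv_natCast_pow hK0.le hn.ne'] at h
  exact h

lemma core_pos {n : ℕ} (hn : 2 ≤ n) {K C : Set (Eu n)} (hK : IsCompact K) (hKc : Convex ℝ K)
    (hK0 : 0 < volume.real K) (hC : IsCompact C) (hCc : Convex ℝ C)
    (hKC : volume K = volume C)
    (hd : ∀ x ∈ K + C, ∀ y ∈ K + C, ‖x - y‖ ≤ √n)
    (hω : ∀ u : Eu n, ‖u‖ = 1 → ∃ x ∈ K + C, ∃ y ∈ K + C, 1 / √n ≤ inner ℝ u (x - y)) :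
    ∃ x : Eu n, (volume.real (symmDiff K ({x} + C))) ^ 2 * 2 ^ n ≤
      360000 * n ^ 8 * volume.real K * (volume.real (K + C) - 2 ^ n * volume.real K) := by
  have hn0 : 0 < n := by lia
  have hnr : (2:ℝ) ≤ n := by exact_mod_cast hn
  have e : volume.real C = volume.real K := by rw [measureReal_def, ← hKC]; rfl
  have hbm := bm_two hn0 hK hK0 hC hKC
  set V := volume.real K with hV
  set w := volume.real (K + C) with hw
  set U := 2 ^ n * V with hU
  have hU0 : 0 < U := by positivity
  have hw0 : 0 < w := by linarith
  have hn6 : (64:ℝ) ≤ n ^ 6 := by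
    calc (64:ℝ) = 2 ^ 6 := by norm_num
      _ ≤ n ^ 6 := by gcongr
  have hn2 : (1:ℝ) ≤ n ^ 2 := by nlinarith
  have hn8 : (n:ℝ) ^ 8 = n ^ 6 * n ^ 2 := by ring
  set δ := √(2 * w * (w - U)) with hδ
  have hδ0 : 0 ≤ δ := Real.sqrt_nonneg _
  have hδ2 : δ ^ 2 = 2 * w * (w - U) := by
    rw [hδ, Real.sq_sqrt]; have : 0 ≤ w - U := by linarith
    positivity
  by_cases hcase : 96 * n ^ 3 * δ ≤ w
  · obtain ⟨c1, h1⟩ := one_side hn hK hKc hK0 hC hCc hKC hd hω hδ0 hδ2.ge hcase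
    rw [add_comm K C] at hd hω hw
    obtain ⟨c2, h2⟩ := one_side hn hC hCc (by rw [e]; exact hK0) hK hKc hKC.symm hd hω hδ0
      (by rw [← hw, e]; exact hδ2.ge) (by rw [← hw]; exact hcase)
    rw [add_comm C K] at h2 hw
    set A := {c1} + (2:ℝ) • K with hA
    set B := {c2} + (2:ℝ) • C with hB
    have hAc : IsCompact A := isCompact_singleton.add (hK.smul 2)
    have hBc : IsCompact B := isCompact_singleton.add (hC.smul 2)
    have hW : IsCompact (K + C) := hK.add hC
    have hWt : volume (K + C) ≠ ⊤ := hW.measure_lt_top.ne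
    have vA : volume.real A = U := by rw [hA, vol_tr, vol_smul (by norm_num)]
    have vB : volume.real B = U := by rw [hB, vol_tr, vol_smul (by norm_num), e]
    have hsub : K + C ⊆ (A ∩ B) ∪ ((K + C) \ A ∪ (K + C) \ B) := by
      intro z hz
      by_cases hzA : z ∈ A
      · by_cases hzB : z ∈ B
        · exact Or.inl ⟨hzA, hzB⟩
        · exact Or.inr (Or.inr ⟨hz, hzB⟩)
      · exact Or.inr (Or.inl ⟨hz, hzA⟩)
    have hm : w ≤ volume.real (A ∩ B) + (volume.real ((K + C) \ A) + volume.real ((K + C) \ B)) := by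
      refine (measureReal_mono hsub ?_).trans ((measureReal_union_le _ _).trans ?_)
      · refine (measure_union_lt_top ?_ (measure_union_lt_top ?_ ?_)).ne
        · exact (measure_ne_top_of_subset inter_subset_left hAc.measure_lt_top.ne).lt_top
        · exact (measure_ne_top_of_subset sdiff_subset hWt).lt_top
        · exact (measure_ne_top_of_subset sdiff_subset hWt).lt_top
      · gcongr; exact measureReal_union_le _ _
    have hsd := sd_le_two hAc hBc
    have hsd2 : volume.real (symmDiff A B) ≤ 416 * n ^ 4 * δ := by rw [hsd, vA, vB]; linarith
    set x : Eu n := (2:ℝ)⁻¹ • (c2 - c1) with hx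
    have hAB : symmDiff A B = {c1} + (2:ℝ) • (symmDiff K ({x} + C)) := by
      ext z
      rw [mem_tr, mem_smul_set_iff_inv_smul_mem₀ two_ne_zero, mem_symmDiff, mem_symmDiff, hA, hB,
        mem_tr, mem_tr, mem_tr, mem_smul_set_iff_inv_smul_mem₀ two_ne_zero,
        mem_smul_set_iff_inv_smul_mem₀ two_ne_zero]
      have : (2:ℝ)⁻¹ • (z - c1) - x = (2:ℝ)⁻¹ • (z - c2) := by
        rw [hx, ← smul_sub]; congr 1; abel
      rw [this]
    rw [hAB, vol_tr, vol_smul (by norm_num)] at hsd2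
    refine ⟨x, ?_⟩
    set a := volume.real (symmDiff K ({x} + C)) with ha
    have ha0 : 0 ≤ a := measureReal_nonneg
    have h5 : (2 ^ n * a) ^ 2 ≤ (416 * n ^ 4 * δ) ^ 2 := by gcongr
    have h6 : (96 * n ^ 3 * δ) ^ 2 ≤ w ^ 2 := by gcongr
    have h7 : (96 * n ^ 3 * δ) ^ 2 = 18432 * n ^ 6 * w * (w - U) := by
      rw [mul_pow, hδ2]; ring
    have h8 : (416 * n ^ 4 * δ) ^ 2 = 346112 * n ^ 8 * w * (w - U) := by
      rw [mul_pow, hδ2]; ring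
    rw [h7] at h6
    have h9 : 18432 * n ^ 6 * (w - U) ≤ w := by
      have : w * (18432 * n ^ 6 * (w - U)) ≤ w * w := by nlinarith
      exact le_of_mul_le_mul_left this hw0
    have h10 : w ≤ 1.04 * U := by nlinarith
    rw [h8] at h5
    have h11 : (a ^ 2 * 2 ^ n) * 2 ^ n ≤ (360000 * n ^ 8 * V * (w - U)) * 2 ^ n := by
      calc (a ^ 2 * 2 ^ n) * 2 ^ n = (2 ^ n * a) ^ 2 := by ring
        _ ≤ 346112 * n ^ 8 * w * (w - U) := h5
        _ ≤ 346112 * n ^ 8 * (1.04 * U) * (w - U) := by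
            have : 0 ≤ w - U := by linarith
            gcongr
        _ = (346112 * 1.04) * (n ^ 8 * U * (w - U)) := by ring
        _ ≤ 360000 * (n ^ 8 * U * (w - U)) := by
            have : 0 ≤ w - U := by linarith
            gcongr
            norm_num
        _ = _ := by rw [hU]; ring
    exact le_of_mul_le_mul_right h11 (by positivity)
  · push Not at hcase
    refine ⟨0, ?_⟩
    have h6 : w ^ 2 ≤ (96 * n ^ 3 * δ) ^ 2 := by gcongr
    have h7 : (96 * n ^ 3 * δ) ^ 2 = 18432 * n ^ 6 * w * (w - U) := by
      rw [mul_pow, hδ2]; ring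
    rw [h7] at h6
    have h9 : w ≤ 18432 * n ^ 6 * (w - U) := by
      have : w * w ≤ w * (18432 * n ^ 6 * (w - U)) := by nlinarith
      exact le_of_mul_le_mul_left this hw0
    have ha := sd_le_two hK (B := {0} + C) (isCompact_singleton.add hC)
    rw [vol_tr, e] at ha
    set a := volume.real (symmDiff K ({0} + C))
    have ha0 : 0 ≤ a := measureReal_nonneg
    have ha2 : a ≤ 2 * V := by
      have : 0 ≤ volume.real (K ∩ ({0} + C)) := measureReal_nonneg
      linarith
    have hwU : 0 ≤ w - U := by linarith
    calc a ^ 2 * 2 ^ n ≤ (2 * V) ^ 2 * 2 ^ n := by gcongr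
      _ = 4 * V * U := by rw [hU]; ring
      _ ≤ 4 * V * (18432 * n ^ 6 * (w - U)) := by gcongr; linarith
      _ = 73728 * n ^ 6 * 1 * V * (w - U) := by ring
      _ ≤ 360000 * n ^ 6 * n ^ 2 * V * (w - U) := by gcongr; norm_num
      _ = _ := by rw [hn8]; ring

lemma core {n : ℕ} (hn : 2 ≤ n) {K C : Set (Eu n)} (hK : IsCompact K) (hKc : Convex ℝ K)
    (hKi : (interior K).Nonempty) (hCne : C.Nonempty)
    (hK0 : 0 < volume.real K) (hC : IsCompact C) (hCc : Convex ℝ C)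
    (hKC : volume K = volume C) :
    ∃ x : Eu n, (volume.real (symmDiff K ({x} + C))) ^ 2 * 2 ^ n ≤
      360000 * n ^ 8 * volume.real K * (volume.real (K + C) - 2 ^ n * volume.real K) := by
  have hWi : (interior (K + C)).Nonempty := by
    obtain ⟨x, hx⟩ := hKi
    obtain ⟨c, hc⟩ := hCne
    have h1 : interior K + C ⊆ interior (K + C) :=
      interior_maximal (add_subset_add_right interior_subset) isOpen_interior.add_right
    exact ⟨x + c, h1 (add_mem_add hx hc)⟩
  obtain ⟨g, hg1, hg2⟩ := auerbach (hK.add hC) hWi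
  have hgc : Continuous g := g.toLinearMap.continuous_of_finiteDimensional
  set D := |LinearMap.det (g : Eu n →ₗ[ℝ] Eu n)| with hD
  have hD0 : 0 < D := abs_pos.2 (LinearEquiv.isUnit_det' g).ne_zero
  have hv' : ∀ s : Set (Eu n), volume (g '' s) = ENNReal.ofReal D * volume s := fun s =>
    Measure.addHaar_image_linearMap _ (g : Eu n →ₗ[ℝ] Eu n) s
  have hv : ∀ s : Set (Eu n), volume.real (g '' s) = D * volume.real s := fun s => by
    rw [measureReal_def, hv', ENNReal.toReal_mul, ENNReal.toReal_ofReal hD0.le]; rfl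
  have hadd : g '' K + g '' C = g '' (K + C) := (image_add g).symm
  obtain ⟨x', hx'⟩ := core_pos hn (K := g '' K) (C := g '' C) (hK.image hgc)
    (hKc.linear_image (g : Eu n →ₗ[ℝ] Eu n)) (by rw [hv]; positivity) (hC.image hgc)
    (hCc.linear_image (g : Eu n →ₗ[ℝ] Eu n)) (by rw [hv', hv', hKC])
    (by
      rw [hadd]
      rintro _ ⟨x, hx, rfl⟩ _ ⟨y, hy, rfl⟩
      exact hg1 x hx y hy)
    (by
      rw [hadd]
      intro u hu
      obtain ⟨i, hi⟩ := exists_coord (by lia) hu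
      obtain ⟨x, hx, y, hy, hxy⟩ := hg2 i
      rcases le_total 0 (u i) with h | h
      · refine ⟨_, ⟨x, hx, rfl⟩, _, ⟨y, hy, rfl⟩, ?_⟩
        rw [hxy, EuclideanSpace.inner_single_right]
        rw [abs_of_nonneg h] at hi
        simpa using hi
      · refine ⟨_, ⟨y, hy, rfl⟩, _, ⟨x, hx, rfl⟩, ?_⟩
        rw [← neg_sub, hxy, inner_neg_right, EuclideanSpace.inner_single_right]
        rw [abs_of_nonpos h] at hi
        simpa using hi)
  refine ⟨g.symm x', ?_⟩
  have e1 : {x'} + g '' C = g '' ({g.symm x'} + C) := by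
    rw [image_add, image_singleton, LinearEquiv.apply_symm_apply]
  rw [hadd, e1, ← image_symmDiff g.injective, hv, hv, hv] at hx'
  have hD2 : 0 < D ^ 2 := by positivity
  refine le_of_mul_le_mul_left ?_ hD2
  calc _ = (D * volume.real (symmDiff K ({g.symm x'} + C))) ^ 2 * 2 ^ n := by ring
    _ ≤ _ := hx'
    _ = _ := by ring

/-- n = 1 -/
lemma one_dim {n : ℕ} (hn : n = 1) {K C : Set (Eu n)} (hK : IsCompact K) (hKc : Convex ℝ K)
    (hKne : K.Nonempty) (hCne : C.Nonempty) (hC : IsCompact C) (hCc : Convex ℝ C)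
    (hKC : volume K = volume C) : ∃ x : Eu n, volume.real (symmDiff K ({x} + C)) = 0 := by
  subst hn
  let φ : ℝ →ₗ[ℝ] Eu 1 := LinearMap.toSpanSingleton ℝ (Eu 1) (EuclideanSpace.single 0 1)
  have hφ : ∀ t, φ t = t • EuclideanSpace.single 0 1 := fun t => rfl
  have hφ0 : ∀ t, (φ t) 0 = t := fun t => by simp [hφ]
  have hφe : ∀ x : Eu 1, φ (x 0) = x := fun x => by
    ext i; rw [Subsingleton.elim i 0, hφ0]
  have hφi : Function.Injective φ := fun a b h => by rw [← hφ0 a, h, hφ0]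
  have key : ∀ X : Set (Eu 1), IsCompact X → Convex ℝ X → X.Nonempty →
      ∃ a b : ℝ, a ≤ b ∧ X = φ '' Icc a b := by
    intro X hX hXc hXne
    let π : Eu 1 →ₗ[ℝ] ℝ := (EuclideanSpace.proj (𝕜 := ℝ) (0 : Fin 1) : Eu 1 →L[ℝ] ℝ)
    have hπ : ∀ x, π x = x 0 := fun x => rfl
    have hc : IsCompact (π '' X) := hX.image (EuclideanSpace.proj (𝕜 := ℝ) (0 : Fin 1)).continuous
    have hcv : Convex ℝ (π '' X) := hXc.linear_image π
    have hne : (π '' X).Nonempty := hXne.image _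
    have h1 := eq_Icc_of_connected_compact ⟨hne, hcv.isPreconnected⟩ hc
    refine ⟨sInf (π '' X), sSup (π '' X), csInf_le_csSup hne hc.bddBelow hc.bddAbove, ?_⟩
    · rw [← h1, image_image]
      ext x
      constructor
      · intro hx; exact ⟨x, hx, by simp only; rw [hπ, hφe]⟩
      · rintro ⟨y, hy, rfl⟩
        simp only
        rw [hπ, hφe]; exact hy
  obtain ⟨a, b, hab, rfl⟩ := key K hK hKc hKne
  obtain ⟨c, d, hcd, rfl⟩ := key C hC hCc hCne
  have hφc : Continuous φ := φ.continuous_of_finiteDimensional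
  -- [c,d] scaled
  have hscale : ∀ s : ℝ, 0 ≤ s → ∀ p : ℝ,
      volume.real (φ '' Icc p (p + s)) = s * volume.real (φ '' Icc 0 1) := by
    intro s hs p
    have e1 : φ '' Icc p (p + s) = {φ p} + s • (φ '' Icc 0 1) := by
      rw [← image_smul_set, ← image_singleton, ← image_add]
      congr 1
      ext t
      constructor
      · rintro ⟨h1, h2⟩
        refine ⟨p, rfl, s • ((t - p) / s), ⟨(t - p) / s, ⟨div_nonneg (by linarith) hs,
          div_le_one_of_le₀ (by linarith) hs⟩, rfl⟩, ?_⟩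
        simp only [smul_eq_mul]
        rcases hs.eq_or_lt with h | h
        · rw [← h]; linarith
        · field_simp; ring
      · rintro ⟨_, rfl, _, ⟨u, ⟨h1, h2⟩, rfl⟩, rfl⟩
        simp only [smul_eq_mul]
        constructor <;> nlinarith
    rw [e1, vol_tr, vol_smul hs, pow_one]
  by_cases h0 : volume.real (φ '' Icc 0 1) = 0
  · refine ⟨0, ?_⟩
    have hz : ∀ p q : ℝ, p ≤ q → volume.real (φ '' Icc p q) = 0 := by
      intro p q hpq
      have := hscale (q - p) (by linarith) p
      rwa [add_sub_cancel, h0, mul_zero] at this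
    rw [sd_le_two hK (isCompact_singleton.add hC), vol_tr, hz a b hab, hz c d hcd]
    have h1 : volume.real (φ '' Icc a b ∩ ({0} + φ '' Icc c d)) ≤ 0 :=
      (measureReal_mono inter_subset_left hK.measure_lt_top.ne).trans (hz a b hab).le
    have h2 := measureReal_nonneg (μ := volume) (s := φ '' Icc a b ∩ ({0} + φ '' Icc c d))
    linarith
  · have h1 := hscale (b - a) (by linarith) a
    have h2 := hscale (d - c) (by linarith) c
    rw [add_sub_cancel] at h1 h2
    have h3 : volume.real (φ '' Icc a b) = volume.real (φ '' Icc c d) := by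
      rw [measureReal_def, hKC]; rfl
    rw [h1, h2] at h3
    have h4 := mul_right_cancel₀ h0 h3
    refine ⟨φ (a - c), ?_⟩
    have e1 : {φ (a - c)} + φ '' Icc c d = φ '' Icc a b := by
      rw [← image_singleton, ← image_add]
      congr 1
      ext t
      simp only [mem_Icc, singleton_add, image_add_left, mem_preimage]
      constructor
      · rintro ⟨h1, h2⟩; constructor <;> linarith
      · rintro ⟨h1, h2⟩; constructor <;> linarith
    rw [e1, symmDiff_self]; simp

lemma pow_lin {n : ℕ} {y : ℝ} (hy0 : 0 ≤ y) (hy : n * y ≤ 1) : (1 + y) ^ n ≤ 1 + 2 * n * y := by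
  have h1 : (1 + y) ^ n ≤ Real.exp (n * y) := by
    rw [Real.exp_nat_mul]
    gcongr
    linarith [Real.add_one_le_exp y]
  have h0 : 0 ≤ n * y := by positivity
  have h2 := Real.abs_exp_sub_one_sub_id_le (x := n * y) (by rw [abs_of_nonneg h0]; exact hy)
  have h3 := (abs_le.1 h2).2
  nlinarith

lemma gamma_bound {n : ℕ} (hn : 2 ≤ n) :
    ((2 - (2:ℝ) ^ (((n:ℝ) - 1)/(n:ℝ))) ^ ((3:ℝ)/2) / (122 * (n:ℝ)^7)) ^ 2 * (720000 * n ^ 9) ≤ 1 := by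
  have hnr : (2:ℝ) ≤ n := by exact_mod_cast hn
  set t := 2 - (2:ℝ) ^ (((n:ℝ) - 1)/(n:ℝ)) with ht
  have ht0 : 0 ≤ t := by
    have : (2:ℝ) ^ (((n:ℝ) - 1)/(n:ℝ)) ≤ 2 ^ (1:ℝ) :=
      Real.rpow_le_rpow_of_exponent_le (by norm_num) (by rw [div_le_one (by linarith)]; linarith)
    rw [Real.rpow_one] at this
    linarith
  have ht1 : t ≤ 0.6 := by
    have : (2:ℝ) ^ ((1:ℝ)/2) ≤ (2:ℝ) ^ (((n:ℝ) - 1)/(n:ℝ)) :=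
      Real.rpow_le_rpow_of_exponent_le (by norm_num) (by
        rw [div_le_div_iff₀ (by norm_num) (by linarith)]; linarith)
    rw [← Real.sqrt_eq_rpow] at this
    have h2 : (1.4:ℝ) ≤ √2 := Real.le_sqrt_of_sq_le (by norm_num)
    linarith
  have h3 : (t ^ ((3:ℝ)/2)) ^ 2 = t ^ 3 := by
    rw [← Real.rpow_natCast, ← Real.rpow_mul ht0, ← Real.rpow_natCast t 3]
    norm_num
  rw [div_pow, h3]
  have h4 : t ^ 3 ≤ 0.6 ^ 3 := by gcongr
  have h5 : (32:ℝ) ≤ n ^ 5 := by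
    calc (32:ℝ) = 2 ^ 5 := by norm_num
      _ ≤ n ^ 5 := by gcongr
  rw [div_mul_eq_mul_div, div_le_one (by positivity)]
  calc t ^ 3 * (720000 * n ^ 9) ≤ 0.6 ^ 3 * (720000 * n ^ 9) := by gcongr
    _ = 155520 * (n:ℝ) ^ 9 := by ring
    _ ≤ (14884 * 32) * n ^ 9 := by gcongr; norm_num
    _ ≤ (14884 * n ^ 5) * n ^ 9 := by gcongr
    _ = (122 * (n:ℝ) ^ 7) ^ 2 := by ring

lemma unit_core {n : ℕ} (hn : 1 ≤ n) {K C : Set (Eu n)} (hK : IsCompact K) (hKc : Convex ℝ K)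
    (hKi : (interior K).Nonempty) (hCne : C.Nonempty)
    (hK1 : volume.real K = 1) (hC : IsCompact C) (hCc : Convex ℝ C)
    (hC1 : volume.real C = 1) {γ : ℝ} (hγ0 : 0 ≤ γ) (hγ : 2 ≤ n → γ * (720000 * n ^ 9) ≤ 1) :
    ∃ x : Eu n, (2 * (1 + γ * volume.real (symmDiff K ({x} + C)) ^ 2)) ^ n ≤ volume.real (K + C) := by
  have hKC : volume K = volume C := by
    rw [← ofReal_measureReal hK.measure_lt_top.ne, hK1, ← ofReal_measureReal hC.measure_lt_top.ne, hC1]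
  have hK0 : 0 < volume.real K := by rw [hK1]; norm_num
  have hbm := bm_two hn hK hK0 hC hKC
  rcases hn.eq_or_lt with h1 | h2
  · obtain ⟨x, hx⟩ := one_dim h1.symm hK hKc (hKi.mono interior_subset) hCne hC hCc hKC
    refine ⟨x, ?_⟩
    rw [hx]
    rw [hK1] at hbm
    simpa using hbm
  · have hn2 : 2 ≤ n := h2
    have hnr : (2:ℝ) ≤ n := by exact_mod_cast hn2
    obtain ⟨x, hx⟩ := core hn2 hK hKc hKi hCne hK0 hC hCc hKC
    refine ⟨x, ?_⟩
    have hsd := sd_le_two hK (B := {x} + C) (isCompact_singleton.add hC)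
    rw [vol_tr, hK1, hC1] at hsd
    have hin : 0 ≤ volume.real (K ∩ ({x} + C)) := measureReal_nonneg
    set a := volume.real (symmDiff K ({x} + C)) with ha
    have ha0 : 0 ≤ a := measureReal_nonneg
    have ha2 : a ≤ 2 := by linarith
    have ha4 : a ^ 2 ≤ 4 := by nlinarith
    rw [hK1] at hx
    have hg := hγ hn2
    have hn8 : (1:ℝ) ≤ n ^ 8 := one_le_pow₀ (by linarith)
    have hng : 2 * n * γ * (360000 * n ^ 8) ≤ 1 := by
      calc 2 * n * γ * (360000 * n ^ 8) = γ * (720000 * n ^ 9) := by ring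
        _ ≤ 1 := hg
    have hngp : 0 ≤ n * γ := by positivity
    have hsmall : n * (γ * a ^ 2) ≤ 1 := by
      have : n * γ * 720000 ≤ 1 := by nlinarith
      nlinarith
    have h5 := pow_lin (n := n) (y := γ * a ^ 2) (by positivity) hsmall
    set w := volume.real (K + C)
    rw [mul_pow]
    have h6 : 2 ^ n * (2 * n * (γ * a ^ 2)) ≤ w - 2 ^ n := by
      calc 2 ^ n * (2 * n * (γ * a ^ 2)) = (2 * n * γ) * (a ^ 2 * 2 ^ n) := by ring
        _ ≤ (2 * n * γ) * (360000 * n ^ 8 * 1 * (w - 2 ^ n * 1)) := by gcongr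
        _ = (2 * n * γ * (360000 * n ^ 8)) * (w - 2 ^ n) := by ring
        _ ≤ 1 * (w - 2 ^ n) := by
            rw [hK1, mul_one] at hbm
            have : 0 ≤ w - 2 ^ n := by linarith
            gcongr
        _ = _ := one_mul _
    calc 2 ^ n * (1 + γ * a ^ 2) ^ n ≤ 2 ^ n * (1 + 2 * n * (γ * a ^ 2)) := by gcongr
      _ ≤ w := by linarith

lemma combine {n : ℕ} (hn : 0 < n) {X Y : Set (Eu n)} (hX : IsCompact X) (hXc : Convex ℝ X)
    (hX1 : volume.real X = 1) (hY : IsCompact Y) (hY1 : volume.real Y = 1) {y : ℝ} (hy : 0 ≤ y)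
    (h : (2 * (1 + y)) ^ n ≤ volume.real (X + Y)) {p q : ℝ} (hq : 0 < q) (hpq : q ≤ p) :
    p + q + 2 * q * y ≤ volume.real (p • X + q • Y) ^ ((1:ℝ)/n) := by
  have hroot : ∀ {s v : ℝ}, 0 ≤ s → s ^ n ≤ v → s ≤ v ^ ((1:ℝ)/n) := by
    intro s v hs hsv
    have := Real.rpow_le_rpow (by positivity) hsv (by positivity : 0 ≤ (1:ℝ)/n)
    rwa [one_div, Real.pow_rpow_inv_natCast hs hn.ne', ← one_div] at this
  refine hroot (by nlinarith) ?_
  have h2 := hroot (by positivity) h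
  rcases hpq.eq_or_lt with h1 | h1
  · rw [← h1, ← smul_add, vol_smul hq.le]
    calc (q + q + 2 * q * y) ^ n = q ^ n * (2 * (1 + y)) ^ n := by rw [← mul_pow]; congr 1; ring
      _ ≤ _ := by gcongr
  · have e1 : p • X + q • Y = (p - q) • X + q • (X + Y) := by
      rw [smul_add, ← add_assoc, ← hXc.add_smul (by linarith) hq.le]; congr 2; ring
    rw [e1]
    have hb := bm_root hn hX (by rw [hX1]; norm_num) (hX.add hY)
      (vol_sum_pos hn hX (by rw [hX1]; norm_num) hY (by rw [hY1]; norm_num))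
      (by linarith : 0 < p - q) hq
    refine le_trans ?_ hb
    rw [hX1, Real.one_rpow]
    have : p + q + 2 * q * y = (p - q) * 1 + q * (2 * (1 + y)) := by ring
    rw [this]
    have : 0 < p - q := by linarith
    gcongr

lemma normalize_body {n : ℕ} (hn : 0 < n) {K : Set (EuclideanSpace ℝ (Fin n))}
    (hK : IsCompact K) (hKc : Convex ℝ K) (hKi : (interior K).Nonempty) :
    0 < volume.real K ^ ((1:ℝ)/(n:ℝ)) ∧
    volume.real K ^ (-(1:ℝ)/(n:ℝ)) = (volume.real K ^ ((1:ℝ)/(n:ℝ)))⁻¹ ∧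
    IsCompact (volume.real K ^ (-(1:ℝ)/(n:ℝ)) • K) ∧
    Convex ℝ (volume.real K ^ (-(1:ℝ)/(n:ℝ)) • K) ∧
    (interior (volume.real K ^ (-(1:ℝ)/(n:ℝ)) • K)).Nonempty ∧
    volume.real (volume.real K ^ (-(1:ℝ)/(n:ℝ)) • K) = 1 ∧
    (volume.real K ^ ((1:ℝ)/(n:ℝ))) • (volume.real K ^ (-(1:ℝ)/(n:ℝ)) • K) = K := by
  have hv : 0 < volume.real K :=
    ENNReal.toReal_pos (Measure.measure_pos_of_nonempty_interior _ hKi).ne' hK.measure_lt_top.ne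
  have hp : 0 < volume.real K ^ ((1:ℝ)/(n:ℝ)) := Real.rpow_pos_of_pos hv _
  have e : volume.real K ^ (-(1:ℝ)/(n:ℝ)) = (volume.real K ^ ((1:ℝ)/(n:ℝ)))⁻¹ := by
    rw [neg_div, Real.rpow_neg hv.le]
  have hpn : (volume.real K ^ ((1:ℝ)/(n:ℝ))) ^ n = volume.real K := by
    rw [one_div, Real.rpow_inv_natCast_pow hv.le hn.ne']
  refine ⟨hp, e, hK.smul _, hKc.smul _, ?_, ?_, ?_⟩
  · rw [e, interior_smul₀ (inv_ne_zero hp.ne')]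
    exact hKi.smul_set
  · rw [e, vol_smul (inv_nonneg.2 hp.le), inv_pow, hpn, inv_mul_cancel₀ hv.ne']
  · rw [e, smul_smul, mul_inv_cancel₀ hp.ne', one_smul]

lemma final_arith {p q γ h a s : ℝ} (hq : 0 < q) (hpq : q ≤ p) (hγ : 0 ≤ γ) (h0 : 0 ≤ h)
    (ha : h ≤ a) (hs : p / q ≤ s) :
    (p + q) * (1 + γ / s * h ^ 2) ≤ p + q + 2 * q * (γ * a ^ 2) := by
  have hp : 0 < p := hq.trans_le hpq
  have h1 : γ / s ≤ γ / (p / q) := by gcongr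
  have h2 : γ / s * h ^ 2 ≤ γ / (p / q) * a ^ 2 := by gcongr
  have h3 : (p + q) * (γ / (p / q) * a ^ 2) ≤ 2 * q * (γ * a ^ 2) := by
    have : (p + q) * (γ / (p / q) * a ^ 2) = ((p + q) / p) * (q * (γ * a ^ 2)) := by
      field_simp
    rw [this, mul_assoc 2]
    have h4 : (p + q) / p ≤ 2 := by rw [div_le_iff₀ hp]; linarith
    exact mul_le_mul_of_nonneg_right h4 (by positivity)
  nlinarith [mul_le_mul_of_nonneg_left h2 (by positivity : 0 ≤ p + q)]

lemma main_aux {n : ℕ} (hn : 1 ≤ n)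
    (K C : Set (EuclideanSpace ℝ (Fin n)))
    (hKcomp : IsCompact K) (hKconv : Convex ℝ K) (hKint : (interior K).Nonempty)
    (hCcomp : IsCompact C) (hCconv : Convex ℝ C) (hCint : (interior C).Nonempty)
    (γ h s : ℝ) (hγ0 : 0 ≤ γ) (hγ : 2 ≤ n → γ * (720000 * n ^ 9) ≤ 1) (h0 : 0 ≤ h)
    (hh : ∀ x, h ≤ volume.real (symmDiff (volume.real K ^ (-(1:ℝ)/(n:ℝ)) • K)
      ({x} + volume.real C ^ (-(1:ℝ)/(n:ℝ)) • C)))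
    (hs1 : volume.real C / volume.real K ≤ s) (hs2 : volume.real K / volume.real C ≤ s) :
    (volume.real K ^ ((1:ℝ)/(n:ℝ)) + volume.real C ^ ((1:ℝ)/(n:ℝ))) *
        (1 + γ / s ^ ((1:ℝ)/(n:ℝ)) * h ^ 2) ≤ volume.real (K + C) ^ ((1:ℝ)/(n:ℝ)) := by
  obtain ⟨hp, -, k1, k2, k3, k4, k5⟩ := normalize_body hn hKcomp hKconv hKint
  obtain ⟨hq, -, c1, c2, c3, c4, c5⟩ := normalize_body hn hCcomp hCconv hCint
  have r1 : volume.real C ^ ((1:ℝ)/(n:ℝ)) / volume.real K ^ ((1:ℝ)/(n:ℝ)) ≤ s ^ ((1:ℝ)/(n:ℝ)) := by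
    rw [← Real.div_rpow (by positivity) (by positivity)]
    exact Real.rpow_le_rpow (by positivity) hs1 (by positivity)
  have r2 : volume.real K ^ ((1:ℝ)/(n:ℝ)) / volume.real C ^ ((1:ℝ)/(n:ℝ)) ≤ s ^ ((1:ℝ)/(n:ℝ)) := by
    rw [← Real.div_rpow (by positivity) (by positivity)]
    exact Real.rpow_le_rpow (by positivity) hs2 (by positivity)
  generalize volume.real K ^ (-(1:ℝ)/(n:ℝ)) • K = K' at *
  generalize volume.real C ^ (-(1:ℝ)/(n:ℝ)) • C = C' at *
  generalize volume.real K ^ ((1:ℝ)/(n:ℝ)) = p at *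
  generalize volume.real C ^ ((1:ℝ)/(n:ℝ)) = q at *
  obtain ⟨x, hx⟩ := unit_core hn k1 k2 k3 (c3.mono interior_subset) k4 c1 c2 c4 hγ0 hγ
  have ha := hh x
  generalize volume.real (symmDiff K' ({x} + C')) = a at *
  rcases le_total q p with hqp | hpq
  · have := combine hn k1 k2 k4 c1 c4 (by positivity) hx hq hqp
    rw [k5, c5] at this
    exact (final_arith hq hqp hγ0 h0 ha r2).trans this
  · rw [add_comm K' C'] at hx
    have := combine hn c1 c2 c4 k1 k4 (by positivity) hx hp hpq
    rw [k5, c5, add_comm C K] at this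
    rw [add_comm p q]
    exact (final_arith hp hpq hγ0 h0 ha r1).trans this

end Aux

/-- **Figalli–Maggi–Pratelli stability version of the Brunn–Minkowski inequality.**
With `γ* = ((2 − 2^((n−1)/n))^(3/2) / (122·n⁷))²`, for any convex bodies `K` and
`C` in `ℝⁿ`:
`|K+C|^(1/n) ≥ (|K|^(1/n) + |C|^(1/n))·[1 + (γ*/σ(K,C)^(1/n))·A(K,C)²]`. -/
theorem figalli_maggi_pratelli {n : ℕ} (hn : 1 ≤ n)
    (K C : Set (EuclideanSpace ℝ (Fin n)))
    (hKcomp : IsCompact K) (hKconv : Convex ℝ K) (hKint : (interior K).Nonempty)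
    (hCcomp : IsCompact C) (hCconv : Convex ℝ C) (hCint : (interior C).Nonempty) :
    ((volume K).toReal ^ ((1:ℝ)/(n:ℝ)) + (volume C).toReal ^ ((1:ℝ)/(n:ℝ))) *
        (1 + ((2 - (2:ℝ) ^ (((n:ℝ) - 1)/(n:ℝ))) ^ ((3:ℝ)/2) / (122 * (n:ℝ)^7)) ^ 2 /
          (volRatio K C) ^ ((1:ℝ)/(n:ℝ)) * homDist K C ^ 2) ≤
      (volume (K + C)).toReal ^ ((1:ℝ)/(n:ℝ)) := by
  refine main_aux hn K C hKcomp hKconv hKint hCcomp hCconv hCint _ _ _ (by positivity)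
    gamma_bound (Real.sInf_nonneg ?_) (fun x => csInf_le ⟨0, ?_⟩ ⟨x, rfl⟩)
    (le_max_left _ _) (le_max_right _ _)
  · rintro r ⟨x, rfl⟩
    exact ENNReal.toReal_nonneg
  · rintro r ⟨x, rfl⟩
    exact ENNReal.toReal_nonneg
end
end

section
/- For any positive real numbers p and q and any n ≥ 1, setting σ = max{p/q, q/p}, one has (p^{1/n} + q^{1/n})/2 = p^{1/(2n)}·q^{1/(2n)}·[1 + (σ^{1/(4n)} − σ^{−1/(4n)})²/2] ≥ p^{1/(2n)}·q^{1/(2n)}·[1 + (σ−1)²/(32·n²·σ^{(4n−1)/(2n)})]. -/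
lemma aux_pow (t : ℝ) (ht : 1 ≤ t) (n : ℕ) (hn : 1 ≤ n) :
    (t ^ (4*n) - 1) ^ 2 / (32 * (n:ℝ)^2 * t ^ (8*n-2)) ≤ (t - t⁻¹) ^ 2 / 2 := by
  have h0 : 0 < t := by linarith
  have hn' : (1:ℝ) ≤ n := by exact_mod_cast hn
  obtain ⟨k, rfl⟩ : ∃ k, n = k + 1 := ⟨n - 1, by omega⟩
  have hB := one_add_mul_le_pow (a := (t^2)⁻¹ - 1) (by
    have : 0 < (t^2)⁻¹ := by positivity
    linarith) (2*(k+1))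
  have e1 : 1 + ((t^2)⁻¹ - 1) = (t^2)⁻¹ := by ring
  rw [e1] at hB
  have h1 : 1 ≤ t ^ (4*(k+1)) := one_le_pow₀ ht
  have e2 : ((t^2)⁻¹) ^ (2*(k+1)) * t ^ (4*(k+1)) = 1 := by
    rw [inv_pow, ← pow_mul, show 2 * (2*(k+1)) = 4*(k+1) by ring]
    exact inv_mul_cancel₀ (by positivity)
  have hti : t * t⁻¹ = 1 := mul_inv_cancel₀ h0.ne'
  have hd : 0 ≤ t - t⁻¹ := by
    have : t⁻¹ ≤ 1 := inv_le_one_of_one_le₀ ht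
    linarith
  have h2 : t ^ (4*(k+1)) - 1 ≤ 4 * ((k+1:ℕ):ℝ) * t ^ (4*k+3) * (t - t⁻¹) := by
    have h3 := mul_le_mul_of_nonneg_right hB (by positivity : 0 ≤ t ^ (4*(k+1)))
    rw [e2] at h3
    have e3 : t ^ (4*(k+1)) * (1 - (t^2)⁻¹) = t ^ (4*k+3) * (t - t⁻¹) := by
      rw [show 4*(k+1) = 4*k+3+1 by ring, pow_succ]
      field_simp
    have h5 : 0 ≤ t ^ (4*k+3) * (t - t⁻¹) := by positivity
    have h6 : t ^ (4*(k+1)) - 1 ≤ 2 * ((k+1:ℕ):ℝ) * (t ^ (4*(k+1)) * (1 - (t^2)⁻¹)) := by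
      push_cast at h3 ⊢
      linarith
    rw [e3] at h6
    have h7 : 0 ≤ ((k+1:ℕ):ℝ) * (t ^ (4*k+3) * (t - t⁻¹)) := by positivity
    linarith
  rw [div_le_iff₀ (by positivity), show 8*(k+1)-2 = (4*k+3)*2 by omega, pow_mul t (4*k+3) 2]
  have h4 := pow_le_pow_left₀ (by linarith) h2 2
  linarith

lemma aux_rpow (s : ℝ) (hs : 1 ≤ s) (n : ℕ) (hn : 1 ≤ n) :
    (s - 1) ^ 2 / (32 * (n:ℝ)^2 * s ^ ((4*(n:ℝ) - 1)/(2*(n:ℝ)))) ≤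
    (s ^ ((1:ℝ)/(4*(n:ℝ))) - s ^ (-(1:ℝ)/(4*(n:ℝ)))) ^ 2 / 2 := by
  have h0 : 0 < s := by linarith
  have hn' : (1:ℝ) ≤ n := by exact_mod_cast hn
  have hne : (n:ℝ) ≠ 0 := by positivity
  have h := aux_pow (s ^ ((1:ℝ)/(4*(n:ℝ)))) (Real.one_le_rpow hs (by positivity)) n hn
  have c : ((8*n-2 : ℕ):ℝ) = 8*n-2 := by
    rw [Nat.cast_sub (by omega)]; push_cast; ring
  rw [← Real.rpow_natCast _ (4*n), ← Real.rpow_natCast _ (8*n-2), ← Real.rpow_mul h0.le, ← Real.rpow_mul h0.le,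
    ← Real.rpow_neg h0.le, c] at h
  have c1 : (1:ℝ)/(4*(n:ℝ)) * ((4*n:ℕ):ℝ) = 1 := by push_cast; field_simp
  have c2 : (1:ℝ)/(4*(n:ℝ)) * (8*n-2) = (4*(n:ℝ) - 1)/(2*(n:ℝ)) := by field_simp; ring
  rw [c1, c2, Real.rpow_one, ← neg_div] at h
  exact h

lemma aux_eq (p q : ℝ) (n : ℕ) (hn : 1 ≤ n) (hp : 0 < p) (hq : 0 < q) :
    (p ^ ((1:ℝ)/(n:ℝ)) + q ^ ((1:ℝ)/(n:ℝ))) / 2 =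
      p ^ ((1:ℝ)/(2*(n:ℝ))) * q ^ ((1:ℝ)/(2*(n:ℝ))) *
        (1 + ((p/q) ^ ((1:ℝ)/(4*(n:ℝ))) - (p/q) ^ (-(1:ℝ)/(4*(n:ℝ)))) ^ 2 / 2) := by
  have hn' : (1:ℝ) ≤ n := by exact_mod_cast hn
  have hne : (n:ℝ) ≠ 0 := by positivity
  have k1 : ∀ x : ℝ, 0 < x → x ^ ((1:ℝ)/(n:ℝ)) = (x ^ ((1:ℝ)/(4*(n:ℝ)))) ^ 4 := by
    intro x hx
    rw [← Real.rpow_natCast, ← Real.rpow_mul hx.le]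
    congr 1; push_cast; field_simp
  have k2 : ∀ x : ℝ, 0 < x → x ^ ((1:ℝ)/(2*(n:ℝ))) = (x ^ ((1:ℝ)/(4*(n:ℝ)))) ^ 2 := by
    intro x hx
    rw [← Real.rpow_natCast, ← Real.rpow_mul hx.le]
    congr 1; push_cast; field_simp; norm_num
  rw [k1 p hp, k1 q hq, k2 p hp, k2 q hq, neg_div, Real.rpow_neg (by positivity),
    Real.div_rpow hp.le hq.le]
  have ha : 0 < p ^ ((1:ℝ)/(4*(n:ℝ))) := by positivity
  have hb : 0 < q ^ ((1:ℝ)/(4*(n:ℝ))) := by positivity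
  generalize p ^ ((1:ℝ)/(4*(n:ℝ))) = a at *
  generalize q ^ ((1:ℝ)/(4*(n:ℝ))) = b at *
  field_simp
  ring

/-- An elementary estimate: for positive reals `p, q` and `n ≥ 1`, with
`σ = max{p/q, q/p}`, one has
`(p^(1/n) + q^(1/n))/2 = p^(1/(2n))·q^(1/(2n))·[1 + (σ^(1/(4n)) − σ^(−1/(4n)))²/2]`
and this is `≥ p^(1/(2n))·q^(1/(2n))·[1 + (σ−1)²/(32·n²·σ^((4n−1)/(2n)))]`. -/
theorem arith_mean_vs_geom_mean_ratio (p q : ℝ) (n : ℕ) (hn : 1 ≤ n)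
    (hp : 0 < p) (hq : 0 < q) :
    (p ^ ((1:ℝ)/(n:ℝ)) + q ^ ((1:ℝ)/(n:ℝ))) / 2 =
      p ^ ((1:ℝ)/(2*(n:ℝ))) * q ^ ((1:ℝ)/(2*(n:ℝ))) *
        (1 + ((max (p/q) (q/p)) ^ ((1:ℝ)/(4*(n:ℝ))) -
          (max (p/q) (q/p)) ^ (-(1:ℝ)/(4*(n:ℝ)))) ^ 2 / 2) ∧
    p ^ ((1:ℝ)/(2*(n:ℝ))) * q ^ ((1:ℝ)/(2*(n:ℝ))) *
        (1 + ((max (p/q) (q/p)) ^ ((1:ℝ)/(4*(n:ℝ))) -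
          (max (p/q) (q/p)) ^ (-(1:ℝ)/(4*(n:ℝ)))) ^ 2 / 2) ≥
      p ^ ((1:ℝ)/(2*(n:ℝ))) * q ^ ((1:ℝ)/(2*(n:ℝ))) *
        (1 + (max (p/q) (q/p) - 1) ^ 2 /
          (32 * (n:ℝ)^2 * (max (p/q) (q/p)) ^ ((4*(n:ℝ) - 1)/(2*(n:ℝ))))) := by
  constructor
  · rcases le_total (p/q) (q/p) with h | h
    · rw [max_eq_right h, add_comm, mul_comm (p ^ _)]
      exact aux_eq q p n hn hq hp
    · rw [max_eq_left h]
      exact aux_eq p q n hn hp hq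
  · have hs : 1 ≤ max (p/q) (q/p) := by
      rcases le_total p q with h | h
      · exact le_max_of_le_right ((one_le_div hp).2 h)
      · exact le_max_of_le_left ((one_le_div hq).2 h)
    have := aux_rpow _ hs n hn
    apply mul_le_mul_of_nonneg_left _ (by positivity)
    linarith
end
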